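/- arXiv:1206.1184 — 2 statements merged into one kernel-verified Lean document; each statement's English description precedes it below -/
import Mathlib

section
/- There exists a constant λ > 0 depending only on n and C₀ such that for all ρ ≥ 2ε: λ ε^{n−2} Σ_{i,j=1}^{n−1} Σ_{1≤|α|≤d} h_{ij,α}² ∫_{B⁺_ρ(0)} (ε+|x|)^{2|α|+2−2n} dx ≤ (1/4) ∫_{B⁺_ρ(0)} Σ_{a,b,c=1}^n Q_{ab,c}² dx − (n²/(2(n−1)(n−2))) ∫_{{x̄ ∈ ℝ^{n−1} : |x̄| < ρ}} ∂_nU_ε · U_ε · S_{nn}²(x̄,0) dx̄. -/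
open MeasureTheory

namespace MQ
open MvPolynomial

variable {m : ℕ}

theorem pderiv_comm {σ : Type*} (i j : σ) (p : MvPolynomial σ ℝ) :
    pderiv i (pderiv j p) = pderiv j (pderiv i p) := by
  classical
  ext s
  rw [coeff_pderiv, coeff_pderiv, coeff_pderiv, coeff_pderiv]
  by_cases h : i = j
  · subst h; rfl
  · have : s + Finsupp.single i 1 + Finsupp.single j 1 = s + Finsupp.single j 1 + Finsupp.single i 1 := by
      abel
    rw [this]
    simp [Finsupp.single_apply, h, Ne.symm h]
    ring

/-- Euler operator -/
noncomputable def eul (p : MvPolynomial (Fin m) ℝ) : MvPolynomial (Fin m) ℝ :=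
  ∑ i, X i * pderiv i p

theorem eul_add (p q : MvPolynomial (Fin m) ℝ) : eul (p + q) = eul p + eul q := by
  simp [eul, mul_add, Finset.sum_add_distrib]

theorem eul_zero : eul (0 : MvPolynomial (Fin m) ℝ) = 0 := by
  simp [eul]

theorem eul_sum {ι : Type*} (s : Finset ι) (f : ι → MvPolynomial (Fin m) ℝ) :
    eul (∑ i ∈ s, f i) = ∑ i ∈ s, eul (f i) := by
  simp only [eul, map_sum, Finset.mul_sum]
  exact Finset.sum_comm

theorem pderiv_eul (i : Fin m) (p : MvPolynomial (Fin m) ℝ) :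
    pderiv i (eul p) = pderiv i p + eul (pderiv i p) := by
  simp only [eul, map_sum, Derivation.leibniz, smul_eq_mul, pderiv_X, Finset.sum_add_distrib]
  rw [add_comm]
  congr 1
  · simp [Pi.single_apply]
  · exact Finset.sum_congr rfl fun j _ => by rw [pderiv_comm]

theorem eul_X_mul (i : Fin m) (p : MvPolynomial (Fin m) ℝ) :
    eul (X i * p) = X i * p + X i * eul p := by
  simp only [eul, Derivation.leibniz, smul_eq_mul, pderiv_X, mul_add, Finset.sum_add_distrib]
  rw [add_comm]
  congr 1
  · simp [Pi.single_apply, mul_comm]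
  · rw [Finset.mul_sum]; exact Finset.sum_congr rfl fun j _ => by ring

theorem coeff_eul (p : MvPolynomial (Fin m) ℝ) (s : Fin m →₀ ℕ) :
    coeff s (eul p) = (∑ i, (s i : ℝ)) * coeff s p := by
  simp only [eul, coeff_sum, Finset.sum_mul]
  refine Finset.sum_congr rfl fun i _ => ?_
  rw [coeff_X_mul']
  split_ifs with h
  · rw [coeff_pderiv]
    have h1 : 1 ≤ s i := Nat.one_le_iff_ne_zero.2 (Finsupp.mem_support_iff.1 h)
    have h2 : s - Finsupp.single i 1 + Finsupp.single i 1 = s := by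
      apply tsub_add_cancel_of_le
      simpa using h1
    rw [h2, Finsupp.tsub_apply, Finsupp.single_eq_same]
    push_cast [h1]; ring
  · have : s i = 0 := by simpa using h
    simp [this]

/-- Fischer pairing -/
noncomputable def fis : MvPolynomial (Fin m) ℝ →ₗ[ℝ] MvPolynomial (Fin m) ℝ →ₗ[ℝ] ℝ :=
  (basisMonomials (Fin m) ℝ).constr ℝ
    (fun s => ((∏ i, (s i).factorial : ℕ) : ℝ) • lcoeff ℝ s)

theorem fis_monomial (s : Fin m →₀ ℕ) (c : ℝ) (q : MvPolynomial (Fin m) ℝ) :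
    fis (monomial s c) q = c * ((∏ i, (s i).factorial : ℕ) : ℝ) * coeff s q := by
  have : (monomial s c : MvPolynomial (Fin m) ℝ) = c • basisMonomials (Fin m) ℝ s := by
    simp [smul_monomial]
  rw [this, fis, map_smul, Module.Basis.constr_basis]
  simp [lcoeff_apply, mul_assoc]

theorem fis_apply (p q : MvPolynomial (Fin m) ℝ) :
    fis p q = ∑ s ∈ p.support, ((∏ i, (s i).factorial : ℕ) : ℝ) * (coeff s p * coeff s q) := by
  conv_lhs => rw [p.as_sum]
  rw [map_sum, LinearMap.sum_apply]
  refine Finset.sum_congr rfl fun s _ => ?_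
  rw [fis_monomial]; ring

theorem fis_self_nonneg (p : MvPolynomial (Fin m) ℝ) : 0 ≤ fis p p := by
  rw [fis_apply]
  exact Finset.sum_nonneg fun s _ => mul_nonneg (Nat.cast_nonneg _) (mul_self_nonneg _)

theorem fis_pderiv (i : Fin m) (p q : MvPolynomial (Fin m) ℝ) :
    fis (pderiv i p) q = fis p (X i * q) := by
  induction p using MvPolynomial.induction_on' with
  | add p q hp hq => simp [hp, hq]
  | monomial s c =>
    rw [pderiv_monomial, fis_monomial, fis_monomial, coeff_X_mul']
    split_ifs with h
    · have h1 : s i ≠ 0 := Finsupp.mem_support_iff.1 h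
      have : (∏ j, (s j).factorial) =
          s i * ∏ j, ((s - Finsupp.single i 1 : Fin m →₀ ℕ) j).factorial := by
        rw [← Finset.mul_prod_erase _ _ (Finset.mem_univ i),
          ← Finset.mul_prod_erase _ (fun j => ((s - Finsupp.single i 1 : Fin m →₀ ℕ) j).factorial) (Finset.mem_univ i),
          ← mul_assoc]
        congr 1
        · simp [Nat.mul_factorial_pred h1]
        · refine Finset.prod_congr rfl fun j hj => ?_
          simp [Finsupp.single_apply, Ne.symm (Finset.ne_of_mem_erase hj)]
      rw [this]; push_cast; ring
    · have : s i = 0 := by simpa using h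
      simp [this]

/-- key injectivity -/
theorem tau_zero (k : ℝ) (hk : 0 < k) (t : MvPolynomial (Fin m) ℝ)
    (h : (∑ i, pderiv i (pderiv i ((∑ j, X j * X j) * t)))
      = - (C k * (eul (eul t) + eul t + (2:ℝ) • (eul t + t)))) : t = 0 := by
  have h1 : fis (∑ i, pderiv i (pderiv i ((∑ j, X j * X j) * t))) t
      = fis ((∑ j, X j * X j) * t) ((∑ j, X j * X j) * t) := by
    have key : ∀ g : MvPolynomial (Fin m) ℝ, fis (∑ i, pderiv i (pderiv i g)) t
      = fis g ((∑ j, X j * X j) * t) := by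
      intro g
      rw [map_sum, LinearMap.sum_apply, Finset.sum_mul, map_sum]
      refine Finset.sum_congr rfl fun i _ => ?_
      rw [fis_pderiv, fis_pderiv, mul_assoc]
    exact key _
  have h2 := fis_self_nonneg ((∑ j, X j * X j) * t)
  rw [← h1, h, map_neg, LinearMap.neg_apply, ← smul_eq_C_mul, map_smul, LinearMap.smul_apply,
    smul_eq_mul] at h2
  have h3 : fis (eul (eul t) + eul t + (2:ℝ) • (eul t + t)) t ≤ 0 := by
    by_contra hc
    push Not at hc
    have := mul_pos hk hc
    linarith
  have h5 : ∀ s : Fin m →₀ ℕ, coeff s (eul (eul t) + eul t + (2:ℝ) • (eul t + t))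
      = ((∑ i, (s i : ℝ)) + 2) * ((∑ i, (s i : ℝ)) + 1) * coeff s t := by
    intro s
    simp only [coeff_add, coeff_smul, coeff_eul, smul_eq_mul]; ring
  ext s
  rw [coeff_zero]
  by_contra hs
  rw [fis_apply] at h3
  have hnn : ∀ s : Fin m →₀ ℕ, (0:ℝ) ≤ ∑ i, (s i : ℝ) := fun s =>
    Finset.sum_nonneg fun i _ => Nat.cast_nonneg _
  have h6 := Finset.single_le_sum (s := (eul (eul t) + eul t + (2:ℝ) • (eul t + t)).support)
    (f := fun s => ((∏ i, (s i).factorial : ℕ) : ℝ) *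
      (coeff s (eul (eul t) + eul t + (2:ℝ) • (eul t + t)) * coeff s t)) (a := s) ?_ ?_
  · have h7 : 0 < ((∏ i, (s i).factorial : ℕ) : ℝ) *
      (coeff s (eul (eul t) + eul t + (2:ℝ) • (eul t + t)) * coeff s t) := by
      apply mul_pos
      · exact_mod_cast Finset.prod_pos fun i _ => Nat.factorial_pos _
      · rw [h5, mul_assoc]
        have := hnn s
        exact mul_pos (by positivity) (mul_self_pos.2 hs)
    linarith
  · intro s _
    apply mul_nonneg (Nat.cast_nonneg _)
    rw [h5, mul_assoc]
    have := hnn s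
    exact mul_nonneg (by positivity) (mul_self_nonneg _)
  · rw [mem_support_iff, h5]
    have := hnn s
    exact mul_ne_zero (by positivity) hs

theorem eul_add_one_inj (t : MvPolynomial (Fin m) ℝ) (h : eul t + t = 0) : t = 0 := by
  ext s
  have := congrArg (coeff s) h
  rw [coeff_add, coeff_eul, coeff_zero] at this
  have hnn : (0:ℝ) ≤ ∑ i, (s i : ℝ) := Finset.sum_nonneg fun i _ => Nat.cast_nonneg _
  have h2 : ((∑ i, (s i : ℝ)) + 1) * coeff s t = 0 := by linarith
  rw [coeff_zero]
  rcases mul_eq_zero.1 h2 with h | h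
  · linarith
  · exact h

theorem eul_inj (t : MvPolynomial (Fin m) ℝ) (h0 : coeff 0 t = 0) (h : eul t = 0) : t = 0 := by
  ext s
  have := congrArg (coeff s) h
  rw [coeff_eul, coeff_zero] at this
  rw [coeff_zero]
  rcases mul_eq_zero.1 this with h | h
  · have : s = 0 := by
      ext i
      have h2 := (Finset.sum_eq_zero_iff_of_nonneg (fun i _ => Nat.cast_nonneg (s i))).1 h i
        (Finset.mem_univ i)
      exact_mod_cast h2
    rw [this, h0]
  · exact h

end MQ

open MeasureTheory
namespace MQ
open MvPolynomial

variable {m : ℕ}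

/-- Kronecker delta -/
noncomputable def kd {n : ℕ} {R : Type*} [Ring R] (i j : Fin n) : R := if i = j then 1 else 0

/-- linearised curvature -/
noncomputable def Riem {n : ℕ} (H : Fin n → Fin n → MvPolynomial (Fin n) ℝ) (c a d b : Fin n) :
    MvPolynomial (Fin n) ℝ :=
  pderiv c (pderiv d (H a b)) - pderiv c (pderiv b (H a d)) - pderiv a (pderiv d (H c b))
    + pderiv a (pderiv b (H c d))

/-- Kulkarni-Nomizu with delta -/
noncomputable def KN {n : ℕ} {R : Type*} [Ring R] (P : Fin n → Fin n → R) (c a d b : Fin n) : R :=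
  P c d * kd a b - P c b * kd a d - P a d * kd c b + P a b * kd c d

theorem sum_kd {R : Type*} [Ring R] (f : Fin m → R) (i : Fin m) :
    ∑ j, f j * kd i j = f i := by
  simp [kd]

theorem sum_kd' {R : Type*} [Ring R] (f : Fin m → R) (i : Fin m) :
    ∑ j, f j * kd j i = f i := by
  simp [kd]

theorem pderiv_sumX (j : Fin m) (f : Fin m → MvPolynomial (Fin m) ℝ) :
    pderiv j (∑ k, X k * f k) = f j + ∑ k, X k * pderiv j (f k) := by
  simp only [map_sum, Derivation.leibniz, smul_eq_mul, pderiv_X, Finset.sum_add_distrib]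
  rw [add_comm]
  congr 1
  simp [Pi.single_apply]

theorem xx_riem (H : Fin m → Fin m → MvPolynomial (Fin m) ℝ) (hs : ∀ i j, H i j = H j i)
    (hg : ∀ i, ∑ j, X j * H i j = 0) (j l : Fin m) :
    ∑ i, ∑ k, X i * X k * Riem H i j k l = eul (eul (H j l)) + eul (H j l) := by
  have g1 : ∀ l j, ∑ k, X k * pderiv l (H j k) = - H j l := by
    intro l j
    have := congrArg (pderiv l) (hg j)
    rw [pderiv_sumX, map_zero] at this
    linear_combination this
  have g2 : ∀ i l j, ∑ k, X k * pderiv i (pderiv l (H j k)) = - pderiv i (H j l) - pderiv l (H j i) := by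
    intro i l j
    have := congrArg (pderiv i) (g1 l j)
    rw [pderiv_sumX, map_neg] at this
    linear_combination this
  have t1 : ∑ i, ∑ k, X i * X k * pderiv i (pderiv k (H j l)) = eul (eul (H j l)) - eul (H j l) := by
    have : ∀ i, ∑ k, X i * X k * pderiv i (pderiv k (H j l))
        = X i * pderiv i (eul (H j l)) - X i * pderiv i (H j l) := by
      intro i
      rw [pderiv_eul, mul_add, add_sub_cancel_left, eul, Finset.mul_sum]
      refine Finset.sum_congr rfl fun k _ => ?_
      rw [pderiv_comm i k]; ring
    simp only [this, Finset.sum_sub_distrib]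
    rfl
  have t2 : ∀ j l, ∑ i, ∑ k, X i * X k * pderiv i (pderiv l (H j k)) = H j l - eul (H j l) := by
    intro j l
    have : ∀ i, ∑ k, X i * X k * pderiv i (pderiv l (H j k))
        = - (X i * pderiv i (H j l)) - X i * pderiv l (H j i) := by
      intro i
      rw [show - (X i * pderiv i (H j l)) - X i * pderiv l (H j i)
        = X i * (- pderiv i (H j l) - pderiv l (H j i)) by ring, ← g2, Finset.mul_sum]
      exact Finset.sum_congr rfl fun k _ => by ring
    simp only [this, Finset.sum_sub_distrib, Finset.sum_neg_distrib, g1]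
    rw [eul]; ring
  have t3 : ∑ i, ∑ k, X i * X k * pderiv j (pderiv k (H i l)) = H j l - eul (H j l) := by
    rw [Finset.sum_comm, hs j l, ← t2 l j]
    refine Finset.sum_congr rfl fun i _ => Finset.sum_congr rfl fun k _ => ?_
    rw [pderiv_comm j i, hs k l]; ring
  have t4 : ∑ i, ∑ k, X i * X k * pderiv j (pderiv l (H i k)) = 2 * H j l := by
    have : ∀ i, ∑ k, X i * X k * pderiv j (pderiv l (H i k))
        = - (X i * pderiv j (H l i)) - X i * pderiv l (H j i) := by
      intro i
      rw [hs l i, hs j i, show - (X i * pderiv j (H i l)) - X i * pderiv l (H i j)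
        = X i * (- pderiv j (H i l) - pderiv l (H i j)) by ring, ← g2, Finset.mul_sum]
      exact Finset.sum_congr rfl fun k _ => by ring
    simp only [this, Finset.sum_sub_distrib, Finset.sum_neg_distrib, g1]
    rw [hs l j]; ring
  simp only [Riem, mul_add, mul_sub, Finset.sum_add_distrib, Finset.sum_sub_distrib, t1, t2, t3, t4]
  ring

theorem boundary_zero (hm : 3 ≤ m) (H P : Fin m → Fin m → MvPolynomial (Fin m) ℝ)
    (hs : ∀ i j, H i j = H j i)
    (htr : ∑ i, H i i = 0) (h0 : ∀ i j, coeff 0 (H i j) = 0)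
    (hg : ∀ i, ∑ j, X j * H i j = 0)
    (hP : ∀ i j, P i j = P j i)
    (hR : ∀ i j k l, Riem H i j k l = KN P i j k l)
    (hC : ∀ k i j, pderiv k (P i j) = pderiv i (P k j)) : ∀ i j, H i j = 0 := by
  set p : Fin m → MvPolynomial (Fin m) ℝ := fun i => ∑ k, X k * P i k with hp
  set F : MvPolynomial (Fin m) ℝ := ∑ i, X i * p i with hF
  set r2 : MvPolynomial (Fin m) ℝ := ∑ j, X j * X j with hr2
  set τ : MvPolynomial (Fin m) ℝ := ∑ i, P i i with hτ
  have e1 : ∀ j l, eul (eul (H j l)) + eul (H j l)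
      = F * kd j l - p l * X j - p j * X l + P j l * r2 := by
    intro j l
    rw [← xx_riem H hs hg]
    simp only [hR, KN, mul_add, mul_sub, Finset.sum_add_distrib, Finset.sum_sub_distrib]
    congr 1
    · congr 1
      · congr 1
        · simp only [hF, hp, Finset.sum_mul, Finset.mul_sum]
          exact Finset.sum_congr rfl fun i _ => Finset.sum_congr rfl fun k _ => by ring
        · have : ∀ i, ∑ k, X i * X k * (P i l * kd j k) = X j * (X i * P l i) := by
            intro i
            rw [← sum_kd (fun k => X k * (X i * P l i)) j]
            exact Finset.sum_congr rfl fun k _ => by rw [hP l i]; ring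
          simp only [this, ← Finset.mul_sum]
          rw [hp]; ring
      · rw [Finset.sum_comm]
        have : ∀ k, ∑ i, X i * X k * (P j k * kd i l) = X l * (X k * P j k) := by
          intro k
          rw [← sum_kd' (fun i => X i * (X k * P j k)) l]
          exact Finset.sum_congr rfl fun i _ => by ring
        simp only [this, ← Finset.mul_sum]
        rw [hp]; ring
    · have : ∀ i, ∑ k, X i * X k * (P j l * kd i k) = P j l * (X i * X i) := by
        intro i
        rw [← sum_kd (fun k => P j l * (X i * X k)) i]
        exact Finset.sum_congr rfl fun k _ => by ring
      simp only [this, ← Finset.mul_sum]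
      rfl
  have e2 : (((m:ℝ) - 2) • F) + r2 * τ = 0 := by
    have : ∑ j, (eul (eul (H j j)) + eul (H j j)) = 0 := by
      rw [Finset.sum_add_distrib, ← eul_sum, ← eul_sum, htr, eul_zero, eul_zero, add_zero]
    simp only [e1, Finset.sum_add_distrib, Finset.sum_sub_distrib, ← Finset.sum_mul] at this
    have h2 : ∑ i : Fin m, F * kd i i = (m : ℝ) • F := by
      simp [kd, smul_eq_C_mul]
    have h3 : ∑ i, p i * X i = F := by
      rw [hF]; exact Finset.sum_congr rfl fun k _ => by ring
    rw [h2, h3] at this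
    rw [sub_smul, two_smul, mul_comm r2]
    linear_combination this
  have e3 : ∀ i, pderiv i F = eul (p i) + p i := by
    intro i
    have h1 : ∀ a, pderiv i (p a) = P a i + ∑ b, X b * pderiv a (P i b) := by
      intro a
      simp only [hp, map_sum, Derivation.leibniz, smul_eq_mul, pderiv_X, Finset.sum_add_distrib]
      rw [add_comm]
      congr 1
      · simp [Pi.single_apply]
      · exact Finset.sum_congr rfl fun b _ => by rw [hC]
    have h2 : pderiv i F = p i + ∑ a, X a * pderiv i (p a) := by
      simp only [hF, map_sum, Derivation.leibniz, smul_eq_mul, pderiv_X, Finset.sum_add_distrib]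
      rw [add_comm]
      congr 1
      simp [Pi.single_apply]
    have h3 : eul (p i) = p i + ∑ a, ∑ b, X a * (X b * pderiv a (P i b)) := by
      rw [hp]; dsimp only
      rw [eul_sum]
      simp only [eul_X_mul, Finset.sum_add_distrib]
      congr 1
      rw [Finset.sum_comm]
      refine Finset.sum_congr rfl fun b _ => ?_
      rw [eul, Finset.mul_sum]
      exact Finset.sum_congr rfl fun a _ => by ring
    rw [h2, h3]
    simp only [h1, mul_add, Finset.sum_add_distrib, Finset.mul_sum]
    have h4 : ∑ a, X a * P a i = p i := by
      rw [hp]; exact Finset.sum_congr rfl fun a _ => by rw [hP]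
    rw [h4]; ring
  have e4 : ∑ i, pderiv i (p i) = eul τ + τ := by
    have h1 : ∀ i, pderiv i (p i) = P i i + ∑ b, X b * pderiv b (P i i) := by
      intro i
      simp only [hp, map_sum, Derivation.leibniz, smul_eq_mul, pderiv_X, Finset.sum_add_distrib]
      rw [add_comm]
      congr 1
      · simp [Pi.single_apply]
      · exact Finset.sum_congr rfl fun b _ => by rw [hP i b, hC]
    simp only [h1, Finset.sum_add_distrib]
    rw [hτ, eul_sum, add_comm]; rfl
  have e5 : ∑ i, pderiv i (pderiv i F) = eul (eul τ) + eul τ + (2:ℝ) • (eul τ + τ) := by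
    simp only [e3, map_add, pderiv_eul, Finset.sum_add_distrib, ← eul_sum, e4, eul_add, two_smul]
    ring
  have hm2 : (0:ℝ) < (m:ℝ) - 2 := by
    have : (3:ℝ) ≤ m := by exact_mod_cast hm
    linarith
  have hτ0 : τ = 0 := by
    apply tau_zero ((m:ℝ) - 2) hm2
    rw [← e5]
    have : r2 * τ = - (((m:ℝ) - 2) • F) := by linear_combination e2
    rw [← hr2, this]
    simp only [map_neg, Derivation.map_smul, Finset.sum_neg_distrib, ← smul_eq_C_mul, Finset.smul_sum]
  have hF0 : F = 0 := by
    rw [hτ0, mul_zero, add_zero] at e2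
    exact (smul_eq_zero.1 e2).resolve_left hm2.ne'
  have hp0 : ∀ i, p i = 0 := by
    intro i
    apply eul_add_one_inj
    rw [← e3, hF0, map_zero]
  have hP0 : ∀ i j, P i j = 0 := by
    intro i j
    apply eul_add_one_inj
    have := congrArg (pderiv j) (hp0 i)
    rw [hp] at this
    dsimp only at this
    rw [pderiv_sumX, map_zero] at this
    rw [← this, eul, add_comm]
    have h2 : ∀ b, pderiv b (P i j) = pderiv j (P i b) := fun b => by
      rw [hP i b, hC j b i, hP j i]
    simp only [h2]
  intro j l
  have := e1 j l
  rw [hF0, hp0, hp0, hP0] at this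
  apply eul_inj _ (h0 j l)
  apply eul_add_one_inj
  rw [this]; ring

end MQ

open MeasureTheory
namespace MQ
open MvPolynomial

variable {n : ℕ}

/-- algebraic Weyl tensors -/
structure IsW (C : Fin n → Fin n → Fin n → Fin n → ℝ) : Prop where
  a1 : ∀ c a d b, C a c d b = - C c a d b
  a2 : ∀ c a d b, C c a b d = - C c a d b
  pr : ∀ c a d b, C d b c a = C c a d b
  tr : ∀ c d, ∑ a, C c a d a = 0

theorem kd_comm {R : Type*} [Ring R] (i j : Fin n) : (kd i j : R) = kd j i := by
  simp [kd, eq_comm]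

theorem kd_self {R : Type*} [Ring R] (i : Fin n) : (kd i i : R) = 1 := by
  simp [kd]

theorem KN_a1 {R : Type*} [CommRing R] (P : Fin n → Fin n → R) (c a d b : Fin n) :
    KN P a c d b = - KN P c a d b := by simp only [KN]; ring

theorem KN_a2 {R : Type*} [CommRing R] (P : Fin n → Fin n → R) (c a d b : Fin n) :
    KN P c a b d = - KN P c a d b := by simp only [KN]; ring

theorem KN_pr {R : Type*} [CommRing R] (P : Fin n → Fin n → R) (hP : ∀ i j, P i j = P j i)
    (c a d b : Fin n) : KN P d b c a = KN P c a d b := by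
  simp only [KN]
  rw [hP d c, hP d a, hP b c, hP b a, kd_comm b a, kd_comm b c, kd_comm d a, kd_comm d c]; ring

theorem KN_tr {R : Type*} [CommRing R] (P : Fin n → Fin n → R) (c d : Fin n) :
    ∑ a, KN P c a d a = ((n:R) - 2) * P c d + (∑ a, P a a) * kd c d := by
  simp only [KN, Finset.sum_add_distrib, Finset.sum_sub_distrib, ← Finset.sum_mul]
  have h1 : ∑ a : Fin n, P c d * kd a a = (n:R) * P c d := by simp [kd_self]
  rw [h1, sum_kd' (fun a => P c a) d, sum_kd (fun a => P a d) c]; ring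

/-- reordering fourfold sums -/
theorem sum4_13 {R : Type*} [AddCommMonoid R] (f : Fin n → Fin n → Fin n → Fin n → R) :
    ∑ c, ∑ a, ∑ d, ∑ b, f c a d b = ∑ c, ∑ d, ∑ b, ∑ a, f c a d b := by
  refine Finset.sum_congr rfl fun c _ => ?_
  rw [Finset.sum_comm]
  exact Finset.sum_congr rfl fun d _ => Finset.sum_comm

theorem sum4_swap12 {R : Type*} [AddCommMonoid R] (f : Fin n → Fin n → Fin n → Fin n → R) :
    ∑ c, ∑ a, ∑ d, ∑ b, f a c d b = ∑ c, ∑ a, ∑ d, ∑ b, f c a d b := Finset.sum_comm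

theorem sum4_swap34 {R : Type*} [AddCommMonoid R] (f : Fin n → Fin n → Fin n → Fin n → R) :
    ∑ c, ∑ a, ∑ d, ∑ b, f c a b d = ∑ c, ∑ a, ∑ d, ∑ b, f c a d b :=
  Finset.sum_congr rfl fun _ _ => Finset.sum_congr rfl fun _ _ => Finset.sum_comm

theorem sum4_swap23 {R : Type*} [AddCommMonoid R] (f : Fin n → Fin n → Fin n → Fin n → R) :
    ∑ c, ∑ a, ∑ d, ∑ b, f c d a b = ∑ c, ∑ a, ∑ d, ∑ b, f c a d b :=
  Finset.sum_congr rfl fun _ _ => Finset.sum_comm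

/-- C contracted with delta_ab -/
theorem IsW.k_ab {C : Fin n → Fin n → Fin n → Fin n → ℝ} (h : IsW C) (f : Fin n → Fin n → ℝ) :
    ∑ c, ∑ a, ∑ d, ∑ b, C c a d b * (f c d * kd a b) = 0 := by
  have : ∀ c d, ∑ a, ∑ b, C c a d b * (f c d * kd a b) = 0 := by
    intro c d
    have h1 : ∀ a, ∑ b, C c a d b * (f c d * kd a b) = C c a d a * f c d := by
      intro a
      rw [← sum_kd (fun b => C c a d b * f c d) a]
      exact Finset.sum_congr rfl fun b _ => by ring
    simp only [h1, ← Finset.sum_mul, h.tr, zero_mul]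
  refine Finset.sum_eq_zero fun c _ => ?_
  rw [Finset.sum_comm]
  exact Finset.sum_eq_zero fun d _ => this c d

theorem IsW.k_ad {C : Fin n → Fin n → Fin n → Fin n → ℝ} (h : IsW C) (f : Fin n → Fin n → ℝ) :
    ∑ c, ∑ a, ∑ d, ∑ b, C c a d b * (f c b * kd a d) = 0 := by
  rw [← sum4_swap34]
  rw [← neg_eq_zero, ← h.k_ab f]
  simp only [← Finset.sum_neg_distrib]
  refine Finset.sum_congr rfl fun c _ => Finset.sum_congr rfl fun a _ =>
    Finset.sum_congr rfl fun d _ => Finset.sum_congr rfl fun b _ => ?_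
  rw [h.a2 c a d b]; ring

theorem IsW.k_cb {C : Fin n → Fin n → Fin n → Fin n → ℝ} (h : IsW C) (f : Fin n → Fin n → ℝ) :
    ∑ c, ∑ a, ∑ d, ∑ b, C c a d b * (f a d * kd c b) = 0 := by
  rw [← sum4_swap12]
  rw [← neg_eq_zero, ← h.k_ab f]
  simp only [← Finset.sum_neg_distrib]
  refine Finset.sum_congr rfl fun c _ => Finset.sum_congr rfl fun a _ =>
    Finset.sum_congr rfl fun d _ => Finset.sum_congr rfl fun b _ => ?_
  rw [h.a1 c a]; ring

theorem IsW.k_cd {C : Fin n → Fin n → Fin n → Fin n → ℝ} (h : IsW C) (f : Fin n → Fin n → ℝ) :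
    ∑ c, ∑ a, ∑ d, ∑ b, C c a d b * (f a b * kd c d) = 0 := by
  rw [← sum4_swap12, ← neg_eq_zero, ← h.k_ad f]
  simp only [← Finset.sum_neg_distrib]
  refine Finset.sum_congr rfl fun c _ => Finset.sum_congr rfl fun a _ =>
    Finset.sum_congr rfl fun d _ => Finset.sum_congr rfl fun b _ => ?_
  rw [h.a1 c a]; ring

theorem IsW.KN_zero {C : Fin n → Fin n → Fin n → Fin n → ℝ} (h : IsW C) (P : Fin n → Fin n → ℝ) :
    ∑ c, ∑ a, ∑ d, ∑ b, C c a d b * KN P c a d b = 0 := by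
  simp only [KN, mul_add, mul_sub, Finset.sum_add_distrib, Finset.sum_sub_distrib, h.k_ab P,
    h.k_ad P, h.k_cb P, h.k_cd P]
  simp

/-- Schouten-type tensor -/
noncomputable def sch (R : Fin n → Fin n → Fin n → Fin n → ℝ) (a b : Fin n) : ℝ :=
  1 / ((n:ℝ) - 2) * ((∑ e, R a e b e) - 1 / (2 * ((n:ℝ) - 1)) * (∑ c, ∑ e, R c e c e) * kd a b)

theorem weyl_zero (hn : 4 ≤ n) (R : Fin n → Fin n → Fin n → Fin n → ℝ)
    (a1 : ∀ c a d b, R a c d b = - R c a d b)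
    (a2 : ∀ c a d b, R c a b d = - R c a d b)
    (pr : ∀ c a d b, R d b c a = R c a d b)
    (h : ∀ C, IsW C → ∑ c, ∑ a, ∑ d, ∑ b, C c a d b * R c a d b = 0) (c a d b : Fin n) :
    R c a d b = KN (sch R) c a d b := by
  have hn' : (4:ℝ) ≤ n := by exact_mod_cast hn
  have hP : ∀ i j, sch R i j = sch R j i := by
    intro i j
    simp only [sch]
    rw [kd_comm i j]
    congr 2
    exact Finset.sum_congr rfl fun e _ => pr _ _ _ _
  set W : Fin n → Fin n → Fin n → Fin n → ℝ := fun c a d b => R c a d b - KN (sch R) c a d b with hW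
  have htr : ∑ a, sch R a a = 1 / (2 * ((n:ℝ) - 1)) * (∑ c, ∑ e, R c e c e) := by
    simp only [sch, kd_self, ← Finset.mul_sum, Finset.sum_sub_distrib]
    simp only [Finset.sum_const, Finset.card_univ, Fintype.card_fin, nsmul_eq_mul]
    have : (n:ℝ) - 2 ≠ 0 := by linarith
    have : (n:ℝ) - 1 ≠ 0 := by linarith
    field_simp
    ring
  have hWW : IsW W := by
    refine ⟨?_, ?_, ?_, ?_⟩
    · intro c a d b; simp only [hW]; rw [a1, KN_a1]; ring
    · intro c a d b; simp only [hW]; rw [a2, KN_a2]; ring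
    · intro c a d b; simp only [hW]; rw [pr, KN_pr _ hP]
    · intro c d
      simp only [hW, Finset.sum_sub_distrib]
      rw [KN_tr, htr]
      simp only [sch]
      have : (n:ℝ) - 2 ≠ 0 := by linarith
      have : (n:ℝ) - 1 ≠ 0 := by linarith
      field_simp
      ring
  have h0 : ∑ c, ∑ a, ∑ d, ∑ b, W c a d b * W c a d b = 0 := by
    have h1 := h W hWW
    have h2 := hWW.KN_zero (sch R)
    have e : ∀ c a d b, W c a d b * W c a d b
        = W c a d b * R c a d b - W c a d b * KN (sch R) c a d b := by
      intro c a d b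
      rw [← mul_sub]
    simp only [e, Finset.sum_sub_distrib]
    rw [h1, h2, sub_zero]
  have n1 : ∀ c a d, 0 ≤ ∑ b, W c a d b * W c a d b := fun c a d =>
    Finset.sum_nonneg fun b _ => mul_self_nonneg _
  have n2 : ∀ c a, 0 ≤ ∑ d, ∑ b, W c a d b * W c a d b := fun c a =>
    Finset.sum_nonneg fun d _ => n1 _ _ _
  have n3 : ∀ c, 0 ≤ ∑ a, ∑ d, ∑ b, W c a d b * W c a d b := fun c =>
    Finset.sum_nonneg fun d _ => n2 _ _
  have z1 := (Finset.sum_eq_zero_iff_of_nonneg fun c _ => n3 c).1 h0 c (Finset.mem_univ _)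
  have z2 := (Finset.sum_eq_zero_iff_of_nonneg fun a _ => n2 c a).1 z1 a (Finset.mem_univ _)
  have z3 := (Finset.sum_eq_zero_iff_of_nonneg fun d _ => n1 c a d).1 z2 d (Finset.mem_univ _)
  have z4 := (Finset.sum_eq_zero_iff_of_nonneg fun b _ => mul_self_nonneg _).1 z3 b (Finset.mem_univ _)
  have z5 := mul_self_eq_zero.1 z4
  simp only [hW] at z5
  linarith

/-- polynomial Schouten -/
noncomputable def Psch (H : Fin n → Fin n → MvPolynomial (Fin n) ℝ) (a b : Fin n) :
    MvPolynomial (Fin n) ℝ :=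
  C (1 / ((n:ℝ) - 2)) * ((∑ e, Riem H a e b e)
    - C (1 / (2 * ((n:ℝ) - 1))) * (∑ c, ∑ e, Riem H c e c e) * kd a b)

theorem Riem_pr (H : Fin n → Fin n → MvPolynomial (Fin n) ℝ) (hs : ∀ i j, H i j = H j i)
    (c a d b : Fin n) : Riem H d b c a = Riem H c a d b := by
  simp only [Riem]
  rw [pderiv_comm d c, pderiv_comm d a, pderiv_comm b c, pderiv_comm b a, hs b a, hs b c,
    hs d a, hs d c]
  ring

theorem Psch_symm (H : Fin n → Fin n → MvPolynomial (Fin n) ℝ) (hs : ∀ i j, H i j = H j i)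
    (i j : Fin n) : Psch H i j = Psch H j i := by
  simp only [Psch]
  have : ∑ e, Riem H i e j e = ∑ e, Riem H j e i e :=
    Finset.sum_congr rfl fun e _ => Riem_pr H hs _ _ _ _
  rw [kd_comm i j, this]

theorem eval_kd (y : Fin n → ℝ) (a b : Fin n) : eval y (kd a b) = kd a b := by
  simp only [kd]; split_ifs <;> simp

theorem riem_eq_KN (hn : 4 ≤ n) (H : Fin n → Fin n → MvPolynomial (Fin n) ℝ)
    (hs : ∀ i j, H i j = H j i)
    (hW : ∀ C, IsW C → ∀ y : Fin n → ℝ,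
      ∑ c, ∑ a, ∑ d, ∑ b, C c a d b * eval y (pderiv c (pderiv d (H a b))) = 0) (c a d b : Fin n) :
    Riem H c a d b = KN (Psch H) c a d b := by
  apply MvPolynomial.funext
  intro y
  have key := weyl_zero hn (fun c a d b => eval y (Riem H c a d b))
    (fun c a d b => by rw [← map_neg]; congr 1; simp only [Riem]; ring)
    (fun c a d b => by rw [← map_neg]; congr 1; simp only [Riem]; ring)
    (fun c a d b => by rw [Riem_pr H hs]) ?_ c a d b
  · rw [key]
    simp only [KN, map_add, map_sub, map_mul, eval_kd]
    have : ∀ i j, eval y (Psch H i j) = sch (fun c a d b => eval y (Riem H c a d b)) i j := by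
      intro i j
      simp only [Psch, sch, map_mul, map_sub, map_sum, eval_C, eval_kd]
    simp only [this]
  · intro C hC
    have h1 := hW C hC y
    set G : Fin n → Fin n → Fin n → Fin n → ℝ := fun c a d b => eval y (pderiv c (pderiv d (H a b)))
      with hG
    have h2 : ∑ c, ∑ a, ∑ d, ∑ b, C c a d b * G c a b d = 0 := by
      rw [← sum4_swap34, ← neg_eq_zero, ← h1]
      simp only [← Finset.sum_neg_distrib]
      refine Finset.sum_congr rfl fun c _ => Finset.sum_congr rfl fun a _ =>
        Finset.sum_congr rfl fun d _ => Finset.sum_congr rfl fun b _ => ?_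
      rw [hC.a2 c a d b]; simp only [hG]; ring
    have h3 : ∑ c, ∑ a, ∑ d, ∑ b, C c a d b * G a c d b = 0 := by
      rw [← sum4_swap12, ← neg_eq_zero, ← h1]
      simp only [← Finset.sum_neg_distrib]
      refine Finset.sum_congr rfl fun c _ => Finset.sum_congr rfl fun a _ =>
        Finset.sum_congr rfl fun d _ => Finset.sum_congr rfl fun b _ => ?_
      rw [hC.a1 c a]; simp only [hG]; ring
    have h4 : ∑ c, ∑ a, ∑ d, ∑ b, C c a d b * G a c b d = 0 := by
      rw [← sum4_swap12, ← neg_eq_zero, ← h2]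
      simp only [← Finset.sum_neg_distrib]
      refine Finset.sum_congr rfl fun c _ => Finset.sum_congr rfl fun a _ =>
        Finset.sum_congr rfl fun d _ => Finset.sum_congr rfl fun b _ => ?_
      rw [hC.a1 c a]; ring
    have h1' : ∑ c, ∑ a, ∑ d, ∑ b, C c a d b * G c a d b = 0 := h1
    have : ∀ c a d b, eval y (Riem H c a d b) = G c a d b - G c a b d - G a c d b + G a c b d := by
      intro c a d b
      simp only [Riem, map_add, map_sub, hG]
    simp only [this, mul_add, mul_sub, Finset.sum_add_distrib, Finset.sum_sub_distrib, h1', h2, h3, h4]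
    simp

theorem bianchi (H : Fin n → Fin n → MvPolynomial (Fin n) ℝ) (e a b c d : Fin n) :
    pderiv e (Riem H a b c d) + pderiv a (Riem H b e c d) + pderiv b (Riem H e a c d) = 0 := by
  simp only [Riem, map_add, map_sub]
  linear_combination pderiv_comm e a (pderiv c (H b d)) - pderiv_comm e a (pderiv d (H b c))
    - pderiv_comm e b (pderiv c (H a d)) + pderiv_comm e b (pderiv d (H a c))
    + pderiv_comm a b (pderiv c (H e d)) - pderiv_comm a b (pderiv d (H e c))

theorem codazzi (hn : 4 ≤ n) (H P : Fin n → Fin n → MvPolynomial (Fin n) ℝ)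
    (hP : ∀ i j, P i j = P j i)
    (hR : ∀ c a d b, Riem H c a d b = KN P c a d b) (e a c : Fin n) :
    pderiv e (P a c) = pderiv a (P e c) := by
  have hkd : ∀ i a b : Fin n, pderiv i (kd a b : MvPolynomial (Fin n) ℝ) = 0 := by
    intro i a b; simp only [kd]; split_ifs <;> simp
  set τ : MvPolynomial (Fin n) ℝ := ∑ a, P a a with hτ
  set v : Fin n → MvPolynomial (Fin n) ℝ := fun e => pderiv e τ - ∑ b, pderiv b (P e b) with hv
  have B : ∀ e a c, ((n:MvPolynomial (Fin n) ℝ) - 3) * (pderiv e (P a c) - pderiv a (P e c))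
      + kd a c * v e - kd e c * v a = 0 := by
    intro e a c
    have h1 : ∑ b, (pderiv e (Riem H a b c b) + pderiv a (Riem H b e c b) + pderiv b (Riem H e a c b)) = 0 :=
      Finset.sum_eq_zero fun b _ => bianchi H e a b c b
    have h2 : ∑ b, pderiv e (Riem H a b c b)
        = ((n:MvPolynomial (Fin n) ℝ) - 2) * pderiv e (P a c) + pderiv e τ * kd a c := by
      rw [← map_sum]
      simp only [hR, KN_tr]
      simp only [map_add, Derivation.leibniz, smul_eq_mul, hkd, map_sub, Derivation.map_natCast]
      have : pderiv e (2 : MvPolynomial (Fin n) ℝ) = 0 := by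
        have := (pderiv e : Derivation ℝ (MvPolynomial (Fin n) ℝ) (MvPolynomial (Fin n) ℝ)).map_natCast 2
        simpa using this
      rw [this]; ring
    have h3 : ∑ b, pderiv a (Riem H b e c b)
        = - (((n:MvPolynomial (Fin n) ℝ) - 2) * pderiv a (P e c) + pderiv a τ * kd e c) := by
      rw [← map_sum]
      have : ∀ b, Riem H b e c b = - KN P e b c b := fun b => by rw [hR, KN_a1]
      simp only [this, Finset.sum_neg_distrib, KN_tr]
      simp only [map_neg, map_add, Derivation.leibniz, smul_eq_mul, hkd, map_sub, Derivation.map_natCast]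
      have : pderiv a (2 : MvPolynomial (Fin n) ℝ) = 0 := by
        have := (pderiv a : Derivation ℝ (MvPolynomial (Fin n) ℝ) (MvPolynomial (Fin n) ℝ)).map_natCast 2
        simpa using this
      rw [this]; ring
    have h4 : ∑ b, pderiv b (Riem H e a c b)
        = pderiv a (P e c) - kd a c * (∑ b, pderiv b (P e b)) - pderiv e (P a c)
          + kd e c * ∑ b, pderiv b (P a b) := by
      simp only [hR, KN, map_add, map_sub, Derivation.leibniz, smul_eq_mul, hkd, mul_zero, zero_add,
        Finset.sum_add_distrib, Finset.sum_sub_distrib, ← Finset.mul_sum]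
      congr 2
      · congr 1
        rw [← sum_kd (fun b => pderiv b (P e c)) a]
        exact Finset.sum_congr rfl fun b _ => mul_comm _ _
      · rw [← sum_kd (fun b => pderiv b (P a c)) e]
        exact Finset.sum_congr rfl fun b _ => mul_comm _ _
    rw [Finset.sum_add_distrib, Finset.sum_add_distrib, h2, h3, h4] at h1
    simp only [hv]
    linear_combination h1
  have hv0 : ∀ e, v e = 0 := by
    intro e
    have h1 : ∑ a, (((n:MvPolynomial (Fin n) ℝ) - 3) * (pderiv e (P a a) - pderiv a (P e a))
      + kd a a * v e - kd e a * v a) = 0 := Finset.sum_eq_zero fun a _ => B e a a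
    have h2 : ∑ a, (kd e a : MvPolynomial (Fin n) ℝ) * v a = v e := by
      rw [← sum_kd v e]; exact Finset.sum_congr rfl fun b _ => mul_comm _ _
    have h3 : ∑ a : Fin n, (kd a a : MvPolynomial (Fin n) ℝ) * v e = n * v e := by simp [kd_self]
    have h4 : ∑ a, (pderiv e (P a a) - pderiv a (P e a)) = v e := by
      simp only [hv, hτ, Finset.sum_sub_distrib, map_sum]
    rw [Finset.sum_sub_distrib, Finset.sum_add_distrib, h2, h3, ← Finset.mul_sum, h4] at h1
    have h5 : C (2 * (n:ℝ) - 4) * v e = 0 := by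
      rw [← h1]; simp only [map_sub, map_mul, map_natCast, map_ofNat]; ring
    rcases mul_eq_zero.1 h5 with h | h
    · have h6 : 2 * (n:ℝ) - 4 = 0 := C_eq_zero.1 h
      have hn' : (4:ℝ) ≤ n := by exact_mod_cast hn
      linarith
    · exact h
  have h1 := B e a c
  rw [hv0, hv0, mul_zero, mul_zero, add_zero, sub_zero] at h1
  have h5 : C ((n:ℝ) - 3) * (pderiv e (P a c) - pderiv a (P e c)) = 0 := by
    rw [← h1]; simp only [map_sub, map_natCast, map_ofNat]
  rcases mul_eq_zero.1 h5 with h | h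
  · have h6 : (n:ℝ) - 3 = 0 := C_eq_zero.1 h
    have hn' : (4:ℝ) ≤ n := by exact_mod_cast hn
    linarith
  · exact sub_eq_zero.1 h

end MQ

open MeasureTheory
namespace MQ
open MvPolynomial

variable {m : ℕ}

/-- restriction to the hyperplane -/
noncomputable def rst : MvPolynomial (Fin (m+1)) ℝ →ₐ[ℝ] MvPolynomial (Fin m) ℝ :=
  aeval (Fin.snoc (α := fun _ => MvPolynomial (Fin m) ℝ) X 0)

theorem rst_X_cast (i : Fin m) : rst (X i.castSucc : MvPolynomial (Fin (m+1)) ℝ) = X i := by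
  simp [rst]

theorem rst_X_last : rst (X (Fin.last m) : MvPolynomial (Fin (m+1)) ℝ) = 0 := by
  simp [rst]

theorem eval_rst (y : Fin m → ℝ) (p : MvPolynomial (Fin (m+1)) ℝ) :
    eval y (rst p) = eval (Fin.snoc (α := fun _ => ℝ) y 0) p := by
  induction p using MvPolynomial.induction_on with
  | C a => simp [rst]
  | add p q hp hq => simp [hp, hq]
  | mul_X p i hp =>
    rw [map_mul, map_mul, map_mul, hp]
    congr 1
    refine Fin.lastCases ?_ (fun i => ?_) i
    · rw [rst_X_last]; simp
    · rw [rst_X_cast]; simp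

theorem rst_pderiv (k : Fin m) (p : MvPolynomial (Fin (m+1)) ℝ) :
    rst (pderiv k.castSucc p) = pderiv k (rst p) := by
  induction p using MvPolynomial.induction_on with
  | C a => simp [rst]
  | add p q hp hq => simp [hp, hq]
  | mul_X p i hp =>
    rw [Derivation.leibniz, map_add, smul_eq_mul, smul_eq_mul, map_mul, map_mul, map_mul, hp,
      Derivation.leibniz, smul_eq_mul, smul_eq_mul]
    congr 2
    refine Fin.lastCases ?_ (fun i => ?_) i
    · rw [rst_X_last, pderiv_X_of_ne (Fin.castSucc_lt_last k).ne', map_zero, map_zero]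
    · rw [rst_X_cast, pderiv_X, pderiv_X]
      by_cases h : i = k
      · subst h; simp
      · rw [Pi.single_eq_of_ne h, Pi.single_eq_of_ne (by simpa using h), map_zero]

theorem rst_kd (i j : Fin m) : rst (kd i.castSucc j.castSucc : MvPolynomial (Fin (m+1)) ℝ) = kd i j := by
  simp only [kd, Fin.castSucc_inj]; split_ifs <;> simp

theorem eq_zero_of_rst (p : MvPolynomial (Fin (m+1)) ℝ)
    (h : ∀ k : ℕ, rst ((pderiv (Fin.last m))^[k] p) = 0) : p = 0 := by
  apply MvPolynomial.funext
  intro x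
  set φ : MvPolynomial (Fin (m+1)) ℝ →ₐ[ℝ] Polynomial ℝ :=
    aeval (Fin.snoc (α := fun _ => Polynomial ℝ) (fun i => Polynomial.C (x i.castSucc)) Polynomial.X)
    with hφ
  have e1 : ∀ p, (φ p).eval (x (Fin.last m)) = eval x p := by
    intro p
    induction p using MvPolynomial.induction_on with
    | C a => simp [hφ]
    | add p q hp hq => simp [hp, hq]
    | mul_X p i hp =>
      rw [map_mul, Polynomial.eval_mul, map_mul, hp]
      congr 1
      refine Fin.lastCases ?_ (fun i => ?_) i <;> simp [hφ]
  have e2 : ∀ p, (φ p).eval 0 = eval (fun i : Fin m => x i.castSucc) (rst p) := by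
    intro p
    rw [eval_rst]
    induction p using MvPolynomial.induction_on with
    | C a => simp [hφ]
    | add p q hp hq => simp [hp, hq]
    | mul_X p i hp =>
      rw [map_mul, Polynomial.eval_mul, map_mul, hp]
      congr 1
      refine Fin.lastCases ?_ (fun i => ?_) i <;> simp [hφ]
  have e3 : ∀ p, φ (pderiv (Fin.last m) p) = Polynomial.derivative (φ p) := by
    intro p
    induction p using MvPolynomial.induction_on with
    | C a => simp [hφ]
    | add p q hp hq => simp [hp, hq]
    | mul_X p i hp =>
      rw [Derivation.leibniz, map_add, smul_eq_mul, smul_eq_mul, map_mul, map_mul, map_mul, hp,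
        Polynomial.derivative_mul, add_comm, mul_comm]
      congr 2
      refine Fin.lastCases ?_ (fun i => ?_) i
      · simp [hφ]
      · rw [pderiv_X_of_ne (Fin.castSucc_lt_last i).ne]; simp [hφ]
  have e4 : ∀ k p, φ ((pderiv (Fin.last m))^[k] p) = Polynomial.derivative^[k] (φ p) := by
    intro k
    induction k with
    | zero => intro p; rfl
    | succ k ih => intro p; rw [Function.iterate_succ_apply, Function.iterate_succ_apply, ih, e3]
  have e5 : φ p = 0 := by
    ext k
    have h1 := e2 ((pderiv (Fin.last m))^[k] p)
    rw [h k, map_zero, e4, ← Polynomial.coeff_zero_eq_eval_zero, Polynomial.coeff_iterate_derivative] at h1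
    simp only [zero_add, Nat.descFactorial_self, smul_eq_zero] at h1
    rcases h1 with h1 | h1
    · exact absurd h1 (Nat.factorial_ne_zero k)
    · simpa using h1
  rw [← e1, e5]; simp

theorem it_sum {ι : Type*} (s : Finset ι) (N : Fin (m+1)) (f : ι → MvPolynomial (Fin (m+1)) ℝ) (k : ℕ) :
    (pderiv N)^[k] (∑ i ∈ s, f i) = ∑ i ∈ s, (pderiv N)^[k] (f i) := by
  induction k generalizing f with
  | zero => rfl
  | succ k ih => simp only [Function.iterate_succ_apply, map_sum, ih]

theorem alg (hm : 3 ≤ m) (H : Fin (m+1) → Fin (m+1) → MvPolynomial (Fin (m+1)) ℝ)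
    (hs : ∀ i j, H i j = H j i) (htr : ∑ a, H a a = 0) (hN : ∀ a, H a (Fin.last m) = 0)
    (h0 : ∀ i j, coeff 0 (H i j) = 0)
    (hW : ∀ C, IsW C → ∀ y : Fin (m+1) → ℝ,
      ∑ c, ∑ a, ∑ d, ∑ b, C c a d b * eval y (pderiv c (pderiv d (H a b))) = 0)
    (hg : ∀ (i : Fin m) (y : Fin m → ℝ),
      ∑ j : Fin m, y j * eval (Fin.snoc (α := fun _ => ℝ) y 0) (H i.castSucc j.castSucc) = 0)
    (hd : ∀ (i j : Fin m) , rst (pderiv (Fin.last m) (H i.castSucc j.castSucc)) = 0) :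
    ∀ a b, H a b = 0 := by
  have hR := riem_eq_KN (by omega) H hs hW
  have hPs := Psch_symm H hs
  set P := Psch H with hP
  have hC := codazzi (by omega) H P hPs hR
  have hN' : ∀ a, H (Fin.last m) a = 0 := fun a => by rw [hs, hN]
  have htr' : ∑ i : Fin m, H i.castSucc i.castSucc = 0 := by
    have := htr
    rw [Fin.sum_univ_castSucc, hN, add_zero] at this
    exact this
  have hb : ∀ i j : Fin m, rst (H i.castSucc j.castSucc) = 0 := by
    refine boundary_zero hm (fun i j => rst (H i.castSucc j.castSucc))
      (fun i j => rst (P i.castSucc j.castSucc)) (fun i j => by rw [hs]) ?_ ?_ ?_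
      (fun i j => by rw [hPs]) ?_ ?_
    · rw [← map_sum, htr', map_zero]
    · intro i j
      have := h0 i.castSucc j.castSucc
      rw [← MvPolynomial.constantCoeff_eq, ← MvPolynomial.eval_zero] at this ⊢
      rw [eval_rst]
      have e : Fin.snoc (α := fun _ => ℝ) (0 : Fin m → ℝ) 0 = 0 := by
        funext a
        refine Fin.lastCases ?_ (fun i => ?_) a <;> simp
      rw [e, this]
    · intro i
      apply MvPolynomial.funext
      intro y
      simp only [map_sum, map_mul, eval_X, eval_rst, map_zero]
      exact hg i y
    · intro i j k l
      have := congrArg rst (hR i.castSucc j.castSucc k.castSucc l.castSucc)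
      simpa only [Riem, KN, map_add, map_sub, map_mul, rst_pderiv, rst_kd] using this
    · intro k i j
      have := congrArg rst (hC k.castSucc i.castSucc j.castSucc)
      simpa only [rst_pderiv] using this
  -- evolution
  set N := Fin.last m with hNd
  have kdN : ∀ i : Fin m, (kd N i.castSucc : MvPolynomial (Fin (m+1)) ℝ) = 0 := by
    intro i; simp only [kd, hNd]; rw [if_neg (Fin.castSucc_lt_last i).ne']
  have kdN' : ∀ i : Fin m, (kd i.castSucc N : MvPolynomial (Fin (m+1)) ℝ) = 0 := by
    intro i; rw [kd_comm, kdN]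
  have ev1 : ∀ i j : Fin m, pderiv N (pderiv N (H i.castSucc j.castSucc))
      = P i.castSucc j.castSucc + P N N * kd i.castSucc j.castSucc := by
    intro i j
    have := hR i.castSucc N j.castSucc N
    simp only [Riem, KN, hN, hN', kdN, kdN', kd_self, map_zero] at this
    linear_combination this
  have kdc : ∀ i j : Fin m, (kd i.castSucc j.castSucc : MvPolynomial (Fin (m+1)) ℝ) = kd i j := by
    intro i j; simp only [kd, Fin.castSucc_inj]
  have ev2 : ∀ i j : Fin m, ∑ k : Fin m, Riem H i.castSucc k.castSucc j.castSucc k.castSucc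
      = (m - 2) * P i.castSucc j.castSucc + (∑ k : Fin m, P k.castSucc k.castSucc) * kd i j := by
    intro i j
    rw [← KN_tr (fun i j : Fin m => P i.castSucc j.castSucc) i j]
    refine Finset.sum_congr rfl fun k _ => ?_
    rw [hR]
    simp only [KN, kdc]
  have ev3 : (∑ k : Fin m, P k.castSucc k.castSucc) = - (m * P N N) := by
    have h1 : ∑ k : Fin m, pderiv N (pderiv N (H k.castSucc k.castSucc)) = 0 := by
      rw [← map_sum, ← map_sum, htr', map_zero, map_zero]
    simp only [ev1, kd_self, mul_one, Finset.sum_add_distrib, Finset.sum_const, Finset.card_univ,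
      Fintype.card_fin, nsmul_eq_mul] at h1
    linear_combination h1
  set Rc : Fin m → Fin m → MvPolynomial (Fin (m+1)) ℝ := fun i j =>
    ∑ k : Fin m, Riem H i.castSucc k.castSucc j.castSucc k.castSucc with hRc
  have ev4 : ∑ i, Rc i i = - (m * (2 * m - 2) * P N N) := by
    simp only [hRc]
    simp only [ev2, kd_self, mul_one, Finset.sum_add_distrib, Finset.sum_const, Finset.card_univ,
      Fintype.card_fin, nsmul_eq_mul, ← Finset.mul_sum, ev3]
    ring
  have ev5 : ∀ i j : Fin m, (m * (m - 2) : MvPolynomial (Fin (m+1)) ℝ)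
      * pderiv N (pderiv N (H i.castSucc j.castSucc)) = m * Rc i j - (∑ i, Rc i i) * kd i j := by
    intro i j
    have e2 : Rc i j = _ := ev2 i j
    rw [ev1, ev4, e2, ev3, kdc]
    ring
  have rD : ∀ (k : ℕ), (∀ i j : Fin m, rst ((pderiv N)^[k] (H i.castSucc j.castSucc)) = 0) →
      ∀ i j, rst ((pderiv N)^[k] (Rc i j)) = 0 := by
    intro k hk i j
    have c1 : ∀ (a : Fin (m+1)) (k : ℕ) (p : MvPolynomial (Fin (m+1)) ℝ), (pderiv N)^[k] (pderiv a p) = pderiv a ((pderiv N)^[k] p) := by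
      intro a k
      induction k with
      | zero => intro p; rfl
      | succ k ih => intro p; rw [Function.iterate_succ_apply, pderiv_comm N a, ih, ← Function.iterate_succ_apply]
    simp only [hRc, Riem, it_sum, iterate_map_add, iterate_map_sub, map_sum, map_add, map_sub, c1, rst_pderiv, hk,
      map_zero]
    simp
  have step : ∀ k : ℕ, (∀ i j : Fin m, rst ((pderiv N)^[k] (H i.castSucc j.castSucc)) = 0) ∧
      (∀ i j : Fin m, rst ((pderiv N)^[k+1] (H i.castSucc j.castSucc)) = 0) := by
    intro k
    induction k with
    | zero => exact ⟨hb, hd⟩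
    | succ k ih =>
      refine ⟨ih.2, fun i j => ?_⟩
      have h1 := rD k ih.1
      have cm : ∀ (r : ℝ) (k : ℕ) (p : MvPolynomial (Fin (m+1)) ℝ), (pderiv N)^[k] (C r * p) = C r * (pderiv N)^[k] p := by
        intro r k
        induction k with
        | zero => intro p; rfl
        | succ k ih => intro p; rw [Function.iterate_succ_apply, pderiv_C_mul, Function.iterate_succ_apply, ih]
      have h2 : C ((m:ℝ) * (m - 2)) * pderiv N (pderiv N (H i.castSucc j.castSucc))
          = C (m:ℝ) * Rc i j - C (if i = j then 1 else 0) * (∑ i, Rc i i) := by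
        have := ev5 i j
        simp only [kd] at this
        split_ifs at this ⊢ <;> simp only [map_mul, map_sub, map_natCast, map_ofNat, map_zero, map_one] <;> linear_combination this
      have e1 : ∀ r : ℝ, rst (C r : MvPolynomial (Fin (m+1)) ℝ) = C r := fun r => by simp [rst]
      have h3 := congrArg (fun p => rst ((pderiv N)^[k] p)) h2
      simp only [cm, iterate_map_sub, it_sum, map_mul rst, map_sub rst, map_sum rst, h1, e1] at h3
      rw [show (pderiv N)^[k + 1 + 1] (H i.castSucc j.castSucc)
        = (pderiv N)^[k] (pderiv N (pderiv N (H i.castSucc j.castSucc))) from rfl]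
      simp only [Finset.sum_const_zero, mul_zero, sub_zero, mul_eq_zero] at h3
      have hm' : (3:ℝ) ≤ m := by exact_mod_cast hm
      rcases h3 with h3 | h3
      · exfalso
        rw [C_eq_zero] at h3
        have : (0:ℝ) < m * (m - 2) := mul_pos (by linarith) (by linarith)
        linarith
      · exact h3
  intro a b
  refine Fin.lastCases (hN' b) (fun i => ?_) a
  refine Fin.lastCases (hN _) (fun j => ?_) b
  exact eq_zero_of_rst _ fun k => (step k).1 i j

end MQ

open MeasureTheory
namespace MQ

variable {n m : ℕ}

theorem sum4_pair {R : Type*} [AddCommMonoid R] (f : Fin n → Fin n → Fin n → Fin n → R) :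
    ∑ c, ∑ a, ∑ d, ∑ b, f d b c a = ∑ c, ∑ a, ∑ d, ∑ b, f c a d b := by
  have h1 : ∀ g : Fin n → Fin n → Fin n → Fin n → R, ∑ c, ∑ a, ∑ d, ∑ b, g c a d b
      = ∑ p : Fin n × Fin n, ∑ q : Fin n × Fin n, g p.1 p.2 q.1 q.2 := by
    intro g
    rw [Fintype.sum_prod_type]
    refine Finset.sum_congr rfl fun c _ => Finset.sum_congr rfl fun a _ => ?_
    rw [Fintype.sum_prod_type]
  rw [h1 (fun c a d b => f d b c a), h1, Finset.sum_comm]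

theorem sum4_congr {R : Type*} [AddCommMonoid R] {f g : Fin n → Fin n → Fin n → Fin n → R}
    (h : ∀ c a d b, f c a d b = g c a d b) :
    ∑ c, ∑ a, ∑ d, ∑ b, f c a d b = ∑ c, ∑ a, ∑ d, ∑ b, g c a d b :=
  Finset.sum_congr rfl fun _ _ => Finset.sum_congr rfl fun _ _ =>
    Finset.sum_congr rfl fun _ _ => Finset.sum_congr rfl fun _ _ => h _ _ _ _

theorem IsW.symm12 {C : Fin n → Fin n → Fin n → Fin n → ℝ} (h : IsW C)
    (f : Fin n → Fin n → Fin n → Fin n → ℝ) (hf : ∀ c a d b, f a c d b = f c a d b) :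
    ∑ c, ∑ a, ∑ d, ∑ b, C c a d b * f c a d b = 0 := by
  have h1 := sum4_swap12 (fun c a d b => C c a d b * f c a d b)
  have h2 : ∑ c, ∑ a, ∑ d, ∑ b, C a c d b * f a c d b = ∑ c, ∑ a, ∑ d, ∑ b, - (C c a d b * f c a d b) :=
    sum4_congr fun c a d b => by rw [h.a1 c a, hf]; ring
  simp only [Finset.sum_neg_distrib] at h2
  linarith

theorem IsW.symm34 {C : Fin n → Fin n → Fin n → Fin n → ℝ} (h : IsW C)
    (f : Fin n → Fin n → Fin n → Fin n → ℝ) (hf : ∀ c a d b, f c a b d = f c a d b) :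
    ∑ c, ∑ a, ∑ d, ∑ b, C c a d b * f c a d b = 0 := by
  have h1 := sum4_swap34 (fun c a d b => C c a d b * f c a d b)
  have h2 : ∑ c, ∑ a, ∑ d, ∑ b, C c a b d * f c a b d = ∑ c, ∑ a, ∑ d, ∑ b, - (C c a d b * f c a d b) :=
    sum4_congr fun c a d b => by rw [h.a2 c a d b, hf]; ring
  simp only [Finset.sum_neg_distrib] at h2
  linarith

theorem IsW.pair {C : Fin n → Fin n → Fin n → Fin n → ℝ} (h : IsW C)
    (f : Fin n → Fin n → Fin n → Fin n → ℝ) :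
    ∑ c, ∑ a, ∑ d, ∑ b, C c a d b * f d b c a = ∑ c, ∑ a, ∑ d, ∑ b, C c a d b * f c a d b := by
  rw [← sum4_pair]
  exact sum4_congr fun c a d b => by rw [h.pr]

theorem IsW.div_alg {C : Fin n → Fin n → Fin n → Fin n → ℝ} (h : IsW C)
    (v : Fin n → ℝ) (G : Fin n → Fin n → Fin n → ℝ) (hG : ∀ c a b, G c a b = G c b a) :
    ∑ c, ∑ a, ∑ d, ∑ b, C c a d b * (v d * G c a b + v a * G d b c + v b * G d a c) = 0 := by
  have h1 : ∑ c, ∑ a, ∑ d, ∑ b, C c a d b * (v b * G d a c) = 0 :=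
    h.symm12 (fun c a d b => v b * G d a c) fun c a d b => by rw [hG]
  have h2 : ∑ c, ∑ a, ∑ d, ∑ b, C c a d b * (v a * G d b c)
      = - ∑ c, ∑ a, ∑ d, ∑ b, C c a d b * (v d * G c a b) := by
    rw [h.pair (fun c a d b => v b * G c a d), ← sum4_swap34]
    simp only [← Finset.sum_neg_distrib]
    exact sum4_congr fun c a d b => by rw [h.a2 c a d b]; ring
  simp only [mul_add, Finset.sum_add_distrib, h1, h2]
  ring

/-- partial derivative -/
noncomputable def pd (a : Fin n) (f : (Fin n → ℝ) → ℝ) (x : Fin n → ℝ) : ℝ :=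
  fderiv ℝ f x (Pi.single a 1)

theorem pd_add {a : Fin n} {f g : (Fin n → ℝ) → ℝ} {x} (hf : DifferentiableAt ℝ f x)
    (hg : DifferentiableAt ℝ g x) : pd a (fun y => f y + g y) x = pd a f x + pd a g x := by
  simp only [pd]; rw [fderiv_fun_add hf hg]; rfl

theorem pd_sub {a : Fin n} {f g : (Fin n → ℝ) → ℝ} {x} (hf : DifferentiableAt ℝ f x)
    (hg : DifferentiableAt ℝ g x) : pd a (fun y => f y - g y) x = pd a f x - pd a g x := by
  simp only [pd]; rw [fderiv_fun_sub hf hg]; rfl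

theorem pd_mul {a : Fin n} {f g : (Fin n → ℝ) → ℝ} {x} (hf : DifferentiableAt ℝ f x)
    (hg : DifferentiableAt ℝ g x) : pd a (fun y => f y * g y) x = pd a f x * g x + f x * pd a g x := by
  simp only [pd]; rw [fderiv_fun_mul hf hg]
  simp only [ContinuousLinearMap.add_apply, ContinuousLinearMap.smul_apply, smul_eq_mul]; ring

theorem pd_const {a : Fin n} (r : ℝ) (x : Fin n → ℝ) : pd a (fun _ => r) x = 0 := by
  simp [pd]

theorem pd_cmul {a : Fin n} (r : ℝ) {f : (Fin n → ℝ) → ℝ} {x} (hf : DifferentiableAt ℝ f x) :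
    pd a (fun y => r * f y) x = r * pd a f x := by
  rw [pd_mul (by fun_prop) hf, pd_const]; ring

theorem pd_sum {ι : Type*} {s : Finset ι} {a : Fin n} {f : ι → (Fin n → ℝ) → ℝ} {x}
    (hf : ∀ i, DifferentiableAt ℝ (f i) x) :
    pd a (fun y => ∑ i ∈ s, f i y) x = ∑ i ∈ s, pd a (f i) x := by
  simp only [pd]; rw [fderiv_fun_sum (fun i _ => hf i)]; simp

theorem pd_coord (a b : Fin n) (x : Fin n → ℝ) : pd a (fun y => y b) x = kd a b := by
  simp only [pd]
  rw [(hasFDerivAt_apply b x).fderiv]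
  simp only [ContinuousLinearMap.proj_apply, kd, Pi.single_apply, eq_comm]

theorem contDiff_pd {f : (Fin n → ℝ) → ℝ} (hf : ContDiff ℝ (⊤:ℕ∞) f) (a : Fin n) :
    ContDiff ℝ (⊤:ℕ∞) (pd a f) := by
  unfold pd
  exact (hf.fderiv_right (m := (⊤:ℕ∞)) (by simp)).clm_apply contDiff_const

theorem cd_diff {f : (Fin n → ℝ) → ℝ} (hf : ContDiff ℝ (⊤:ℕ∞) f) : Differentiable ℝ f :=
  hf.differentiable (by simp)

theorem pd_comm {f : (Fin n → ℝ) → ℝ} (hf : ContDiff ℝ (⊤:ℕ∞) f) (a b : Fin n) (x : Fin n → ℝ) :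
    pd a (pd b f) x = pd b (pd a f) x := by
  have h1 : Differentiable ℝ (fderiv ℝ f) :=
    (hf.fderiv_right (m := (⊤:ℕ∞)) (by simp)).differentiable (by simp)
  have key : ∀ a b, pd a (pd b f) x = fderiv ℝ (fderiv ℝ f) x (Pi.single a 1) (Pi.single b 1) := by
    intro a b
    unfold pd
    rw [fderiv_clm_apply (h1 x) (by fun_prop)]
    simp
  rw [key, key]
  have := ((hf.of_le (m := 2) (WithTop.coe_le_coe.2 (le_top : (2:ℕ∞) ≤ ⊤))).contDiffAt (x := x)).isSymmSndFDerivAt (by simp)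
  exact this _ _

theorem cd_eval (p : MvPolynomial (Fin n) ℝ) : ContDiff ℝ (⊤:ℕ∞) (fun x => MvPolynomial.eval x p) := by
  induction p using MvPolynomial.induction_on with
  | C a => simpa using contDiff_const
  | add p q hp hq => simpa using hp.add hq
  | mul_X p i hp => simpa using hp.mul (contDiff_apply ℝ ℝ i)

theorem pd_eval (p : MvPolynomial (Fin n) ℝ) (a : Fin n) (x : Fin n → ℝ) :
    pd a (fun x => MvPolynomial.eval x p) x = MvPolynomial.eval x (MvPolynomial.pderiv a p) := by
  induction p using MvPolynomial.induction_on with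
  | C r => simp [pd_const]
  | add p q hp hq =>
    simp only [map_add]
    rw [pd_add (cd_diff (cd_eval p) x) (cd_diff (cd_eval q) x), hp, hq]
  | mul_X p i hp =>
    simp only [map_mul, MvPolynomial.eval_X]
    rw [pd_mul (cd_diff (cd_eval p) x) (by fun_prop), hp, pd_coord, Derivation.leibniz]
    simp only [smul_eq_mul, map_add, map_mul, MvPolynomial.eval_X, MvPolynomial.pderiv_X, kd, Pi.single_apply]
    by_cases h : a = i
    · simp [h]; ring
    · rw [if_neg h, if_neg (fun h' => h h'.symm)]; simp; ring

/-- the conformal weight -/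
noncomputable def wt (δ : ℝ) (y : Fin (m+1) → ℝ) : ℝ := (∑ a, y a ^ 2) + 2 * δ * y (Fin.last m) + δ ^ 2

/-- its gradient -/
noncomputable def wg (δ : ℝ) (a : Fin (m+1)) (y : Fin (m+1) → ℝ) : ℝ := 2 * y a + 2 * δ * (kd a (Fin.last m))

theorem cd_wt (δ : ℝ) : ContDiff ℝ (⊤:ℕ∞) (wt (m := m) δ) := by
  unfold wt; fun_prop

theorem cd_wg (δ : ℝ) (a : Fin (m+1)) : ContDiff ℝ (⊤:ℕ∞) (wg δ a) := by
  unfold wg; fun_prop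

theorem pd_wt (δ : ℝ) (a : Fin (m+1)) (y : Fin (m+1) → ℝ) : pd a (wt δ) y = wg δ a y := by
  unfold wt wg
  rw [pd_add (by fun_prop) (by fun_prop), pd_add (by fun_prop) (by fun_prop), pd_const,
    pd_cmul _ (by fun_prop), pd_coord, pd_sum (fun i => by fun_prop)]
  have : ∀ i : Fin (m+1), pd a (fun y => y i ^ 2) y = (2 * y i) * kd a i := by
    intro i
    simp only [pow_two]
    rw [pd_mul (by fun_prop) (by fun_prop), pd_coord]; ring
  simp only [this, sum_kd]; ring

theorem pd_wg (δ : ℝ) (a d : Fin (m+1)) (y : Fin (m+1) → ℝ) : pd d (wg δ a) y = 2 * kd d a := by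
  unfold wg
  rw [pd_add (by fun_prop) (by fun_prop), pd_const, pd_cmul _ (by fun_prop), pd_coord]; ring

/-- the rescaled Q -/
noncomputable def DD (δ : ℝ) (T : Fin (m+1) → Fin (m+1) → (Fin (m+1) → ℝ) → ℝ)
    (a b c : Fin (m+1)) (y : Fin (m+1) → ℝ) : ℝ :=
  wt δ y * pd c (T a b) y + wg δ a y * T b c y + wg δ b y * T a c y
    - (∑ e, wg δ e y * T a e y) * kd b c - (∑ e, wg δ e y * T b e y) * kd a c

theorem cd_DD (δ : ℝ) {T : Fin (m+1) → Fin (m+1) → (Fin (m+1) → ℝ) → ℝ}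
    (hT : ∀ a b, ContDiff ℝ (⊤:ℕ∞) (T a b)) (a b c : Fin (m+1)) : ContDiff ℝ (⊤:ℕ∞) (DD δ T a b c) := by
  unfold DD
  have h1 := cd_wt (m := m) δ
  have h2 := cd_wg (m := m) δ
  have h3 := contDiff_pd (hT a b) c
  exact ((((h1.mul h3).add ((h2 a).mul (hT b c))).add ((h2 b).mul (hT a c))).sub
    ((ContDiff.sum fun e _ => (h2 e).mul (hT a e)).mul contDiff_const)).sub
    ((ContDiff.sum fun e _ => (h2 e).mul (hT b e)).mul contDiff_const)

theorem div_id {C : Fin (m+1) → Fin (m+1) → Fin (m+1) → Fin (m+1) → ℝ} (h : IsW C) (δ : ℝ)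
    {T : Fin (m+1) → Fin (m+1) → (Fin (m+1) → ℝ) → ℝ}
    (hT : ∀ a b, ContDiff ℝ (⊤:ℕ∞) (T a b)) (hs : ∀ a b x, T a b x = T b a x) (y : Fin (m+1) → ℝ) :
    ∑ c, ∑ a, ∑ d, ∑ b, C c a d b * pd d (DD δ T a b c) y
      = wt δ y * ∑ c, ∑ a, ∑ d, ∑ b, C c a d b * pd c (pd d (T a b)) y := by
  have dw : DifferentiableAt ℝ (wt (m := m) δ) y := cd_diff (cd_wt δ) y
  have dg : ∀ a, DifferentiableAt ℝ (wg (m := m) δ a) y := fun a => cd_diff (cd_wg δ a) y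
  have dT : ∀ a b, DifferentiableAt ℝ (T a b) y := fun a b => cd_diff (hT a b) y
  have dP : ∀ a b c, DifferentiableAt ℝ (pd c (T a b)) y := fun a b c => cd_diff (contDiff_pd (hT a b) c) y
  have dS : ∀ a, DifferentiableAt ℝ (fun y => ∑ e, wg δ e y * T a e y) y := fun a => by
    refine DifferentiableAt.fun_sum fun e _ => (dg e).mul (dT a e)
  have hs' : ∀ a b, T a b = T b a := fun a b => funext (hs a b)
  set E : Fin (m+1) → Fin (m+1) → ℝ := fun a d => pd d (fun y => ∑ e, wg δ e y * T a e y) y with hE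
  have e1 : ∀ c a d b, pd d (DD δ T a b c) y =
      (wg δ d y * pd c (T a b) y + wg δ a y * pd d (T b c) y + wg δ b y * pd d (T a c) y)
      + wt δ y * pd d (pd c (T a b)) y + 2 * T c b y * kd a d + 2 * T a c y * kd d b
      - E a d * kd c b - E b d * kd a c := by
    intro c a d b
    unfold DD
    rw [pd_sub, pd_sub, pd_add, pd_add, pd_mul dw (dP a b c), pd_mul (dg a) (dT b c),
      pd_mul (dg b) (dT a c), pd_mul (dS a) (by fun_prop), pd_mul (dS b) (by fun_prop), pd_const,
      pd_const, pd_wt, pd_wg, pd_wg, hs' c b, kd_comm c b, kd_comm d a]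
    · simp only [hE]; ring
    · exact dw.mul (dP a b c)
    · exact (dg a).mul (dT b c)
    · exact (dw.mul (dP a b c)).add ((dg a).mul (dT b c))
    · exact (dg b).mul (dT a c)
    · exact ((dw.mul (dP a b c)).add ((dg a).mul (dT b c))).add ((dg b).mul (dT a c))
    · exact (dS a).mul (by fun_prop)
    · exact (((dw.mul (dP a b c)).add ((dg a).mul (dT b c))).add ((dg b).mul (dT a c))).sub ((dS a).mul (by fun_prop))
    · exact (dS b).mul (by fun_prop)
  have z1 := h.div_alg (fun d => wg δ d y) (fun c a b => pd c (T a b) y) (fun c a b => by rw [hs' a b])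
  have z2 := h.k_ad (fun c b => 2 * T c b y)
  have z3 : ∑ c, ∑ a, ∑ d, ∑ b, C c a d b * (2 * T a c y * kd d b) = 0 :=
    h.symm34 (fun c a d b => 2 * T a c y * kd d b) fun c a d b => by rw [kd_comm]
  have z4 := h.k_cb (fun a d => E a d)
  have z5 : ∑ c, ∑ a, ∑ d, ∑ b, C c a d b * (E b d * kd a c) = 0 :=
    h.symm12 (fun c a d b => E b d * kd a c) fun c a d b => by rw [kd_comm]
  have z6 : ∑ c, ∑ a, ∑ d, ∑ b, C c a d b * (wt δ y * pd d (pd c (T a b)) y)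
      = wt δ y * ∑ c, ∑ a, ∑ d, ∑ b, C c a d b * pd c (pd d (T a b)) y := by
    rw [← h.pair]
    simp only [Finset.mul_sum]
    exact sum4_congr fun c a d b => by rw [hs' b a]; ring
  simp only [e1, mul_sub, mul_add (C _ _ _ _), Finset.sum_add_distrib, Finset.sum_sub_distrib] at z1 ⊢
  rw [z2, z3, z4, z5, z6]
  linarith

/-- the conformal Killing operator is killed by the linearised Weyl operator -/
theorem weyl_S {C : Fin n → Fin n → Fin n → Fin n → ℝ} (h : IsW C)
    (V : Fin n → (Fin n → ℝ) → ℝ) (hV : ∀ a, ContDiff ℝ (⊤:ℕ∞) (V a)) (r : ℝ)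
    (S : Fin n → Fin n → (Fin n → ℝ) → ℝ)
    (hS : ∀ a b x, S a b x = pd a (V b) x + pd b (V a) x - r * (∑ c, pd c (V c) x) * kd a b)
    (y : Fin n → ℝ) :
    ∑ c, ∑ a, ∑ d, ∑ b, C c a d b * pd c (pd d (S a b)) y = 0 := by
  have cV : ∀ a b, ContDiff ℝ (⊤:ℕ∞) (pd a (V b)) := fun a b => contDiff_pd (hV b) a
  set g : (Fin n → ℝ) → ℝ := fun x => r * ∑ c, pd c (V c) x with hg
  have cg : ContDiff ℝ (⊤:ℕ∞) g := contDiff_const.mul (ContDiff.sum fun c _ => cV c c)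
  have e1 : ∀ a b d x, pd d (S a b) x = pd d (pd a (V b)) x + pd d (pd b (V a)) x - kd a b * pd d g x := by
    intro a b d x
    have : S a b = fun x => pd a (V b) x + pd b (V a) x - kd a b * g x := by
      funext x; rw [hS]; simp only [hg]; ring
    rw [this, pd_sub, pd_add, pd_cmul]
    · exact cd_diff cg x
    · exact cd_diff (cV a b) x
    · exact cd_diff (cV b a) x
    · exact (cd_diff (cV a b) x).add (cd_diff (cV b a) x)
    · exact (cd_diff cg x).const_mul _
  have e2 : ∀ c a d b, pd c (pd d (S a b)) y = pd c (pd d (pd a (V b))) y + pd c (pd d (pd b (V a))) y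
      - pd c (pd d g) y * kd a b := by
    intro c a d b
    have : pd d (S a b) = fun x => pd d (pd a (V b)) x + pd d (pd b (V a)) x - kd a b * pd d g x :=
      funext (e1 a b d)
    rw [this, pd_sub, pd_add, pd_cmul]
    · ring
    · exact cd_diff (contDiff_pd cg d) y
    · exact cd_diff (contDiff_pd (cV a b) d) y
    · exact cd_diff (contDiff_pd (cV b a) d) y
    · exact (cd_diff (contDiff_pd (cV a b) d) y).add (cd_diff (contDiff_pd (cV b a) d) y)
    · exact (cd_diff (contDiff_pd cg d) y).const_mul _
  have z1 : ∑ c, ∑ a, ∑ d, ∑ b, C c a d b * pd c (pd d (pd a (V b))) y = 0 := by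
    refine h.symm12 (fun c a d b => pd c (pd d (pd a (V b))) y) fun c a d b => ?_
    have i1 : ∀ a, pd d (pd a (V b)) = pd a (pd d (V b)) := fun a => funext fun x => pd_comm (hV b) d a x
    simp only [i1]
    rw [pd_comm (cV d b)]
  have z2 : ∑ c, ∑ a, ∑ d, ∑ b, C c a d b * pd c (pd d (pd b (V a))) y = 0 := by
    refine h.symm34 (fun c a d b => pd c (pd d (pd b (V a))) y) fun c a d b => ?_
    have i1 : pd b (pd d (V a)) = pd d (pd b (V a)) := funext fun x => pd_comm (hV a) b d x
    simp only [i1]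
  have z3 := h.k_ab (fun c d => pd c (pd d g) y)
  simp only [e2, mul_sub, mul_add (C _ _ _ _), Finset.sum_add_distrib, Finset.sum_sub_distrib]
  rw [z1, z2, z3]; simp

end MQ

open MeasureTheory
namespace MQ

variable {n m : ℕ}

theorem sq_int_le {K : Set (Fin n → ℝ)} (hK : IsCompact K) {f : (Fin n → ℝ) → ℝ} (hf : Continuous f) :
    (∫ x in K, f x) ^ 2 ≤ volume.real K * ∫ x in K, f x ^ 2 := by
  set I := ∫ x in K, f x with hI
  set v := volume.real K with hv
  have i1 : IntegrableOn f K := hf.continuousOn.integrableOn_compact hK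
  have i2 : IntegrableOn (fun x => f x ^ 2) K := (hf.pow 2).continuousOn.integrableOn_compact hK
  have h0 : 0 ≤ ∫ x in K, (v * f x - I) ^ 2 := integral_nonneg fun x => sq_nonneg _
  have h1 : ∫ x in K, (v * f x - I) ^ 2 = v ^ 2 * (∫ x in K, f x ^ 2) - 2 * v * I * I + I ^ 2 * v := by
    have : ∀ x, (v * f x - I) ^ 2 = v ^ 2 * f x ^ 2 - 2 * v * I * f x + I ^ 2 := fun x => by ring
    simp only [this]
    have c : IntegrableOn (fun _ : Fin n → ℝ => I ^ 2) K := continuous_const.continuousOn.integrableOn_compact hK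
    have j1 : IntegrableOn (fun x => v ^ 2 * f x ^ 2) K := i2.const_mul _
    have j2 : IntegrableOn (fun x => 2 * v * I * f x) K := i1.const_mul _
    have j3 : IntegrableOn (fun x => v ^ 2 * f x ^ 2 - 2 * v * I * f x) K := j1.sub j2
    rw [integral_add j3 c, integral_sub (i2.const_mul _) (i1.const_mul _),
      integral_const_mul, integral_const_mul, setIntegral_const, smul_eq_mul]
    ring
  have hv0 : 0 ≤ v := measureReal_nonneg
  rcases hv0.eq_or_lt with h | h
  · have : volume K = 0 := by
      rcases (ENNReal.toReal_eq_zero_iff _).1 h.symm with h | h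
      · exact h
      · exact absurd h hK.measure_lt_top.ne
    rw [hI, setIntegral_measure_zero _ this, ← h]; simp
  · rw [h1] at h0
    have : 0 ≤ v * (v * (∫ x in K, f x ^ 2) - I ^ 2) := by nlinarith
    have := nonneg_of_mul_nonneg_right this h
    linarith

/-- sum of squares -/
noncomputable def sqD (δ : ℝ) (T : Fin (m+1) → Fin (m+1) → (Fin (m+1) → ℝ) → ℝ)
    (y : Fin (m+1) → ℝ) : ℝ := ∑ a, ∑ b, ∑ c, DD δ T a b c y ^ 2

theorem cont_sqD (δ : ℝ) {T : Fin (m+1) → Fin (m+1) → (Fin (m+1) → ℝ) → ℝ}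
    (hT : ∀ a b, ContDiff ℝ (⊤:ℕ∞) (T a b)) : Continuous (sqD δ T) := by
  unfold sqD
  refine continuous_finsetSum _ fun a _ => continuous_finsetSum _ fun b _ => continuous_finsetSum _ fun c _ => ?_
  exact (cd_DD δ hT a b c).continuous.pow 2

theorem sqD_le (δ : ℝ) (T : Fin (m+1) → Fin (m+1) → (Fin (m+1) → ℝ) → ℝ) (a b c : Fin (m+1))
    (y : Fin (m+1) → ℝ) : DD δ T a b c y ^ 2 ≤ sqD δ T y := by
  unfold sqD
  refine le_trans ?_ (Finset.single_le_sum (f := fun a => ∑ b, ∑ c, DD δ T a b c y ^ 2)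
    (fun i _ => Finset.sum_nonneg fun _ _ => Finset.sum_nonneg fun _ _ => sq_nonneg _) (Finset.mem_univ a))
  refine le_trans ?_ (Finset.single_le_sum (f := fun b => ∑ c, DD δ T a b c y ^ 2)
    (fun i _ => Finset.sum_nonneg fun _ _ => sq_nonneg _) (Finset.mem_univ b))
  exact Finset.single_le_sum (f := fun c => DD δ T a b c y ^ 2)
    (fun i _ => sq_nonneg _) (Finset.mem_univ c)

theorem parts {f ψ : (Fin n → ℝ) → ℝ} (hf : ContDiff ℝ (⊤:ℕ∞) f) (hψ : ContDiff ℝ (⊤:ℕ∞) ψ)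
    (hc : HasCompactSupport ψ) (d : Fin n) : ∫ x, ψ x * pd d f x = - ∫ x, pd d ψ x * f x := by
  have c1 : Continuous (pd d f) := (contDiff_pd hf d).continuous
  have c2 : Continuous (pd d ψ) := (contDiff_pd hψ d).continuous
  have s2 : HasCompactSupport (pd d ψ) := hc.fderiv_apply ℝ _
  refine integral_mul_fderiv_eq_neg_fderiv_mul_of_integrable ?_ ?_ ?_ (fun x _ => cd_diff hψ x) (fun x _ => cd_diff hf x)
  · exact (c2.mul hf.continuous).integrable_of_hasCompactSupport s2.mul_right
  · exact (hψ.continuous.mul c1).integrable_of_hasCompactSupport hc.mul_right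
  · exact (hψ.continuous.mul hf.continuous).integrable_of_hasCompactSupport hc.mul_right

theorem int_est {C : Fin (m+1) → Fin (m+1) → Fin (m+1) → Fin (m+1) → ℝ} (h : IsW C)
    {K : Set (Fin (m+1) → ℝ)} (hK : IsCompact K) {ψ : (Fin (m+1) → ℝ) → ℝ}
    (hψ : ContDiff ℝ (⊤:ℕ∞) ψ) (hc : HasCompactSupport ψ) (hsu : tsupport ψ ⊆ K) :
    ∃ A : ℝ, 0 ≤ A ∧ ∀ (δ : ℝ) (T : Fin (m+1) → Fin (m+1) → (Fin (m+1) → ℝ) → ℝ),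
      (∀ a b, ContDiff ℝ (⊤:ℕ∞) (T a b)) → (∀ a b x, T a b x = T b a x) →
      (∫ x in K, ψ x * (wt δ x * ∑ c, ∑ a, ∑ d, ∑ b, C c a d b * pd c (pd d (T a b)) x)) ^ 2
        ≤ A * ∫ x in K, sqD δ T x := by
  have cψ : ∀ d, Continuous (pd d ψ) := fun d => (contDiff_pd hψ d).continuous
  set g : (Fin (m+1) → ℝ) → ℝ := fun x => ∑ p : Fin (m+1) × Fin (m+1) × Fin (m+1), (∑ d, C p.2.2 p.1 d p.2.1 * pd d ψ x) ^ 2 with hg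
  have cg : Continuous g := by
    refine continuous_finsetSum _ fun p _ => ?_
    exact (continuous_finsetSum _ fun d _ => continuous_const.mul (cψ d)).pow 2
  obtain ⟨B, hB⟩ := hK.exists_bound_of_continuousOn cg.continuousOn
  refine ⟨volume.real K * |B|, by positivity, fun δ T hT hs => ?_⟩
  have cD : ∀ a b c, Continuous (DD δ T a b c) := fun a b c => (cd_DD δ hT a b c).continuous
  set F : (Fin (m+1) → ℝ) → ℝ := fun x => ∑ c, ∑ a, ∑ d, ∑ b, C c a d b * (pd d ψ x * DD δ T a b c x) with hF
  have cF : Continuous F := by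
    refine continuous_finsetSum _ fun c _ => continuous_finsetSum _ fun a _ => continuous_finsetSum _ fun d _ =>
      continuous_finsetSum _ fun b _ => continuous_const.mul ((cψ d).mul (cD a b c))
  have z1 : ∀ x, x ∉ K → ψ x = 0 := fun x hx => image_eq_zero_of_notMem_tsupport fun h' => hx (hsu h')
  have z2 : ∀ d x, x ∉ K → pd d ψ x = 0 := by
    intro d x hx
    have : fderiv ℝ ψ x = 0 := by
      by_contra h'
      exact hx (hsu (support_fderiv_subset ℝ h'))
    simp [pd, this]
  have e1 : (∫ x in K, ψ x * (wt δ x * ∑ c, ∑ a, ∑ d, ∑ b, C c a d b * pd c (pd d (T a b)) x))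
      = - ∫ x in K, F x := by
    rw [setIntegral_eq_integral_of_forall_compl_eq_zero (fun x hx => by rw [z1 x hx, zero_mul]),
      setIntegral_eq_integral_of_forall_compl_eq_zero (fun x hx => by simp only [hF, z2 _ x hx]; simp)]
    simp only [← div_id h δ hT hs, hF]
    have i1 : ∀ c a d b, Integrable (fun x => C c a d b * (ψ x * pd d (DD δ T a b c) x)) := fun c a d b =>
      ((hψ.continuous.mul (contDiff_pd (cd_DD δ hT a b c) d).continuous).integrable_of_hasCompactSupport hc.mul_right).const_mul _
    have i2 : ∀ c a d b, Integrable (fun x => C c a d b * (pd d ψ x * DD δ T a b c x)) := fun c a d b =>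
      (((cψ d).mul (cD a b c)).integrable_of_hasCompactSupport (hc.fderiv_apply ℝ _).mul_right).const_mul _
    have : ∀ x, ψ x * ∑ c, ∑ a, ∑ d, ∑ b, C c a d b * pd d (DD δ T a b c) x
      = ∑ c, ∑ a, ∑ d, ∑ b, C c a d b * (ψ x * pd d (DD δ T a b c) x) := by
      intro x
      simp only [Finset.mul_sum]
      exact sum4_congr fun c a d b => by ring
    simp only [this]
    have s4 : ∀ G : Fin (m+1) → Fin (m+1) → Fin (m+1) → Fin (m+1) → (Fin (m+1) → ℝ) → ℝ,
        (∀ c a d b, Integrable (G c a d b)) → ∫ x, ∑ c, ∑ a, ∑ d, ∑ b, G c a d b x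
          = ∑ c, ∑ a, ∑ d, ∑ b, ∫ x, G c a d b x := by
      intro G hG
      have j1 : ∀ c a d, Integrable (fun x => ∑ b, G c a d b x) := fun c a d =>
        integrable_finsetSum _ fun b _ => hG c a d b
      have j2 : ∀ c a, Integrable (fun x => ∑ d, ∑ b, G c a d b x) := fun c a =>
        integrable_finsetSum _ fun b _ => j1 c a b
      have j3 : ∀ c, Integrable (fun x => ∑ a, ∑ d, ∑ b, G c a d b x) := fun c =>
        integrable_finsetSum _ fun b _ => j2 c b
      rw [integral_finsetSum _ fun c _ => j3 c]
      refine Finset.sum_congr rfl fun c _ => ?_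
      rw [integral_finsetSum _ fun a _ => j2 c a]
      refine Finset.sum_congr rfl fun a _ => ?_
      rw [integral_finsetSum _ fun d _ => j1 c a d]
      refine Finset.sum_congr rfl fun d _ => ?_
      rw [integral_finsetSum _ fun b _ => hG c a d b]
    rw [s4 (fun c a d b x => C c a d b * (ψ x * pd d (DD δ T a b c) x)) i1,
      s4 (fun c a d b x => C c a d b * (pd d ψ x * DD δ T a b c x)) i2]
    simp only [← Finset.sum_neg_distrib]
    refine sum4_congr fun c a d b => ?_
    rw [integral_const_mul, integral_const_mul, parts (cd_DD δ hT a b c) hψ hc]; ring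
  rw [e1, neg_sq]
  refine (sq_int_le hK cF).trans ?_
  rw [mul_assoc]
  refine mul_le_mul_of_nonneg_left ?_ measureReal_nonneg
  rw [← integral_const_mul]
  refine setIntegral_mono_on ((cF.pow 2).continuousOn.integrableOn_compact hK)
    ((continuous_const.mul (cont_sqD δ hT)).continuousOn.integrableOn_compact hK) hK.measurableSet fun x hx => ?_
  have e2 : F x = ∑ p : Fin (m+1) × Fin (m+1) × Fin (m+1),
      (∑ d, C p.2.2 p.1 d p.2.1 * pd d ψ x) * DD δ T p.1 p.2.1 p.2.2 x := by
    simp only [Fintype.sum_prod_type, hF, Finset.sum_mul]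
    rw [Finset.sum_comm]
    refine Finset.sum_congr rfl fun a _ => ?_
    have : ∀ c, ∑ d, ∑ b, C c a d b * (pd d ψ x * DD δ T a b c x)
      = ∑ b, ∑ d, C c a d b * pd d ψ x * DD δ T a b c x := fun c => by
      rw [Finset.sum_comm]
      exact Finset.sum_congr rfl fun b _ => Finset.sum_congr rfl fun d _ => by ring
    have e3 : ∑ c, ∑ d, ∑ b, C c a d b * (pd d ψ x * DD δ T a b c x)
      = ∑ b, ∑ c, ∑ d, C c a d b * pd d ψ x * DD δ T a b c x := by
      simp only [this]; rw [Finset.sum_comm]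
    rw [← e3]
  have e4 : sqD δ T x = ∑ p : Fin (m+1) × Fin (m+1) × Fin (m+1), DD δ T p.1 p.2.1 p.2.2 x ^ 2 := by
    simp only [Fintype.sum_prod_type, sqD]
  have := Finset.sum_mul_sq_le_sq_mul_sq Finset.univ
    (fun p : Fin (m+1) × Fin (m+1) × Fin (m+1) => ∑ d, C p.2.2 p.1 d p.2.1 * pd d ψ x)
    (fun p => DD δ T p.1 p.2.1 p.2.2 x)
  rw [← e2, ← e4] at this
  refine this.trans ?_
  refine mul_le_mul_of_nonneg_right ?_ (by rw [e4]; exact Finset.sum_nonneg fun _ _ => sq_nonneg _)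
  have := hB x hx
  exact (le_abs_self _).trans (this.trans (le_abs_self _))

theorem fderiv_le_pd {f : (Fin n → ℝ) → ℝ} {x : Fin n → ℝ} {L : ℝ} (hL : 0 ≤ L) (h : ∀ a, |pd a f x| ≤ L) :
    ‖fderiv ℝ f x‖ ≤ n * L := by
  refine ContinuousLinearMap.opNorm_le_bound _ (by positivity) fun v => ?_
  have : v = ∑ a, v a • (Pi.single a (1:ℝ) : Fin n → ℝ) := by
    ext b; simp [Pi.single_apply]
  have e : fderiv ℝ f x v = ∑ a, v a * pd a f x := by
    conv_lhs => rw [this]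
    simp only [map_sum, map_smul, smul_eq_mul, pd]
  rw [e]
  refine (norm_sum_le _ _).trans ?_
  have : ∀ a ∈ Finset.univ, ‖v a * pd a f x‖ ≤ L * ‖v‖ := fun a _ => by
    rw [norm_mul, mul_comm]
    exact mul_le_mul (h a) (norm_le_pi_norm v a) (norm_nonneg _) hL
  refine (Finset.sum_le_card_nsmul _ _ _ this).trans ?_
  simp [mul_assoc]

theorem face_est {lo hi x0 : Fin n → ℝ} {f : (Fin n → ℝ) → ℝ} (hf : ContDiff ℝ (⊤:ℕ∞) f) {L g t : ℝ}
    (hL : 0 ≤ L) (ht : 0 ≤ t) (hx : lo ≤ x0) (hx' : ∀ a, x0 a + t ≤ hi a)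
    (hb : ∀ x ∈ Set.Icc lo hi, ∀ a, |pd a f x| ≤ L) (hg : 0 ≤ g) (hfx : g ≤ |f x0|) (hLt : n * L * t ≤ g / 2) :
    t ^ n * (g / 2) ^ 2 ≤ ∫ x in Set.Icc lo hi, f x ^ 2 := by
  have sub : Set.Icc x0 (fun a => x0 a + t) ⊆ Set.Icc lo hi := fun x hxx =>
    ⟨hx.trans hxx.1, fun a => (hxx.2 a).trans (hx' a)⟩
  have i0 : IntegrableOn (fun x => f x ^ 2) (Set.Icc lo hi) :=
    (hf.continuous.pow 2).continuousOn.integrableOn_compact isCompact_Icc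
  have h1 : ∫ x in Set.Icc x0 (fun a => x0 a + t), f x ^ 2 ≤ ∫ x in Set.Icc lo hi, f x ^ 2 :=
    setIntegral_mono_set i0 (Filter.Eventually.of_forall fun x => sq_nonneg _) sub.eventuallyLE
  refine le_trans ?_ h1
  have v : volume.real (Set.Icc x0 (fun a => x0 a + t)) = t ^ n := by
    rw [Measure.real, Real.volume_Icc_pi]
    simp [ENNReal.toReal_ofReal ht]
  have h2 : ∫ x in Set.Icc x0 (fun a => x0 a + t), (g/2) ^ 2 = t ^ n * (g / 2) ^ 2 := by
    rw [setIntegral_const, v, smul_eq_mul]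
  rw [← h2]
  refine setIntegral_mono_on (continuous_const.continuousOn.integrableOn_compact isCompact_Icc)
    (i0.mono_set sub) measurableSet_Icc fun x hxx => ?_
  have h3 : ‖f x - f x0‖ ≤ n * L * ‖x - x0‖ :=
    (convex_Icc lo hi).norm_image_sub_le_of_norm_fderiv_le (fun y _ => cd_diff hf y)
      (fun y hy => fderiv_le_pd hL (hb y hy)) (sub ⟨le_rfl, fun a => by simpa using ht⟩) (sub hxx)
  have h4 : ‖x - x0‖ ≤ t := by
    refine (pi_norm_le_iff_of_nonneg ht).2 fun a => ?_
    rw [Real.norm_eq_abs, abs_le]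
    have := hxx.1 a
    have := hxx.2 a
    simp only [Pi.sub_apply]
    constructor <;> linarith
  have h5 : |f x - f x0| ≤ g / 2 := h3.trans ((mul_le_mul_of_nonneg_left h4 (by positivity)).trans hLt)
  have h6 : g / 2 ≤ |f x| := by
    have := abs_sub_abs_le_abs_sub (f x0) (f x)
    rw [abs_sub_comm] at this
    linarith
  rw [← sq_abs (f x)]
  exact pow_le_pow_left₀ (by positivity) h6 2

end MQ

open MeasureTheory
namespace MQ

variable {m : ℕ}

/-- lower corner -/
noncomputable def lo (m : ℕ) : Fin (m+1) → ℝ := fun a => if a = 0 then 3/4 else 0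
/-- side -/
noncomputable def tau (m : ℕ) : ℝ := 1 / (8 * (m + 1))
/-- upper corner -/
noncomputable def hi (m : ℕ) : Fin (m+1) → ℝ := fun a => lo m a + tau m
/-- the reference box -/
noncomputable def KK (m : ℕ) : Set (Fin (m+1) → ℝ) := Set.Icc (lo m) (hi m)

theorem tau_pos : 0 < tau m := by unfold tau; positivity

theorem tau_le : tau m ≤ 1 / 8 := by
  unfold tau
  apply one_div_le_one_div_of_le (by norm_num)
  have : (0:ℝ) ≤ m := by positivity
  linarith

theorem lo_nonneg (a : Fin (m+1)) : 0 ≤ lo m a := by unfold lo; split_ifs <;> norm_num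

theorem lo_last (hm : 3 ≤ m) : lo m (Fin.last m) = 0 := by
  unfold lo; rw [if_neg]; intro h; have := congrArg Fin.val h; simp at this; omega

theorem KK_nonneg {y : Fin (m+1) → ℝ} (hy : y ∈ KK m) (a : Fin (m+1)) : 0 ≤ y a :=
  (lo_nonneg a).trans (hy.1 a)

theorem KK_lower {y : Fin (m+1) → ℝ} (hy : y ∈ KK m) : 1/4 ≤ ∑ a, y a ^ 2 := by
  have h1 : y 0 ^ 2 ≤ ∑ a, y a ^ 2 := Finset.single_le_sum (f := fun a => y a ^ 2) (fun i _ => sq_nonneg _) (Finset.mem_univ 0)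
  have h2 : 3/4 ≤ y 0 := by have := hy.1 0; simpa [lo] using this
  nlinarith

theorem KK_upper {y : Fin (m+1) → ℝ} (hy : y ∈ KK m) : ∑ a, y a ^ 2 < 1 := by
  rw [Fin.sum_univ_succ]
  have h0 := KK_nonneg hy 0
  have h2 : y 0 ≤ 7/8 := by
    have := hy.2 0; simp only [hi, lo, if_true] at this; have := tau_le (m := m); linarith
  have h3 : ∀ i : Fin m, y i.succ ^ 2 ≤ tau m ^ 2 := by
    intro i
    have := hy.2 i.succ
    simp only [hi, lo, Fin.succ_ne_zero, if_false, zero_add] at this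
    exact pow_le_pow_left₀ (KK_nonneg hy _) this 2
  have h4 : ∑ i : Fin m, y i.succ ^ 2 ≤ m * tau m ^ 2 := by
    refine (Finset.sum_le_card_nsmul _ _ _ fun i _ => h3 i).trans ?_
    simp
  have h5 : m * tau m ≤ 1/8 := by
    unfold tau
    rw [mul_one_div, div_le_div_iff₀ (by positivity) (by norm_num)]
    linarith
  have := tau_le (m := m); have := tau_pos (m := m)
  nlinarith

theorem KK_le_one {y : Fin (m+1) → ℝ} (hy : y ∈ KK m) (a : Fin (m+1)) : |y a| ≤ 1 := by
  have h1 : y a ^ 2 ≤ ∑ a, y a ^ 2 := Finset.single_le_sum (f := fun a => y a ^ 2) (fun i _ => sq_nonneg _) (Finset.mem_univ a)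
  have := KK_upper hy
  rw [abs_le_one_iff_mul_self_le_one]; nlinarith

theorem wt_lower {δ : ℝ} (hδ : 0 ≤ δ) {y : Fin (m+1) → ℝ} (hy : y ∈ KK m) : 1/4 ≤ wt δ y := by
  unfold wt
  have := KK_lower hy
  have := mul_nonneg hδ (KK_nonneg hy (Fin.last m))
  nlinarith [sq_nonneg δ]

theorem wt_upper {δ : ℝ} (hδ : 0 ≤ δ) (hδ' : δ ≤ 1) {y : Fin (m+1) → ℝ} (hy : y ∈ KK m) : wt δ y ≤ 4 := by
  unfold wt
  have := KK_upper hy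
  have h1 := (abs_le.1 (KK_le_one hy (Fin.last m))).2
  have := mul_le_mul hδ' h1 (KK_nonneg hy _) zero_le_one
  nlinarith

theorem wg_bound {δ : ℝ} (hδ : 0 ≤ δ) (hδ' : δ ≤ 1) {y : Fin (m+1) → ℝ} (hy : y ∈ KK m) (a : Fin (m+1)) : |wg δ a y| ≤ 4 := by
  unfold wg
  have h1 := abs_le.1 (KK_le_one hy a)
  simp only [kd]
  rw [abs_le]
  split_ifs <;> constructor <;> linarith [h1.1, h1.2]

variable {ι : Type} [Fintype ι]

/-- polynomial tensor with coefficients h -/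
noncomputable def po (e : ι → MvPolynomial (Fin (m+1)) ℝ) (h : Fin (m+1) → Fin (m+1) → ι → ℝ)
    (a b : Fin (m+1)) : MvPolynomial (Fin (m+1)) ℝ := ∑ i, MvPolynomial.C (h a b i) * e i

/-- admissible T -/
structure Adm (e : ι → MvPolynomial (Fin (m+1)) ℝ) (M : ℝ) (h : Fin (m+1) → Fin (m+1) → ι → ℝ)
    (T : Fin (m+1) → Fin (m+1) → (Fin (m+1) → ℝ) → ℝ) : Prop where
  cd : ∀ a b, ContDiff ℝ (⊤:ℕ∞) (T a b)
  sy : ∀ a b x, T a b x = T b a x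
  W : ∀ C, IsW C → ∀ y, ∑ c, ∑ a, ∑ d, ∑ b, C c a d b * pd c (pd d (T a b)) y
    = ∑ c, ∑ a, ∑ d, ∑ b, C c a d b * MvPolynomial.eval y (MvPolynomial.pderiv c (MvPolynomial.pderiv d (po e h a b)))
  bn : ∀ (i : Fin m) (y : Fin (m+1) → ℝ), y (Fin.last m) = 0 → T i.castSucc (Fin.last m) y = 0
  bd : ∀ y : Fin (m+1) → ℝ, y (Fin.last m) = 0 → ∃ κ : ℝ, ∀ i j : Fin m,
    pd (Fin.last m) (T i.castSucc j.castSucc) y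
      = MvPolynomial.eval y (MvPolynomial.pderiv (Fin.last m) (po e h i.castSucc j.castSucc)) + κ * kd i j
  b0 : ∀ y ∈ KK m, ∀ a b, |T a b y| ≤ M
  b1 : ∀ y ∈ KK m, ∀ a b c, |pd c (T a b) y| ≤ M
  b2 : ∀ y ∈ KK m, ∀ a b c d, |pd d (pd c (T a b)) y| ≤ M

/-- linear constraints on coefficients -/
structure Con (e : ι → MvPolynomial (Fin (m+1)) ℝ) (h : Fin (m+1) → Fin (m+1) → ι → ℝ) : Prop where
  sy : ∀ a b, h a b = h b a
  tr : ∀ i, ∑ a, h a a i = 0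
  nn : ∀ a, h a (Fin.last m) = 0
  ga : ∀ (i : Fin m) (y : Fin m → ℝ), ∑ j : Fin m, y j *
    MvPolynomial.eval (Fin.snoc (α := fun _ => ℝ) y 0) (po e h i.castSucc j.castSucc) = 0

theorem abs_mul_le {a b A B : ℝ} (ha : |a| ≤ A) (hb : |b| ≤ B) : |a * b| ≤ A * B := by
  rw [abs_mul]; exact mul_le_mul ha hb (abs_nonneg _) ((abs_nonneg _).trans ha)

theorem kd_abs_le {n : ℕ} (i j : Fin n) : |(kd i j : ℝ)| ≤ 1 := by
  simp only [kd]; split_ifs <;> simp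

theorem kd_ne {n : ℕ} {i j : Fin n} (h : i ≠ j) : (kd i j : ℝ) = 0 := by simp [kd, h]

theorem DD_tan (δ : ℝ) (T : Fin (m+1) → Fin (m+1) → (Fin (m+1) → ℝ) → ℝ) (i j : Fin m) (y : Fin (m+1) → ℝ) :
    DD δ T i.castSucc j.castSucc (Fin.last m) y = wt δ y * pd (Fin.last m) (T i.castSucc j.castSucc) y
      + wg δ i.castSucc y * T j.castSucc (Fin.last m) y + wg δ j.castSucc y * T i.castSucc (Fin.last m) y := by
  unfold DD
  rw [kd_ne (Fin.castSucc_lt_last i).ne, kd_ne (Fin.castSucc_lt_last j).ne]; ring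

theorem pd_DD_tan {e : ι → MvPolynomial (Fin (m+1)) ℝ} {M : ℝ} {h : Fin (m+1) → Fin (m+1) → ι → ℝ}
    {T : Fin (m+1) → Fin (m+1) → (Fin (m+1) → ℝ) → ℝ} (hA : Adm e M h T) {δ : ℝ} (hδ : 0 ≤ δ) (hδ' : δ ≤ 1)
    (i j : Fin m) {y : Fin (m+1) → ℝ} (hy : y ∈ KK m) (d : Fin (m+1)) :
    |pd d (DD δ T i.castSucc j.castSucc (Fin.last m)) y| ≤ 20 * M := by
  have e1 : DD δ T i.castSucc j.castSucc (Fin.last m) = fun y => wt δ y * pd (Fin.last m) (T i.castSucc j.castSucc) y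
      + wg δ i.castSucc y * T j.castSucc (Fin.last m) y + wg δ j.castSucc y * T i.castSucc (Fin.last m) y :=
    funext (DD_tan δ T i j)
  have dw : DifferentiableAt ℝ (wt (m := m) δ) y := cd_diff (cd_wt δ) y
  have dg : ∀ a, DifferentiableAt ℝ (wg (m := m) δ a) y := fun a => cd_diff (cd_wg δ a) y
  have dT : ∀ a b, DifferentiableAt ℝ (T a b) y := fun a b => cd_diff (hA.cd a b) y
  have dP : ∀ a b c, DifferentiableAt ℝ (pd c (T a b)) y := fun a b c => cd_diff (contDiff_pd (hA.cd a b) c) y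
  have d1 : DifferentiableAt ℝ (fun y => wt δ y * pd (Fin.last m) (T i.castSucc j.castSucc) y) y := dw.mul (dP _ _ _)
  have d2 : DifferentiableAt ℝ (fun y => wg δ i.castSucc y * T j.castSucc (Fin.last m) y) y := (dg _).mul (dT _ _)
  have d3 : DifferentiableAt ℝ (fun y => wg δ j.castSucc y * T i.castSucc (Fin.last m) y) y := (dg _).mul (dT _ _)
  have d4 : DifferentiableAt ℝ (fun y => wt δ y * pd (Fin.last m) (T i.castSucc j.castSucc) y
    + wg δ i.castSucc y * T j.castSucc (Fin.last m) y) y := d1.add d2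
  rw [e1, pd_add d4 d3, pd_add d1 d2, pd_mul dw (dP _ _ _), pd_mul (dg _) (dT _ _),
    pd_mul (dg _) (dT _ _), pd_wt, pd_wg, pd_wg]
  have W : |wt δ y| ≤ 4 := by
    rw [abs_of_nonneg (by have := wt_lower hδ hy; linarith)]; exact wt_upper hδ hδ' hy
  have k2 : ∀ a b : Fin (m+1), |2 * (kd a b : ℝ)| ≤ 2 := fun a b => by
    have := abs_mul_le (a := 2) (A := 2) (by norm_num) (kd_abs_le a b); simpa using this
  have t1 := abs_mul_le (wg_bound hδ hδ' hy d) (hA.b1 y hy i.castSucc j.castSucc (Fin.last m))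
  have t2 := abs_mul_le W (hA.b2 y hy i.castSucc j.castSucc (Fin.last m) d)
  have t3 := abs_mul_le (k2 d i.castSucc) (hA.b0 y hy j.castSucc (Fin.last m))
  have t4 := abs_mul_le (wg_bound hδ hδ' hy i.castSucc) (hA.b1 y hy j.castSucc (Fin.last m) d)
  have t5 := abs_mul_le (k2 d j.castSucc) (hA.b0 y hy i.castSucc (Fin.last m))
  have t6 := abs_mul_le (wg_bound hδ hδ' hy j.castSucc) (hA.b1 y hy i.castSucc (Fin.last m) d)
  rw [abs_le] at *
  constructor <;> linarith [t1.1, t1.2, t2.1, t2.2, t3.1, t3.2, t4.1, t4.2, t5.1, t5.2, t6.1, t6.2]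

theorem eval_po (e : ι → MvPolynomial (Fin (m+1)) ℝ) (h : Fin (m+1) → Fin (m+1) → ι → ℝ)
    (a b : Fin (m+1)) (y : Fin (m+1) → ℝ) :
    MvPolynomial.eval y (po e h a b) = ∑ i, h a b i * MvPolynomial.eval y (e i) := by
  simp [po]

theorem eval_pd_po (e : ι → MvPolynomial (Fin (m+1)) ℝ) (h : Fin (m+1) → Fin (m+1) → ι → ℝ)
    (a b c : Fin (m+1)) (y : Fin (m+1) → ℝ) :
    MvPolynomial.eval y (MvPolynomial.pderiv c (po e h a b))
      = ∑ i, h a b i * MvPolynomial.eval y (MvPolynomial.pderiv c (e i)) := by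
  simp only [po, map_sum, MvPolynomial.pderiv_C_mul, map_mul, MvPolynomial.eval_C]

theorem eval_pd2_po (e : ι → MvPolynomial (Fin (m+1)) ℝ) (h : Fin (m+1) → Fin (m+1) → ι → ℝ)
    (a b c d : Fin (m+1)) (y : Fin (m+1) → ℝ) :
    MvPolynomial.eval y (MvPolynomial.pderiv c (MvPolynomial.pderiv d (po e h a b)))
      = ∑ i, h a b i * MvPolynomial.eval y (MvPolynomial.pderiv c (MvPolynomial.pderiv d (e i))) := by
  simp only [po, map_sum, MvPolynomial.pderiv_C_mul, map_mul, MvPolynomial.eval_C]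

theorem face_case {e : ι → MvPolynomial (Fin (m+1)) ℝ} (hm : 3 ≤ m) {M : ℝ} (hM : 0 < M) {g : ℝ} (hg : 0 < g)
    {x0 : Fin (m+1) → ℝ} (hx0 : lo m ≤ x0) (hx0' : ∀ a, x0 a + tau m / 2 ≤ hi m a) (hl : x0 (Fin.last m) = 0)
    (i0 j0 : Fin m) : ∃ c > 0, ∀ h δ T, Con e h → 0 ≤ δ → δ ≤ 1 → Adm e M h T →
      2 * g ≤ |MvPolynomial.eval x0 (MvPolynomial.pderiv (Fin.last m) (po e h i0.castSucc j0.castSucc))| →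
      c ≤ ∫ y in KK m, sqD δ T y := by
  set t : ℝ := min (tau m / 2) ((g / 4) / 2 / ((m + 1 : ℕ) * (20 * M))) with ht
  have htp : 0 < t := lt_min (by have := tau_pos (m := m); linarith) (by positivity)
  refine ⟨t ^ (m+1) * (g / 4 / 2) ^ 2, by positivity, fun h δ T hC hδ hδ' hA hbig => ?_⟩
  have hK : x0 ∈ KK m := ⟨hx0, fun a => by have := hx0' a; have := tau_pos (m := m); linarith⟩
  obtain ⟨κ, hκ⟩ := hA.bd x0 hl
  have ex : ∃ i j : Fin m, g ≤ |pd (Fin.last m) (T i.castSucc j.castSucc) x0| := by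
    by_contra hcon
    push Not at hcon
    have htr : ∑ i : Fin m, pd (Fin.last m) (T i.castSucc i.castSucc) x0 = m * κ := by
      simp only [hκ, Finset.sum_add_distrib, kd_self, mul_one, Finset.sum_const, Finset.card_univ,
        Fintype.card_fin, nsmul_eq_mul]
      have : ∑ i : Fin m, MvPolynomial.eval x0 (MvPolynomial.pderiv (Fin.last m) (po e h i.castSucc i.castSucc)) = 0 := by
        simp only [eval_pd_po]
        rw [Finset.sum_comm]
        refine Finset.sum_eq_zero fun k _ => ?_
        rw [← Finset.sum_mul]
        have := hC.tr k
        rw [Fin.sum_univ_castSucc, hC.nn] at this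
        simp only [Pi.zero_apply, add_zero] at this
        rw [this, zero_mul]
      rw [this, zero_add]
    have h1 : |(m:ℝ) * κ| ≤ m * g := by
      rw [← htr]
      refine (Finset.abs_sum_le_sum_abs _ _).trans ?_
      refine (Finset.sum_le_card_nsmul _ _ _ fun i _ => (hcon i i).le).trans ?_
      simp
    have hm' : (0:ℝ) < m := by have : 0 < m := by omega
                               exact_mod_cast this
    rw [abs_mul, abs_of_pos hm'] at h1
    have h2 : |κ| ≤ g := le_of_mul_le_mul_left h1 hm'
    have h3 := hcon i0 j0
    rw [hκ] at h3
    have h4 := abs_mul_le h2 (kd_abs_le i0 j0)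
    rw [mul_one] at h4
    have h5 := abs_sub_abs_le_abs_sub (MvPolynomial.eval x0 (MvPolynomial.pderiv (Fin.last m) (po e h i0.castSucc j0.castSucc))) (-(κ * kd i0 j0))
    rw [sub_neg_eq_add, abs_neg] at h5
    linarith
  obtain ⟨i, j, hij⟩ := ex
  have hf : g / 4 ≤ |DD δ T i.castSucc j.castSucc (Fin.last m) x0| := by
    rw [DD_tan, hA.bn i x0 hl, hA.bn j x0 hl, mul_zero, mul_zero, add_zero, add_zero, abs_mul]
    have h1 := wt_lower hδ hK
    rw [abs_of_nonneg (by linarith : 0 ≤ wt δ x0)]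
    nlinarith [abs_nonneg (pd (Fin.last m) (T i.castSucc j.castSucc) x0)]
  have key := face_est (lo := lo m) (hi := hi m) (x0 := x0) (cd_DD δ hA.cd i.castSucc j.castSucc (Fin.last m)) (L := 20 * M) (g := g / 4) (t := t)
    (by positivity) htp.le hx0 (fun a => (by have := hx0' a; have := min_le_left (tau m / 2) ((g / 4) / 2 / ((m + 1 : ℕ) * (20 * M))); linarith))
    (fun x hx a => pd_DD_tan hA hδ hδ' i j hx a) (by positivity) hf (by
      have := min_le_right (tau m / 2) ((g / 4) / 2 / ((m + 1 : ℕ) * (20 * M)))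
      rw [← ht, le_div_iff₀ (by positivity)] at this
      linarith)
  refine key.trans ?_
  exact setIntegral_mono_on ((cd_DD δ hA.cd i.castSucc j.castSucc (Fin.last m)).continuous.pow 2 |>.continuousOn.integrableOn_compact isCompact_Icc)
    ((cont_sqD δ hA.cd).continuousOn.integrableOn_compact isCompact_Icc) measurableSet_Icc fun x _ => sqD_le δ T _ _ _ x

end MQ

open MeasureTheory
namespace MQ

variable {m : ℕ} {ι : Type} [Fintype ι]

theorem isClosed_con (e : ι → MvPolynomial (Fin (m+1)) ℝ) : IsClosed {h | Con e h} := by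
  have : {h | Con e h} = {h : Fin (m+1) → Fin (m+1) → ι → ℝ | ∀ a b, h a b = h b a}
      ∩ {h | ∀ i, ∑ a, h a a i = 0} ∩ {h | ∀ a, h a (Fin.last m) = 0}
      ∩ {h | ∀ (i : Fin m) (y : Fin m → ℝ), ∑ j : Fin m, y j *
          ∑ k, h i.castSucc j.castSucc k * MvPolynomial.eval (Fin.snoc (α := fun _ => ℝ) y 0) (e k) = 0} := by
    ext h
    constructor
    · intro H
      exact ⟨⟨⟨H.sy, H.tr⟩, H.nn⟩, fun i y => by have := H.ga i y; simpa only [eval_po] using this⟩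
    · rintro ⟨⟨⟨h1, h2⟩, h3⟩, h4⟩
      exact ⟨h1, h2, h3, fun i y => by have := h4 i y; simpa only [eval_po] using this⟩
  rw [this]
  refine ((IsClosed.inter ?_ ?_).inter ?_).inter ?_
  · simp only [Set.setOf_forall]
    exact isClosed_iInter fun a => isClosed_iInter fun b => isClosed_eq (by fun_prop) (by fun_prop)
  · simp only [Set.setOf_forall]
    exact isClosed_iInter fun a => isClosed_eq (by fun_prop) (by fun_prop)
  · simp only [Set.setOf_forall]
    exact isClosed_iInter fun a => isClosed_eq (by fun_prop) (by fun_prop)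
  · simp only [Set.setOf_forall]
    exact isClosed_iInter fun a => isClosed_iInter fun b => isClosed_eq (by fun_prop) (by fun_prop)

/-- second order expression -/
noncomputable def WW (e : ι → MvPolynomial (Fin (m+1)) ℝ)
    (C : Fin (m+1) → Fin (m+1) → Fin (m+1) → Fin (m+1) → ℝ)
    (h : Fin (m+1) → Fin (m+1) → ι → ℝ) : MvPolynomial (Fin (m+1)) ℝ :=
  ∑ c, ∑ a, ∑ d, ∑ b, MvPolynomial.C (C c a d b) * MvPolynomial.pderiv c (MvPolynomial.pderiv d (po e h a b))

theorem eval_WW (e : ι → MvPolynomial (Fin (m+1)) ℝ)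
    (C : Fin (m+1) → Fin (m+1) → Fin (m+1) → Fin (m+1) → ℝ)
    (h : Fin (m+1) → Fin (m+1) → ι → ℝ) (y : Fin (m+1) → ℝ) :
    MvPolynomial.eval y (WW e C h) = ∑ c, ∑ a, ∑ d, ∑ b, C c a d b *
      MvPolynomial.eval y (MvPolynomial.pderiv c (MvPolynomial.pderiv d (po e h a b))) := by
  simp only [WW, map_sum, map_mul, MvPolynomial.eval_C]

theorem cont_wt {X : Type*} [TopologicalSpace X] {f : X → ℝ} {g : X → Fin (m+1) → ℝ} (hf : Continuous f)
    (hg : Continuous g) : Continuous (fun p => wt (f p) (g p)) := by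
  unfold wt; fun_prop

theorem cont_ev {X : Type*} [TopologicalSpace X] {g : X → Fin (m+1) → ℝ} (hg : Continuous g)
    (q : MvPolynomial (Fin (m+1)) ℝ) : Continuous (fun p => MvPolynomial.eval (g p) q) :=
  (MvPolynomial.continuous_eval q).comp hg

theorem cont_coe {X : Type*} [TopologicalSpace X] {f : X → Fin (m+1) → Fin (m+1) → ι → ℝ} (hf : Continuous f)
    (a b : Fin (m+1)) (i : ι) : Continuous (fun p => f p a b i) := by fun_prop

theorem cont_WW (e : ι → MvPolynomial (Fin (m+1)) ℝ)
    (C : Fin (m+1) → Fin (m+1) → Fin (m+1) → Fin (m+1) → ℝ) {X : Type*} [TopologicalSpace X]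
    {f : X → Fin (m+1) → Fin (m+1) → ι → ℝ} (hf : Continuous f) {g : X → Fin (m+1) → ℝ} (hg : Continuous g) :
    Continuous (fun p : X => MvPolynomial.eval (g p) (WW e C (f p))) := by
  simp only [eval_WW, eval_pd2_po]
  exact continuous_finsetSum _ fun c _ => continuous_finsetSum _ fun a _ => continuous_finsetSum _ fun d _ =>
    continuous_finsetSum _ fun b _ => continuous_const.mul (continuous_finsetSum _ fun i _ =>
      (cont_coe hf a b i).mul (cont_ev hg _))

theorem cont_pdpo (e : ι → MvPolynomial (Fin (m+1)) ℝ) {X : Type*} [TopologicalSpace X]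
    {f : X → Fin (m+1) → Fin (m+1) → ι → ℝ} (hf : Continuous f) (a b c : Fin (m+1)) (x0 : Fin (m+1) → ℝ) :
    Continuous (fun p : X => |MvPolynomial.eval x0 (MvPolynomial.pderiv c (po e (f p) a b))|) := by
  simp only [eval_pd_po]
  exact (continuous_finsetSum _ fun i _ => (cont_coe hf a b i).mul continuous_const).abs

/-- open box -/
def OB (m : ℕ) : Set (Fin (m+1) → ℝ) := Set.univ.pi fun a => Set.Ioo (lo m a) (hi m a)

theorem isOpen_OB : IsOpen (OB m) := isOpen_set_pi Set.finite_univ fun _ _ => isOpen_Ioo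

theorem OB_sub : OB m ⊆ KK m := fun y hy => ⟨fun a => (hy a trivial).1.le, fun a => (hy a trivial).2.le⟩

theorem lo_lt_hi (a : Fin (m+1)) : lo m a < hi m a := by
  unfold hi; have := tau_pos (m := m); linarith

theorem tensor_case {e : ι → MvPolynomial (Fin (m+1)) ℝ} {M : ℝ}
    {C : Fin (m+1) → Fin (m+1) → Fin (m+1) → Fin (m+1) → ℝ} (hC : IsW C)
    {ψ : (Fin (m+1) → ℝ) → ℝ} (hψ : ContDiff ℝ (⊤:ℕ∞) ψ) (hc : HasCompactSupport ψ)
    (hsu : tsupport ψ ⊆ KK m) {g : ℝ} (hg : 0 < g) :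
    ∃ c > 0, ∀ h δ T, Adm e M h T →
      g ≤ |∫ y in KK m, ψ y * (wt δ y * MvPolynomial.eval y (WW e C h))| →
      c ≤ ∫ y in KK m, sqD δ T y := by
  obtain ⟨A, hA, H⟩ := int_est hC isCompact_Icc hψ hc hsu
  refine ⟨g ^ 2 / (A + 1), by positivity, fun h δ T hT hh => ?_⟩
  have h1 := H δ T hT.cd hT.sy
  have h0 : 0 ≤ ∫ y in KK m, sqD δ T y := integral_nonneg fun y => by
    unfold sqD; positivity
  have e1 : (∫ y in KK m, ψ y * (wt δ y * MvPolynomial.eval y (WW e C h)))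
    = ∫ x in KK m, ψ x * (wt δ x * ∑ c, ∑ a, ∑ d, ∑ b, C c a d b * pd c (pd d (T a b)) x) := by
    congr 1; ext x; rw [eval_WW, ← hT.W C hC]
  rw [e1] at hh
  have h2 := pow_le_pow_left₀ hg.le hh 2
  rw [sq_abs] at h2
  rw [div_le_iff₀ (by positivity)]
  have h3 : g^2 ≤ A * ∫ y in KK m, sqD δ T y := h2.trans h1
  nlinarith

theorem po_zero (hm : 3 ≤ m) {e : ι → MvPolynomial (Fin (m+1)) ℝ} (he : ∀ i, MvPolynomial.coeff 0 (e i) = 0)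
    {h : Fin (m+1) → Fin (m+1) → ι → ℝ} (hcon : Con e h) {δ : ℝ} (hδ : 0 ≤ δ)
    (hA : ∀ (i j : Fin m) (x0 : Fin (m+1) → ℝ), lo m ≤ x0 → (∀ a, x0 a + tau m / 2 ≤ hi m a) → x0 (Fin.last m) = 0 →
      MvPolynomial.eval x0 (MvPolynomial.pderiv (Fin.last m) (po e h i.castSucc j.castSucc)) = 0)
    (hB : ∀ C, IsW C → ∀ ψ : (Fin (m+1) → ℝ) → ℝ, ContDiff ℝ (⊤:ℕ∞) ψ → HasCompactSupport ψ → tsupport ψ ⊆ OB m →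
      ∫ y in KK m, ψ y * (wt δ y * MvPolynomial.eval y (WW e C h)) = 0) : ∀ a b, po e h a b = 0 := by
  refine alg hm (po e h) ?_ ?_ ?_ ?_ ?_ hcon.ga ?_
  · intro a b; simp only [po]; rw [hcon.sy]
  · simp only [po]; rw [Finset.sum_comm]
    refine Finset.sum_eq_zero fun i _ => ?_
    rw [← Finset.sum_mul, ← map_sum, hcon.tr]; simp
  · intro a; simp [po, hcon.nn]
  · intro a b; simp [po, MvPolynomial.coeff_sum, he]
  · intro C hC y
    rw [← eval_WW]
    suffices WW e C h = 0 by rw [this]; simp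
    have hcont : Continuous (fun y => wt δ y * MvPolynomial.eval y (WW e C h)) :=
      (cd_wt δ).continuous.mul (MvPolynomial.continuous_eval _)
    have h1 := IsOpen.ae_eq_zero_of_integral_contDiff_smul_eq_zero (μ := volume) (isOpen_OB (m := m))
      (f := fun y => wt δ y * MvPolynomial.eval y (WW e C h))
      (hcont.locallyIntegrable.locallyIntegrableOn _) (fun ψ h1 h2 h3 => by
        have := hB C hC ψ h1 h2 h3
        rw [setIntegral_eq_integral_of_forall_compl_eq_zero] at this
        · simpa using this
        · intro x hx
          have : ψ x = 0 := by
            by_contra hne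
            exact hx (OB_sub (h3 (subset_tsupport _ hne)))
          rw [this, zero_mul])
    have h2 : (fun y => wt δ y * MvPolynomial.eval y (WW e C h)) =ᵐ[volume.restrict (OB m)] (fun _ => 0) :=
      (ae_restrict_iff' isOpen_OB.measurableSet).2 h1
    have h3 := Measure.eqOn_open_of_ae_eq h2 isOpen_OB hcont.continuousOn continuousOn_const
    refine MvPolynomial.funext_set (fun a => Set.Ioo (lo m a) (hi m a)) (fun a => Set.Ioo_infinite (lo_lt_hi a)) ?_
    intro x hx
    have h4 := h3 hx
    have h5 := wt_lower hδ (OB_sub hx)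
    rw [map_zero]
    exact (mul_eq_zero.1 h4).resolve_left (by linarith)
  · intro i j
    have ht := tau_pos (m := m)
    refine MvPolynomial.funext_set (fun a : Fin m => Set.Icc (lo m a.castSucc) (lo m a.castSucc + tau m / 2))
      (fun a => Set.Icc_infinite (by linarith)) ?_
    intro y hy
    rw [eval_rst, map_zero]
    apply hA
    · intro a
      refine Fin.lastCases ?_ (fun b => ?_) a
      · rw [lo_last hm]; simp
      · simpa using (hy b trivial).1
    · intro a
      refine Fin.lastCases ?_ (fun b => ?_) a
      · simp [hi, lo_last hm]; linarith
      · simp only [Fin.snoc_castSucc, hi]; linarith [(hy b trivial).2]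
    · simp

theorem cont_G (e : ι → MvPolynomial (Fin (m+1)) ℝ)
    (C : Fin (m+1) → Fin (m+1) → Fin (m+1) → Fin (m+1) → ℝ) {ψ : (Fin (m+1) → ℝ) → ℝ} (hψ : Continuous ψ) :
    Continuous (fun z : (Fin (m+1) → Fin (m+1) → ι → ℝ) × ℝ =>
      ∫ y in KK m, ψ y * (wt z.2 y * MvPolynomial.eval y (WW e C z.1))) := by
  have h1 : Continuous (fun p : ((Fin (m+1) → Fin (m+1) → ι → ℝ) × ℝ) × (Fin (m+1) → ℝ) => wt p.1.2 p.2) :=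
    cont_wt (f := fun p : ((Fin (m+1) → Fin (m+1) → ι → ℝ) × ℝ) × (Fin (m+1) → ℝ) => p.1.2) (continuous_snd.comp continuous_fst) continuous_snd
  have h2 : Continuous (fun p : ((Fin (m+1) → Fin (m+1) → ι → ℝ) × ℝ) × (Fin (m+1) → ℝ) =>
      MvPolynomial.eval p.2 (WW e C p.1.1)) :=
    cont_WW e C (f := fun p : ((Fin (m+1) → Fin (m+1) → ι → ℝ) × ℝ) × (Fin (m+1) → ℝ) => p.1.1) (continuous_fst.comp continuous_fst) continuous_snd
  have h3 : Continuous (fun p : ((Fin (m+1) → Fin (m+1) → ι → ℝ) × ℝ) × (Fin (m+1) → ℝ) =>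
      ψ p.2 * (wt p.1.2 p.2 * MvPolynomial.eval p.2 (WW e C p.1.1))) :=
    (hψ.comp continuous_snd).mul (h1.mul h2)
  exact continuous_parametric_integral_of_continuous (f := fun (z : (Fin (m+1) → Fin (m+1) → ι → ℝ) × ℝ) y => ψ y * (wt z.2 y * MvPolynomial.eval y (WW e C z.1))) h3 isCompact_Icc

set_option maxHeartbeats 800000 in
theorem P1 (hm : 3 ≤ m) {e : ι → MvPolynomial (Fin (m+1)) ℝ} (he : ∀ i, MvPolynomial.coeff 0 (e i) = 0)
    (hli : ∀ c : ι → ℝ, ∑ i, MvPolynomial.C (c i) * e i = 0 → c = 0) {M : ℝ} (hM : 0 < M) :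
    ∃ c > 0, ∀ h δ T, ‖h‖ = 1 → Con e h → 0 ≤ δ → δ ≤ 1 → Adm e M h T → c ≤ ∫ y in KK m, sqD δ T y := by
  set Z : Set ((Fin (m+1) → Fin (m+1) → ι → ℝ) × ℝ) :=
    (Metric.sphere 0 1 ∩ {h | Con e h}) ×ˢ Set.Icc (0:ℝ) 1 with hZ
  have hZc : IsCompact Z := ((isCompact_sphere _ _).inter_right (isClosed_con e)).prod isCompact_Icc
  suffices ∃ c > 0, ∀ z ∈ Z, Con e z.1 → 0 ≤ z.2 → z.2 ≤ 1 → ∀ T, Adm e M z.1 T → c ≤ ∫ y in KK m, sqD z.2 T y by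
    obtain ⟨c, hc, H⟩ := this
    exact ⟨c, hc, fun h δ T h1 h2 h3 h4 h5 => H (h, δ) ⟨⟨by simpa using h1, h2⟩, h3, h4⟩ h2 h3 h4 T h5⟩
  refine hZc.induction_on (p := fun s => ∃ c > 0, ∀ z ∈ s, Con e z.1 → 0 ≤ z.2 → z.2 ≤ 1 → ∀ T, Adm e M z.1 T → c ≤ ∫ y in KK m, sqD z.2 T y)
    ⟨1, one_pos, fun z hz => absurd hz (Set.notMem_empty z)⟩ ?_ ?_ ?_
  · rintro s t hst ⟨c, hc, H⟩
    exact ⟨c, hc, fun z hz => H z (hst hz)⟩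
  · rintro s t ⟨c, hc, H⟩ ⟨c', hc', H'⟩
    refine ⟨min c c', lt_min hc hc', fun z hz h1 h2 h3 T hT => ?_⟩
    rcases hz with hz | hz
    · exact (min_le_left _ _).trans (H z hz h1 h2 h3 T hT)
    · exact (min_le_right _ _).trans (H' z hz h1 h2 h3 T hT)
  · rintro ⟨h0, δ0⟩ ⟨⟨hn0, hc0⟩, hδ0, hδ1⟩
    by_cases hA : ∀ (i j : Fin m) (x0 : Fin (m+1) → ℝ), lo m ≤ x0 → (∀ a, x0 a + tau m / 2 ≤ hi m a) → x0 (Fin.last m) = 0 →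
      MvPolynomial.eval x0 (MvPolynomial.pderiv (Fin.last m) (po e h0 i.castSucc j.castSucc)) = 0
    · by_cases hB : ∀ C, IsW C → ∀ ψ : (Fin (m+1) → ℝ) → ℝ, ContDiff ℝ (⊤:ℕ∞) ψ → HasCompactSupport ψ → tsupport ψ ⊆ OB m →
        ∫ y in KK m, ψ y * (wt δ0 y * MvPolynomial.eval y (WW e C h0)) = 0
      · exfalso
        have := po_zero hm he hc0 hδ0 hA hB
        have h00 : h0 = 0 := by
          funext a b; exact hli _ (this a b)
        rw [h00] at hn0; simp at hn0
      · push Not at hB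
        obtain ⟨C, hC, ψ, h1, h2, h3, h4⟩ := hB
        have hp := abs_pos.2 h4
        obtain ⟨c, hc, H⟩ := tensor_case (e := e) (M := M) hC h1 h2 (h3.trans OB_sub) (half_pos hp)
        have hcont := cont_G e C h1.continuous
        have hev := (isOpen_lt continuous_const hcont.abs).mem_nhds (x := (h0, δ0)) (half_lt_self hp)
        exact ⟨_, mem_nhdsWithin_of_mem_nhds hev, c, hc, fun z hz _ _ _ T hT => H z.1 z.2 T hT (le_of_lt hz)⟩
    · push Not at hA
      obtain ⟨i, j, x0, h1, h2, h3, h4⟩ := hA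
      have hp := abs_pos.2 h4
      obtain ⟨c, hc, H⟩ := face_case (e := e) hm hM (g := |MvPolynomial.eval x0 (MvPolynomial.pderiv (Fin.last m) (po e h0 i.castSucc j.castSucc))| / 4) (by positivity) h1 h2 h3 i j
      have hcont := cont_pdpo e (continuous_fst (X := Fin (m+1) → Fin (m+1) → ι → ℝ) (Y := ℝ)) i.castSucc j.castSucc (Fin.last m) x0
      have hev := (isOpen_lt continuous_const hcont).mem_nhds (x := (h0, δ0)) (half_lt_self hp)
      refine ⟨_, mem_nhdsWithin_of_mem_nhds hev, c, hc, fun z hz h5 h6 h7 T hT => H z.1 z.2 T h5 h6 h7 hT ?_⟩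
      have := le_of_lt (Set.mem_setOf_eq ▸ hz)
      linarith
end MQ

open MeasureTheory
namespace MQ

variable {m : ℕ} {ι : Type} [Fintype ι]

theorem pd_scale {n : ℕ} (a : Fin n) (t r : ℝ) {f : (Fin n → ℝ) → ℝ} (hf : Differentiable ℝ f) (y : Fin n → ℝ) :
    pd a (fun y => t * f (r • y)) y = (t * r) * pd a f (r • y) := by
  rw [pd_cmul t (f := fun y => f (r • y)) ((hf (r • y)).comp y (by fun_prop))]
  unfold pd
  have := fderiv_comp_smul (𝕜 := ℝ) (f := f) (x := y) r
  rw [this]; simp [mul_assoc]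

/-- Euclidean length -/
noncomputable def nrm (x : Fin (m+1) → ℝ) : ℝ := Real.sqrt (∑ a, x a ^ 2)

theorem nrm_nonneg (x : Fin (m+1) → ℝ) : 0 ≤ nrm x := Real.sqrt_nonneg _

theorem nrm_smul {r : ℝ} (hr : 0 ≤ r) (x : Fin (m+1) → ℝ) : nrm (r • x) = r * nrm x := by
  unfold nrm
  simp only [Pi.smul_apply, smul_eq_mul, mul_pow]
  rw [← Finset.mul_sum, Real.sqrt_mul (by positivity), Real.sqrt_sq hr]

/-- conformal Killing operator -/
noncomputable def SS (V : Fin (m+1) → (Fin (m+1) → ℝ) → ℝ) (a b : Fin (m+1)) (x : Fin (m+1) → ℝ) : ℝ :=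
  pd a (V b) x + pd b (V a) x - 2 / ((m:ℝ)+1) * (∑ c, pd c (V c) x) * kd a b

/-- T = H - S -/
noncomputable def TT (e : ι → MvPolynomial (Fin (m+1)) ℝ) (h : Fin (m+1) → Fin (m+1) → ι → ℝ)
    (V : Fin (m+1) → (Fin (m+1) → ℝ) → ℝ) (a b : Fin (m+1)) (x : Fin (m+1) → ℝ) : ℝ :=
  MvPolynomial.eval x (po e h a b) - SS V a b x

/-- bound -/
noncomputable def BB (dg : ι → ℕ) (δ : ℝ) (h : Fin (m+1) → Fin (m+1) → ι → ℝ) (k : ℤ) (x : Fin (m+1) → ℝ) : ℝ :=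
  ∑ a, ∑ b, ∑ i, |h a b i| * (δ + nrm x) ^ ((dg i : ℤ) + 1 - k)

/-- the hypotheses -/
structure Data (e : ι → MvPolynomial (Fin (m+1)) ℝ) (dg : ι → ℕ) (C₀ : ℝ) (δ : ℝ)
    (h : Fin (m+1) → Fin (m+1) → ι → ℝ) (V : Fin (m+1) → (Fin (m+1) → ℝ) → ℝ) : Prop where
  con : Con e h
  cd : ∀ a, ContDiff ℝ (⊤:ℕ∞) (V a)
  v0 : ∀ y : Fin (m+1) → ℝ, y (Fin.last m) = 0 → V (Fin.last m) y = 0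
  v1 : ∀ y : Fin (m+1) → ℝ, y (Fin.last m) = 0 → ∀ i : Fin m, pd (Fin.last m) (V i.castSucc) y = 0
  kp : ∀ y : Fin (m+1) → ℝ, y (Fin.last m) = 0 → ∃ κ : ℝ, ∀ i j : Fin m,
    pd (Fin.last m) (SS V i.castSucc j.castSucc) y = κ * kd i j
  b1 : ∀ y : Fin (m+1) → ℝ, 0 ≤ y (Fin.last m) → ∀ a b, |pd a (V b) y| ≤ C₀ * BB dg δ h 1 y
  b2 : ∀ y : Fin (m+1) → ℝ, 0 ≤ y (Fin.last m) → ∀ a b c, |pd c (pd a (V b)) y| ≤ C₀ * BB dg δ h 2 y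
  b3 : ∀ y : Fin (m+1) → ℝ, 0 ≤ y (Fin.last m) → ∀ a b c d, |pd d (pd c (pd a (V b))) y| ≤ C₀ * BB dg δ h 3 y

theorem cd_SS {V : Fin (m+1) → (Fin (m+1) → ℝ) → ℝ} (hV : ∀ a, ContDiff ℝ (⊤:ℕ∞) (V a)) (a b : Fin (m+1)) :
    ContDiff ℝ (⊤:ℕ∞) (SS V a b) := by
  unfold SS
  exact ((contDiff_pd (hV b) a).add (contDiff_pd (hV a) b)).sub
    ((contDiff_const.mul (ContDiff.sum fun c _ => contDiff_pd (hV c) c)).mul contDiff_const)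

theorem cd_TT (e : ι → MvPolynomial (Fin (m+1)) ℝ) (h : Fin (m+1) → Fin (m+1) → ι → ℝ)
    {V : Fin (m+1) → (Fin (m+1) → ℝ) → ℝ} (hV : ∀ a, ContDiff ℝ (⊤:ℕ∞) (V a)) (a b : Fin (m+1)) :
    ContDiff ℝ (⊤:ℕ∞) (TT e h V a b) := by
  unfold TT
  exact (cd_eval _).sub (cd_SS hV a b)

theorem pd_SS {V : Fin (m+1) → (Fin (m+1) → ℝ) → ℝ} (hV : ∀ a, ContDiff ℝ (⊤:ℕ∞) (V a)) (a b c : Fin (m+1))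
    (x : Fin (m+1) → ℝ) : pd c (SS V a b) x = SS (fun b x => pd c (V b) x) a b x := by
  have cV : ∀ a b, DifferentiableAt ℝ (pd a (V b)) x := fun a b => cd_diff (contDiff_pd (hV b) a) x
  have e1 : SS V a b = fun x => (pd a (V b) x + pd b (V a) x) - (2 / ((m:ℝ)+1) * kd a b) * (∑ c, pd c (V c) x) := by
    funext x; unfold SS; ring
  have d1 : DifferentiableAt ℝ (fun x => pd a (V b) x + pd b (V a) x) x := (cV _ _).add (cV _ _)
  have d2 : DifferentiableAt ℝ (fun x => ∑ c, pd c (V c) x) x := by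
    have : ∀ c, DifferentiableAt ℝ (fun x => pd c (V c) x) x := fun c => cV c c
    fun_prop
  have d3 : DifferentiableAt ℝ (fun x => (2 / ((m:ℝ)+1) * kd a b) * ∑ c, pd c (V c) x) x := by fun_prop
  rw [e1, pd_sub d1 d3, pd_add (cV _ _) (cV _ _), pd_cmul _ d2, pd_sum (fun i => cV i i)]
  unfold SS
  have e2 : ∀ a b, pd c (pd a (V b)) x = pd a (fun x => pd c (V b) x) x := fun a b => pd_comm (hV b) c a x
  simp only [e2]; ring

theorem SS_bound {V : Fin (m+1) → (Fin (m+1) → ℝ) → ℝ} {x : Fin (m+1) → ℝ} {B : ℝ} 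
    (hB : ∀ a b, |pd a (V b) x| ≤ B) (a b : Fin (m+1)) : |SS V a b x| ≤ 4 * B := by
  unfold SS
  have h1 := hB a b
  have h2 := hB b a
  have h3 : |∑ c, pd c (V c) x| ≤ ((m:ℝ)+1) * B := by
    refine (Finset.abs_sum_le_sum_abs _ _).trans ((Finset.sum_le_card_nsmul _ _ _ fun i _ => hB i i).trans ?_)
    simp
  have hp : (0:ℝ) < (m:ℝ)+1 := by positivity
  have h4 : |2 / ((m:ℝ)+1) * ∑ c, pd c (V c) x| ≤ 2 * B := by
    refine (abs_mul_le (A := 2 / ((m:ℝ)+1)) (by rw [abs_of_pos (by positivity)]) h3).trans ?_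
    apply le_of_eq; field_simp
  have h5 := abs_mul_le h4 (kd_abs_le a b)
  rw [abs_le] at *
  constructor <;> linarith [h1.1, h1.2, h2.1, h2.2, h5.1, h5.2]

theorem pd_TT (e : ι → MvPolynomial (Fin (m+1)) ℝ) (h : Fin (m+1) → Fin (m+1) → ι → ℝ)
    {V : Fin (m+1) → (Fin (m+1) → ℝ) → ℝ} (hV : ∀ a, ContDiff ℝ (⊤:ℕ∞) (V a)) (a b c : Fin (m+1)) :
    pd c (TT e h V a b) = fun x => MvPolynomial.eval x (MvPolynomial.pderiv c (po e h a b))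
      - SS (fun b x => pd c (V b) x) a b x := by
  funext x
  unfold TT
  rw [pd_sub (cd_diff (cd_eval _) x) (cd_diff (cd_SS hV a b) x), pd_eval, pd_SS hV]

theorem pd2_TT (e : ι → MvPolynomial (Fin (m+1)) ℝ) (h : Fin (m+1) → Fin (m+1) → ι → ℝ)
    {V : Fin (m+1) → (Fin (m+1) → ℝ) → ℝ} (hV : ∀ a, ContDiff ℝ (⊤:ℕ∞) (V a)) (a b c d : Fin (m+1)) :
    pd d (pd c (TT e h V a b)) = fun x => MvPolynomial.eval x (MvPolynomial.pderiv d (MvPolynomial.pderiv c (po e h a b)))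
      - SS (fun b x => pd d (pd c (V b)) x) a b x := by
  have hV' : ∀ b, ContDiff ℝ (⊤:ℕ∞) (fun x => pd c (V b) x) := fun b => contDiff_pd (hV b) c
  funext x
  rw [pd_TT e h hV, pd_sub (cd_diff (cd_eval _) x) (cd_diff (cd_SS hV' a b) x), pd_eval, pd_SS hV']

theorem zpow_le_two {q : ℝ} (h1 : 1/2 ≤ q) (h2 : q ≤ 2) {z : ℤ} {k : ℕ} (hz : |z| ≤ k) : q ^ z ≤ 2 ^ k := by
  have q0 : 0 < q := by linarith
  rcases le_total 0 z with h | h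
  · lift z to ℕ using h
    rw [zpow_natCast]
    refine (pow_le_pow_left₀ q0.le h2 z).trans (pow_le_pow_right₀ (by norm_num) ?_)
    have := (abs_le.1 hz).2; exact_mod_cast this
  · obtain ⟨w, rfl⟩ : ∃ w : ℕ, z = -w := ⟨z.natAbs, by omega⟩
    rw [zpow_neg, zpow_natCast, ← inv_pow]
    have : q⁻¹ ≤ 2 := by rw [inv_le_comm₀ q0 (by norm_num)]; linarith
    refine (pow_le_pow_left₀ (by positivity) this w).trans (pow_le_pow_right₀ (by norm_num) ?_)
    rw [abs_neg] at hz
    have := (abs_le.1 hz).2; exact_mod_cast this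

theorem entry_le (h : Fin (m+1) → Fin (m+1) → ι → ℝ) (a b : Fin (m+1)) (i : ι) : |h a b i| ≤ ‖h‖ :=
  (norm_le_pi_norm (h a b) i).trans ((norm_le_pi_norm (h a) b).trans (norm_le_pi_norm h a))

theorem nrm_KK {y : Fin (m+1) → ℝ} (hy : y ∈ KK m) : 1/2 ≤ nrm y ∧ nrm y < 1 := by
  have h1 := KK_lower hy
  have h2 := KK_upper hy
  unfold nrm
  constructor
  · apply Real.le_sqrt_of_sq_le; linarith
  · rw [Real.sqrt_lt' one_pos]; linarith

theorem BB_le (dg : ι → ℕ) {δ : ℝ} (hδ : 0 ≤ δ) (hδ' : δ ≤ 1) {h : Fin (m+1) → Fin (m+1) → ι → ℝ} (hh : ‖h‖ ≤ 1)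
    {k : ℤ} (hk : 1 ≤ k) (hk' : k ≤ 3) {y : Fin (m+1) → ℝ} (hy : y ∈ KK m) :
    BB dg δ h k y ≤ ∑ _a : Fin (m+1), ∑ _b : Fin (m+1), ∑ i, 2 ^ (dg i + 2) := by
  unfold BB
  refine Finset.sum_le_sum fun a _ => Finset.sum_le_sum fun b _ => Finset.sum_le_sum fun i _ => ?_
  have h1 := nrm_KK hy
  have h2 : (δ + nrm y) ^ ((dg i : ℤ) + 1 - k) ≤ 2 ^ (dg i + 2) := by
    apply zpow_le_two <;> try linarith [h1.1, h1.2]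
    rw [abs_le]; push_cast; constructor <;> omega
  have h3 := (entry_le h a b i).trans hh
  calc |h a b i| * (δ + nrm y) ^ ((dg i : ℤ) + 1 - k) ≤ 1 * 2 ^ (dg i + 2) :=
        mul_le_mul h3 h2 (zpow_nonneg (by linarith [h1.1]) _) zero_le_one
    _ = _ := one_mul _

theorem poly_bound (p : MvPolynomial (Fin (m+1)) ℝ) : ∃ B : ℝ, 0 ≤ B ∧ ∀ y ∈ KK m, |MvPolynomial.eval y p| ≤ B := by
  obtain ⟨B, hB⟩ := (isCompact_Icc (a := lo m) (b := hi m)).exists_bound_of_continuousOn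
    (f := fun y => MvPolynomial.eval y p) (MvPolynomial.continuous_eval p).continuousOn
  exact ⟨|B|, abs_nonneg _, fun y hy => (hB y hy).trans (le_abs_self _)⟩

theorem sum_bound {h : Fin (m+1) → Fin (m+1) → ι → ℝ} (hh : ‖h‖ ≤ 1) (a b : Fin (m+1)) {f B : ι → ℝ}
    (hf : ∀ i, |f i| ≤ B i) : |∑ i, h a b i * f i| ≤ ∑ i, B i := by
  refine (Finset.abs_sum_le_sum_abs _ _).trans (Finset.sum_le_sum fun i _ => ?_)
  have := abs_mul_le ((entry_le h a b i).trans hh) (hf i)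
  simpa using this

theorem exists_M (e : ι → MvPolynomial (Fin (m+1)) ℝ) (dg : ι → ℕ) {C₀ : ℝ} (hC₀ : 0 < C₀) :
    ∃ M > 0, ∀ δ h V, 0 ≤ δ → δ ≤ 1 → ‖h‖ ≤ 1 → Data e dg C₀ δ h V → Adm e M h (TT e h V) := by
  choose B0 hB0 hB0' using fun i => poly_bound (e i)
  choose B1 hB1 hB1' using fun i c => poly_bound (MvPolynomial.pderiv c (e i))
  choose B2 hB2 hB2' using fun i d c => poly_bound (MvPolynomial.pderiv d (MvPolynomial.pderiv c (e i)))
  set B : ι → ℝ := fun i => B0 i + ∑ c, B1 i c + ∑ d, ∑ c, B2 i d c with hB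
  set R : ℝ := ∑ _a : Fin (m+1), ∑ _b : Fin (m+1), ∑ i, 2 ^ (dg i + 2) with hR
  have hR0 : 0 ≤ R := by positivity
  have g0 : ∀ i, B0 i ≤ B i := fun i => by
    have := Finset.sum_nonneg fun c (_ : c ∈ Finset.univ) => hB1 i c
    have := Finset.sum_nonneg fun d (_ : d ∈ Finset.univ) => Finset.sum_nonneg fun c (_ : c ∈ Finset.univ) => hB2 i d c
    simp only [hB]; linarith
  have g1 : ∀ i c, B1 i c ≤ B i := fun i c => by
    have := Finset.single_le_sum (f := B1 i) (fun c _ => hB1 i c) (Finset.mem_univ c)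
    have := Finset.sum_nonneg fun d (_ : d ∈ Finset.univ) => Finset.sum_nonneg fun c (_ : c ∈ Finset.univ) => hB2 i d c
    have := hB0 i
    simp only [hB]; linarith
  have g2 : ∀ i d c, B2 i d c ≤ B i := fun i d c => by
    have := Finset.single_le_sum (f := B2 i d) (fun c _ => hB2 i d c) (Finset.mem_univ c)
    have := Finset.single_le_sum (f := fun d => ∑ c, B2 i d c) (fun d _ => Finset.sum_nonneg fun c _ => hB2 i d c) (Finset.mem_univ d)
    have := Finset.sum_nonneg fun c (_ : c ∈ Finset.univ) => hB1 i c
    have := hB0 i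
    simp only [hB] at *; linarith
  have hB' : 0 ≤ ∑ i, B i := Finset.sum_nonneg fun i _ => (hB0 i).trans (g0 i)
  refine ⟨∑ i, B i + 4 * (C₀ * R) + 1, by positivity, fun δ h V hδ hδ' hh D => ?_⟩
  have bb : ∀ {k : ℤ}, 1 ≤ k → k ≤ 3 → ∀ y ∈ KK m, C₀ * BB dg δ h k y ≤ C₀ * R := fun hk hk' y hy =>
    mul_le_mul_of_nonneg_left (BB_le dg hδ hδ' hh hk hk' hy) hC₀.le
  have abs_sub' : ∀ {u v A B : ℝ}, |u| ≤ A → |v| ≤ B → |u - v| ≤ A + B + 1 := fun {u v A B} h1 h2 => by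
    rw [abs_le] at *; constructor <;> linarith [h1.1, h1.2, h2.1, h2.2]
  refine ⟨cd_TT e h D.cd, ?_, ?_, ?_, ?_, ?_, ?_, ?_⟩
  · intro a b x
    simp only [TT, SS, po, D.con.sy a b, kd_comm a b]; ring
  · intro C hC y
    have h1 := weyl_S hC V D.cd (2 / ((m:ℝ)+1)) (SS V) (fun a b x => rfl) y
    rw [← sub_zero (∑ c, ∑ a, ∑ d, ∑ b, C c a d b * MvPolynomial.eval y _), ← h1]
    simp only [← Finset.sum_sub_distrib]
    refine sum4_congr fun c a d b => ?_
    have hV' : ∀ b, ContDiff ℝ (⊤:ℕ∞) (fun x => pd d (V b) x) := fun b => contDiff_pd (D.cd b) d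
    have e2 : pd d (SS V a b) = SS (fun b x => pd d (V b) x) a b := funext fun x => pd_SS D.cd a b d x
    rw [pd2_TT e h D.cd, e2, pd_SS hV', ← mul_sub]
  · intro i y hy
    have h1 : pd i.castSucc (V (Fin.last m)) y = 0 := by
      have hd := cd_diff (D.cd (Fin.last m)) y
      have hl := hd.hasFDerivAt.comp_hasDerivAt_of_eq (0:ℝ) (f := fun t : ℝ => y + t • (Pi.single i.castSucc (1:ℝ) : Fin (m+1) → ℝ))
        (f' := Pi.single i.castSucc 1) (by
          simpa using ((hasDerivAt_id (0:ℝ)).smul_const (Pi.single i.castSucc (1:ℝ) : Fin (m+1) → ℝ)).const_add y) (by simp)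
      have h2 : (V (Fin.last m) ∘ fun t : ℝ => y + t • (Pi.single i.castSucc (1:ℝ) : Fin (m+1) → ℝ)) = fun _ => 0 := by
        funext t
        apply D.v0
        simp [hy, (Fin.castSucc_lt_last i).ne']
      rw [h2] at hl
      exact hl.unique (hasDerivAt_const _ _)
    have h2 := D.v1 y hy i
    simp only [TT, po, D.con.nn, SS, h1, h2, kd_ne (Fin.castSucc_lt_last i).ne]; simp
  · intro y hy
    obtain ⟨κ, hκ⟩ := D.kp y hy
    refine ⟨-κ, fun i j => ?_⟩
    rw [pd_TT e h D.cd]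
    simp only []
    rw [← pd_SS D.cd, hκ]; ring
  · intro y hy a b
    unfold TT
    refine abs_sub' ?_ ((SS_bound (D.b1 y (KK_nonneg hy _)) a b).trans
      (mul_le_mul_of_nonneg_left (bb (by norm_num) (by norm_num) y hy) (by norm_num)))
    rw [eval_po]
    exact sum_bound hh a b fun i => (hB0' i y hy).trans (g0 i)
  · intro y hy a b c
    rw [pd_TT e h D.cd]
    refine abs_sub' ?_ ((SS_bound (B := C₀ * BB dg δ h 2 y) (fun a b => ?_) a b).trans
      (mul_le_mul_of_nonneg_left (bb (by norm_num) (by norm_num) y hy) (by norm_num)))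
    · rw [eval_pd_po]
      exact sum_bound hh a b fun i => (hB1' i c y hy).trans (g1 i c)
    · exact (le_of_eq (congrArg _ (pd_comm (D.cd b) a c y))).trans (D.b2 y (KK_nonneg hy _) a b c)
  · intro y hy a b c d
    rw [pd2_TT e h D.cd]
    refine abs_sub' ?_ ((SS_bound (B := C₀ * BB dg δ h 3 y) (fun a b => ?_) a b).trans
      (mul_le_mul_of_nonneg_left (bb (by norm_num) (by norm_num) y hy) (by norm_num)))
    · rw [eval_pd2_po]
      exact sum_bound hh a b fun i => (hB2' i d c y hy).trans (g2 i d c)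
    · exact D.b3 y (KK_nonneg hy _) c b d a
end MQ

open MeasureTheory
namespace MQ

variable {m : ℕ} {ι : Type} [Fintype ι]

/-- scaled coefficients -/
def hsc (dg : ι → ℕ) (s r : ℝ) (h : Fin (m+1) → Fin (m+1) → ι → ℝ) : Fin (m+1) → Fin (m+1) → ι → ℝ :=
  fun a b i => s * r ^ dg i * h a b i

/-- scaled field -/
noncomputable def Vsc (s r : ℝ) (V : Fin (m+1) → (Fin (m+1) → ℝ) → ℝ) : Fin (m+1) → (Fin (m+1) → ℝ) → ℝ :=
  fun a y => (s / r) * V a (r • y)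

theorem eval_hsc {e : ι → MvPolynomial (Fin (m+1)) ℝ} {dg : ι → ℕ}
    (he : ∀ i (r : ℝ) y, MvPolynomial.eval (r • y) (e i) = r ^ dg i * MvPolynomial.eval y (e i)) (s r : ℝ) (h : Fin (m+1) → Fin (m+1) → ι → ℝ) (a b : Fin (m+1)) (y : Fin (m+1) → ℝ) :
    MvPolynomial.eval y (po e (hsc dg s r h) a b) = s * MvPolynomial.eval (r • y) (po e h a b) := by
  simp only [eval_po, he, hsc, Finset.mul_sum]
  exact Finset.sum_congr rfl fun i _ => by ring

theorem pd_Vsc {V : Fin (m+1) → (Fin (m+1) → ℝ) → ℝ} (hV : ∀ a, ContDiff ℝ (⊤:ℕ∞) (V a)) (s : ℝ) {r : ℝ} (hr : 0 < r)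
    (a b : Fin (m+1)) : pd a (Vsc s r V b) = fun y => s * pd a (V b) (r • y) := by
  funext y
  unfold Vsc
  rw [pd_scale a _ r (cd_diff (hV b))]
  field_simp

theorem SS_Vsc {V : Fin (m+1) → (Fin (m+1) → ℝ) → ℝ} (hV : ∀ a, ContDiff ℝ (⊤:ℕ∞) (V a)) (s : ℝ) {r : ℝ} (hr : 0 < r)
    (a b : Fin (m+1)) : SS (Vsc s r V) a b = fun y => s * SS V a b (r • y) := by
  funext y
  simp only [SS, pd_Vsc hV s hr, ← Finset.mul_sum]; ring

theorem cd_comp_smul {f : (Fin (m+1) → ℝ) → ℝ} (hf : ContDiff ℝ (⊤:ℕ∞) f) (t r : ℝ) :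
    ContDiff ℝ (⊤:ℕ∞) (fun y : Fin (m+1) → ℝ => t * f (r • y)) :=
  contDiff_const.mul (hf.comp (contDiff_const_smul r))

theorem BB_sc (dg : ι → ℕ) {ε s r : ℝ} (hε : 0 < ε) (hs : 0 ≤ s) (hr : 0 < r) (h : Fin (m+1) → Fin (m+1) → ι → ℝ) (k : ℤ)
    (y : Fin (m+1) → ℝ) : BB dg (ε / r) (hsc dg s r h) k y = s * r ^ (k-1) * BB dg ε h k (r • y) := by
  unfold BB hsc
  simp only [Finset.mul_sum]
  refine Finset.sum_congr rfl fun a _ => Finset.sum_congr rfl fun b _ => Finset.sum_congr rfl fun i _ => ?_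
  rw [nrm_smul hr.le]
  have hq : ε + r * nrm y = r * (ε / r + nrm y) := by field_simp
  rw [hq, mul_zpow, abs_mul, abs_of_nonneg (by positivity : 0 ≤ s * r ^ dg i)]
  have : r ^ (k-1) * r ^ ((dg i:ℤ) + 1 - k) = r ^ dg i := by
    rw [← zpow_add₀ hr.ne', ← zpow_natCast]; congr 1; ring
  rw [← this]; ring

theorem Data.scale {e : ι → MvPolynomial (Fin (m+1)) ℝ} {dg : ι → ℕ}
    (he : ∀ i (r : ℝ) y, MvPolynomial.eval (r • y) (e i) = r ^ dg i * MvPolynomial.eval y (e i))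
    {C₀ ε : ℝ} (hε : 0 < ε) {h : Fin (m+1) → Fin (m+1) → ι → ℝ} {V : Fin (m+1) → (Fin (m+1) → ℝ) → ℝ}
    (D : Data e dg C₀ ε h V) {s r : ℝ} (hs : 0 ≤ s) (hr : 0 < r) :
    Data e dg C₀ (ε / r) (hsc dg s r h) (Vsc s r V) := by
  have hl : ∀ y : Fin (m+1) → ℝ, y (Fin.last m) = 0 → (r • y) (Fin.last m) = 0 := fun y hy => by simp [hy]
  have hl' : ∀ y : Fin (m+1) → ℝ, 0 ≤ y (Fin.last m) → 0 ≤ (r • y) (Fin.last m) := fun y hy => by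
    simp only [Pi.smul_apply, smul_eq_mul]; positivity
  refine ⟨⟨?_, ?_, ?_, ?_⟩, fun a => cd_comp_smul (D.cd a) _ _, ?_, ?_, ?_, ?_, ?_, ?_⟩
  · intro a b; funext i; simp only [hsc]; rw [D.con.sy]
  · intro i; simp only [hsc, ← Finset.mul_sum, D.con.tr, mul_zero]
  · intro a; funext i; simp only [hsc, D.con.nn, Pi.zero_apply, mul_zero]
  · intro i y
    have h1 := D.con.ga i (r • y)
    have h2 : r • (Fin.snoc (α := fun _ => ℝ) y 0 : Fin (m+1) → ℝ) = Fin.snoc (α := fun _ => ℝ) (r • y) 0 := by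
      funext a
      refine Fin.lastCases ?_ (fun b => ?_) a <;> simp
    simp only [eval_hsc he, h2]
    simp only [Pi.smul_apply, smul_eq_mul, mul_assoc, ← Finset.mul_sum] at h1
    have h3 := (mul_eq_zero.1 h1).resolve_left hr.ne'
    simp only [mul_left_comm _ s, ← Finset.mul_sum]
    rw [h3, mul_zero]
  · intro y hy; simp only [Vsc]; rw [D.v0 _ (hl y hy), mul_zero]
  · intro y hy i; rw [pd_Vsc D.cd s hr]; simp only []; rw [D.v1 _ (hl y hy), mul_zero]
  · intro y hy
    obtain ⟨κ, hκ⟩ := D.kp _ (hl y hy)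
    refine ⟨s * r * κ, fun i j => ?_⟩
    rw [SS_Vsc D.cd s hr, pd_scale _ _ _ (cd_diff (cd_SS D.cd _ _)), hκ]; ring
  · intro y hy a b
    rw [BB_sc dg hε hs hr, pd_Vsc D.cd s hr]
    have := D.b1 _ (hl' y hy) a b
    rw [abs_mul, abs_of_nonneg hs]
    simp only [sub_self, zpow_zero, mul_one]
    calc s * _ ≤ s * _ := mul_le_mul_of_nonneg_left this hs
      _ = _ := by ring
  · intro y hy a b c
    rw [BB_sc dg hε hs hr, pd_Vsc D.cd s hr, pd_scale _ _ _ (cd_diff (contDiff_pd (D.cd b) a))]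
    have := D.b2 _ (hl' y hy) a b c
    rw [abs_mul, abs_of_nonneg (by positivity)]
    have e1 : r ^ ((2:ℤ)-1) = r := by norm_num
    rw [e1]
    calc s * r * _ ≤ s * r * _ := mul_le_mul_of_nonneg_left this (by positivity)
      _ = _ := by ring
  · intro y hy a b c d
    have e2 : pd c (pd a (Vsc s r V b)) = fun y => (s * r) * pd c (pd a (V b)) (r • y) := by
      funext y
      rw [pd_Vsc D.cd s hr, pd_scale _ _ _ (cd_diff (contDiff_pd (D.cd b) a))]
    rw [BB_sc dg hε hs hr, e2, pd_scale _ _ _ (cd_diff (contDiff_pd (contDiff_pd (D.cd b) a) c))]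
    have := D.b3 _ (hl' y hy) a b c d
    rw [abs_mul, abs_of_nonneg (by positivity)]
    have e1 : r ^ ((3:ℤ)-1) = r * r := by rw [show (3:ℤ)-1 = (2:ℕ) by norm_num, zpow_natCast]; ring
    rw [e1]
    calc s * r * r * _ ≤ s * r * r * _ := mul_le_mul_of_nonneg_left this (by positivity)
      _ = _ := by ring

theorem wt_sc (ε : ℝ) {r : ℝ} (hr : 0 < r) (y : Fin (m+1) → ℝ) : wt (ε / r) y = wt ε (r • y) / r ^ 2 := by
  unfold wt
  simp only [Pi.smul_apply, smul_eq_mul, mul_pow, ← Finset.mul_sum]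
  field_simp

theorem wg_sc (ε : ℝ) {r : ℝ} (hr : 0 < r) (a : Fin (m+1)) (y : Fin (m+1) → ℝ) : wg (ε / r) a y = wg ε a (r • y) / r := by
  unfold wg
  simp only [Pi.smul_apply, smul_eq_mul]
  field_simp

theorem sqD_sc {e : ι → MvPolynomial (Fin (m+1)) ℝ} {dg : ι → ℕ}
    (he : ∀ i (r : ℝ) y, MvPolynomial.eval (r • y) (e i) = r ^ dg i * MvPolynomial.eval y (e i))
    (ε : ℝ) (h : Fin (m+1) → Fin (m+1) → ι → ℝ) {V : Fin (m+1) → (Fin (m+1) → ℝ) → ℝ}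
    (hV : ∀ a, ContDiff ℝ (⊤:ℕ∞) (V a)) (s : ℝ) {r : ℝ} (hr : 0 < r) (y : Fin (m+1) → ℝ) :
    sqD (ε / r) (TT e (hsc dg s r h) (Vsc s r V)) y = (s / r) ^ 2 * sqD ε (TT e h V) (r • y) := by
  have hT : ∀ a b, TT e (hsc dg s r h) (Vsc s r V) a b = fun y => s * TT e h V a b (r • y) := by
    intro a b; funext y
    simp only [TT, eval_hsc he, SS_Vsc hV s hr]; ring
  have hD : ∀ a b c, DD (ε / r) (TT e (hsc dg s r h) (Vsc s r V)) a b c y = (s / r) * DD ε (TT e h V) a b c (r • y) := by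
    intro a b c
    unfold DD
    have h1 : ∀ b, ∑ e', wg (ε / r) e' y * (s * TT e h V b e' (r • y)) = (s / r) * ∑ e', wg ε e' (r • y) * TT e h V b e' (r • y) := by
      intro b
      rw [Finset.mul_sum]
      refine Finset.sum_congr rfl fun i _ => ?_
      rw [wg_sc ε hr]; field_simp
    simp only [hT]
    rw [pd_scale _ _ _ (cd_diff (cd_TT e h hV a b)), h1, h1, wt_sc ε hr, wg_sc ε hr, wg_sc ε hr]
    field_simp
  simp only [sqD, hD, mul_pow, ← Finset.mul_sum]

end MQ

open MeasureTheory
namespace MQ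
open scoped Pointwise

variable {m : ℕ} {ι : Type} [Fintype ι]

/-- half ball -/
def HB (m : ℕ) (ρ : ℝ) : Set (Fin (m+1) → ℝ) := {x | 0 ≤ x (Fin.last m) ∧ nrm x < ρ}
/-- half annulus -/
def AN (m : ℕ) (ρ : ℝ) : Set (Fin (m+1) → ℝ) := {x | 0 ≤ x (Fin.last m) ∧ ρ / 2 ≤ nrm x ∧ nrm x < ρ}

/-- the integrand -/
noncomputable def FF (ε : ℝ) (T : Fin (m+1) → Fin (m+1) → (Fin (m+1) → ℝ) → ℝ) (x : Fin (m+1) → ℝ) : ℝ :=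
  ε ^ (m-1) * sqD ε T x / wt ε x ^ (m+1)

theorem cont_nrm : Continuous (nrm (m := m)) := by unfold nrm; fun_prop

theorem abs_le_nrm (x : Fin (m+1) → ℝ) (a : Fin (m+1)) : |x a| ≤ nrm x := by
  unfold nrm
  apply Real.abs_le_sqrt
  exact Finset.single_le_sum (f := fun a => x a ^ 2) (fun i _ => sq_nonneg _) (Finset.mem_univ a)

theorem sq_nrm (x : Fin (m+1) → ℝ) : nrm x ^ 2 = ∑ a, x a ^ 2 := Real.sq_sqrt (by positivity)

theorem wt_le {ε : ℝ} (hε : 0 < ε) (x : Fin (m+1) → ℝ) : wt ε x ≤ (ε + nrm x) ^ 2 := by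
  unfold wt
  rw [← sq_nrm]
  have := (le_abs_self _).trans (abs_le_nrm x (Fin.last m))
  nlinarith

theorem wt_pos {ε : ℝ} (hε : 0 < ε) {x : Fin (m+1) → ℝ} (hx : 0 ≤ x (Fin.last m)) : 0 < wt ε x := by
  unfold wt; positivity

theorem meas_HB (ρ : ℝ) : MeasurableSet (HB m ρ) :=
  (measurableSet_le measurable_const (measurable_pi_apply _)).inter
    (measurableSet_lt cont_nrm.measurable measurable_const)

theorem meas_AN (ρ : ℝ) : MeasurableSet (AN m ρ) :=
  (measurableSet_le measurable_const (measurable_pi_apply _)).inter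
    ((measurableSet_le measurable_const cont_nrm.measurable).inter
    (measurableSet_lt cont_nrm.measurable measurable_const))

theorem HB_sub_Icc (ρ : ℝ) : HB m ρ ⊆ Set.Icc (fun _ => -ρ) (fun _ => ρ) := fun x hx =>
  ⟨fun a => (abs_le.1 ((abs_le_nrm x a).trans hx.2.le)).1, fun a => (abs_le.1 ((abs_le_nrm x a).trans hx.2.le)).2⟩

theorem int_HB {f : (Fin (m+1) → ℝ) → ℝ} (hf : ContinuousOn f {x | 0 ≤ x (Fin.last m)}) (ρ : ℝ) :
    IntegrableOn f (HB m ρ) := by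
  have hc : IsCompact (Set.Icc (fun _ => -ρ) (fun _ => ρ) ∩ {x : Fin (m+1) → ℝ | 0 ≤ x (Fin.last m)}) :=
    isCompact_Icc.inter_right (isClosed_le continuous_const (continuous_apply _))
  exact ((hf.mono Set.inter_subset_right).integrableOn_compact hc).mono_set fun x hx => ⟨HB_sub_Icc ρ hx, hx.1⟩

theorem sqD_nonneg (δ : ℝ) (T : Fin (m+1) → Fin (m+1) → (Fin (m+1) → ℝ) → ℝ) (y) : 0 ≤ sqD δ T y := by
  unfold sqD; positivity

theorem FF_nonneg {ε : ℝ} (hε : 0 < ε) (T : Fin (m+1) → Fin (m+1) → (Fin (m+1) → ℝ) → ℝ) {x : Fin (m+1) → ℝ}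
    (hx : 0 ≤ x (Fin.last m)) : 0 ≤ FF ε T x := by
  have := wt_pos hε hx
  have := sqD_nonneg ε T x
  unfold FF; positivity

theorem cont_FF {ε : ℝ} (hε : 0 < ε) {T : Fin (m+1) → Fin (m+1) → (Fin (m+1) → ℝ) → ℝ}
    (hT : ∀ a b, ContDiff ℝ (⊤:ℕ∞) (T a b)) : ContinuousOn (FF ε T) {x | 0 ≤ x (Fin.last m)} := by
  unfold FF
  exact (continuous_const.mul (cont_sqD ε hT)).continuousOn.div ((cd_wt ε).continuous.pow _).continuousOn
    fun x hx => pow_ne_zero _ (wt_pos hε hx).ne'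

theorem AN_sub (ρ : ℝ) : AN m ρ ⊆ HB m ρ := fun _ hx => ⟨hx.1, hx.2.2⟩

theorem smul_KK {r : ℝ} (hr : 0 < r) {x : Fin (m+1) → ℝ} (hx : x ∈ r • KK m) : x ∈ AN m r := by
  obtain ⟨y, hy, rfl⟩ := hx
  have h1 := nrm_KK hy
  refine ⟨?_, ?_, ?_⟩
  · have := KK_nonneg hy (Fin.last m)
    simp only [Pi.smul_apply, smul_eq_mul]; positivity
  · simp only [nrm_smul hr.le]; nlinarith [h1.1]
  · simp only [nrm_smul hr.le]; nlinarith [h1.2]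

theorem annulus (hm : 3 ≤ m) {e : ι → MvPolynomial (Fin (m+1)) ℝ} (he0 : ∀ i, MvPolynomial.coeff 0 (e i) = 0)
    (hli : ∀ c : ι → ℝ, ∑ i, MvPolynomial.C (c i) * e i = 0 → c = 0) {dg : ι → ℕ}
    (he : ∀ i (r : ℝ) y, MvPolynomial.eval (r • y) (e i) = r ^ dg i * MvPolynomial.eval y (e i))
    {C₀ : ℝ} (hC₀ : 0 < C₀) :
    ∃ c > 0, ∀ ε h V, 0 < ε → Data e dg C₀ ε h V → ∀ r, ε ≤ r →
      c * ε ^ (m-1) * r ^ 2 / r ^ (m+1) * ‖hsc dg 1 r h‖ ^ 2 ≤ ∫ x in AN m r, FF ε (TT e h V) x := by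
  obtain ⟨M, hM, HM⟩ := exists_M e dg hC₀
  obtain ⟨c, hc, H⟩ := P1 hm he0 hli hM
  refine ⟨c / 4 ^ (m+1), by positivity, fun ε h V hε D r hr => ?_⟩
  have hr0 : 0 < r := hε.trans_le hr
  have cT := cd_TT e h D.cd
  have hAN0 : 0 ≤ ∫ x in AN m r, FF ε (TT e h V) x :=
    setIntegral_nonneg (meas_AN r) fun x hx => FF_nonneg hε _ hx.1
  rcases eq_or_lt_of_le (norm_nonneg (hsc dg 1 r h)) with hN | hN
  · rw [← hN]; simpa using hAN0
  set N := ‖hsc dg 1 r h‖ with hNd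
  have D' := D.scale he hε (s := 1 / N) (r := r) (by positivity) hr0
  have hn1 : ‖hsc dg (1 / N) r h‖ = 1 := by
    have : hsc dg (1 / N) r h = (1 / N) • hsc dg 1 r h := by
      funext a b i; simp only [hsc, Pi.smul_apply, smul_eq_mul]; ring
    rw [this, norm_smul, Real.norm_of_nonneg (by positivity), ← hNd]; field_simp
  have hd1 : ε / r ≤ 1 := (div_le_one hr0).2 hr
  have h1 := H _ _ _ hn1 D'.con (by positivity) hd1 (HM _ _ _ (by positivity) hd1 hn1.le D')
  simp only [sqD_sc he ε h D.cd (1 / N) hr0] at h1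
  rw [integral_const_mul] at h1
  have h2 := Measure.setIntegral_comp_smul (volume : Measure (Fin (m+1) → ℝ)) (fun x => sqD ε (TT e h V) x) (KK m) hr0.ne'
  rw [h2] at h1
  have hK : IsCompact (r • KK m) := isCompact_Icc.smul r
  have hint : IntegrableOn (FF ε (TT e h V)) (AN m r) := (int_HB (cont_FF hε cT) r).mono_set (AN_sub r)
  have h3 : (∫ x in r • KK m, ε ^ (m-1) / (4 * r ^ 2) ^ (m+1) * sqD ε (TT e h V) x) ≤ ∫ x in r • KK m, FF ε (TT e h V) x := by
    refine setIntegral_mono_on ((continuous_const.mul (cont_sqD ε cT)).continuousOn.integrableOn_compact hK)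
      (hint.mono_set fun x hx => smul_KK hr0 hx) hK.measurableSet fun x hx => ?_
    have hx' := smul_KK hr0 hx
    have w0 := wt_pos hε hx'.1
    have w1 : wt ε x ≤ 4 * r ^ 2 := (wt_le hε x).trans (by
      have := hx'.2.2; have := nrm_nonneg x; nlinarith)
    have s0 := sqD_nonneg ε (TT e h V) x
    unfold FF
    rw [div_mul_eq_mul_div]
    exact div_le_div_of_nonneg_left (by positivity) (by positivity) (pow_le_pow_left₀ w0.le w1 _)
  have h4 : (∫ x in r • KK m, FF ε (TT e h V) x) ≤ ∫ x in AN m r, FF ε (TT e h V) x :=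
    setIntegral_mono_set hint ((ae_restrict_iff' (meas_AN r)).2 (Filter.Eventually.of_forall fun x hx => FF_nonneg hε _ hx.1))
      (Filter.Eventually.of_forall fun x hx => smul_KK hr0 hx)
  rw [integral_const_mul] at h3
  refine le_trans ?_ (h3.trans h4)
  simp only [smul_eq_mul, Module.finrank_fintype_fun_eq_card, Fintype.card_fin] at h1
  rw [abs_of_pos (by positivity)] at h1
  set I := ∫ x in r • KK m, sqD ε (TT e h V) x
  have h5 : c * (N ^ 2 * r ^ 2 * r ^ (m+1)) ≤ I := by
    calc c * (N ^ 2 * r ^ 2 * r ^ (m+1)) ≤ ((1 / N / r) ^ 2 * ((r ^ (m+1))⁻¹ * I)) * (N ^ 2 * r ^ 2 * r ^ (m+1)) :=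
          mul_le_mul_of_nonneg_right h1 (by positivity)
      _ = I := by field_simp
  calc _ = ε ^ (m-1) / (4 * r ^ 2) ^ (m+1) * (c * (N ^ 2 * r ^ 2 * r ^ (m+1))) := by
        rw [mul_pow, ← pow_mul, mul_comm 2 (m+1), pow_mul]; field_simp
    _ ≤ _ := mul_le_mul_of_nonneg_left h5 (by positivity)
end MQ

open MeasureTheory
namespace MQ

variable {m : ℕ} {ι : Type} [Fintype ι]

/-- exponent -/
def pw (m : ℕ) (d : ℕ) : ℤ := 2 * (d : ℤ) + 2 - 2 * ((m+1 : ℕ) : ℤ)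

/-- left side -/
noncomputable def LL (dg : ι → ℕ) (ε : ℝ) (h : Fin (m+1) → Fin (m+1) → ι → ℝ) (A : Set (Fin (m+1) → ℝ)) : ℝ :=
  ∑ a, ∑ b, ∑ i, h a b i ^ 2 * ∫ x in A, (ε + nrm x) ^ pw m (dg i)

theorem cont_pw {ε : ℝ} (hε : 0 < ε) (p : ℤ) : Continuous (fun x : Fin (m+1) → ℝ => (ε + nrm x) ^ p) :=
  (continuous_const.add cont_nrm).zpow₀ p fun x => Or.inl (add_pos_of_pos_of_nonneg hε (nrm_nonneg x)).ne'

theorem vol_HB {ρ : ℝ} (hρ : 0 < ρ) {A : Set (Fin (m+1) → ℝ)} (hA : A ⊆ HB m ρ) :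
    volume A < ⊤ ∧ volume.real A ≤ (2 * ρ) ^ (m+1) := by
  have h1 : volume (Set.Icc (fun _ : Fin (m+1) => -ρ) (fun _ => ρ)) < ⊤ := isCompact_Icc.measure_lt_top
  have hs := hA.trans (HB_sub_Icc ρ)
  refine ⟨(measure_mono hs).trans_lt h1, (measureReal_mono hs h1.ne).trans ?_⟩
  rw [Measure.real, Real.volume_Icc_pi_toReal (fun _ => by linarith)]
  simp; ring_nf; rfl

theorem block_int {ε ρ : ℝ} (hε : 0 < ε) (hρ : 0 < ρ) {A : Set (Fin (m+1) → ℝ)} (hA : A ⊆ HB m ρ)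
    (hq : ∀ x ∈ A, ρ / 4 ≤ ε + nrm x) {d : ℕ} (hd : d ≤ m) :
    ∫ x in A, (ε + nrm x) ^ pw m d ≤ (4 ^ (2 * (m+1)) * 2 ^ (m+1)) * (ρ ^ 2 / ρ ^ (m+1)) * (ρ ^ d) ^ 2 := by
  obtain ⟨h1, h2⟩ := vol_HB hρ hA
  obtain ⟨k, hk⟩ : ∃ k : ℕ, pw m d = -(k:ℤ) ∧ k + 2 * d + 2 = 2 * (m+1) :=
    ⟨2 * (m+1) - (2 * d + 2), by unfold pw; push_cast; omega, by omega⟩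
  have h3 := norm_setIntegral_le_of_norm_le_const (μ := volume) (s := A) (f := fun x => (ε + nrm x) ^ pw m d)
    (C := ((ρ/4) ^ k)⁻¹) h1 (fun x hx => by
      have := nrm_nonneg x
      rw [Real.norm_of_nonneg (by positivity), hk.1, zpow_neg, zpow_natCast]
      exact inv_anti₀ (by positivity) (pow_le_pow_left₀ (by positivity) (hq x hx) k))
  refine (le_abs_self _).trans (h3.trans ((mul_le_mul_of_nonneg_left h2 (by positivity)).trans ?_))
  have e1 : ((ρ/4) ^ k)⁻¹ * (2 * ρ) ^ (m+1) = (4 ^ k * 2 ^ (m+1)) * (ρ ^ 2 / ρ ^ (m+1)) * (ρ ^ d) ^ 2 := by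
    have : ρ ^ (m+1) * ρ ^ (m+1) = ρ ^ k * (ρ^d)^2 * ρ^2 := by
      rw [← pow_add, ← pow_mul, ← pow_add, ← pow_add]; congr 1; omega
    rw [div_pow, mul_pow, inv_div]
    field_simp
    rw [sq (ρ ^ (m+1)), this]; ring
  rw [e1]
  have : (4:ℝ) ^ k ≤ 4 ^ (2 * (m+1)) := pow_le_pow_right₀ (by norm_num) (by omega)
  gcongr

theorem scales (hm : 3 ≤ m) {e : ι → MvPolynomial (Fin (m+1)) ℝ} (he0 : ∀ i, MvPolynomial.coeff 0 (e i) = 0)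
    (hli : ∀ c : ι → ℝ, ∑ i, MvPolynomial.C (c i) * e i = 0 → c = 0) {dg : ι → ℕ} (hdg : ∀ i, dg i ≤ m)
    (he : ∀ i (r : ℝ) y, MvPolynomial.eval (r • y) (e i) = r ^ dg i * MvPolynomial.eval y (e i))
    {C₀ : ℝ} (hC₀ : 0 < C₀) :
    ∃ K > 0, ∀ ε h V, 0 < ε → Data e dg C₀ ε h V → ∀ ρ, 2 * ε ≤ ρ →
      ε ^ (m-1) * LL dg ε h (HB m ρ) ≤ K * ∫ x in HB m ρ, FF ε (TT e h V) x := by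
  obtain ⟨c, hc, H⟩ := annulus hm he0 hli he hC₀
  set K1 : ℝ := 4 ^ (2 * (m+1)) * 2 ^ (m+1) with hK1
  set N : ℝ := (∑ _a : Fin (m+1), ∑ _b : Fin (m+1), ∑ _i : ι, (1:ℝ)) + 1 with hN
  have hK1p : 0 < K1 := by positivity
  have hNp : 0 < N := by positivity
  refine ⟨K1 * N / c, by positivity, fun ε h V hε D => ?_⟩
  have cT := cd_TT e h D.cd
  have block : ∀ ρ, ε ≤ ρ → ∀ A ⊆ HB m ρ, (∀ x ∈ A, ρ / 4 ≤ ε + nrm x) →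
      ε ^ (m-1) * LL dg ε h A ≤ K1 * N / c * ∫ x in AN m ρ, FF ε (TT e h V) x := by
    intro ρ hρ A hA hq
    have hρ0 : 0 < ρ := hε.trans_le hρ
    have h1 : LL dg ε h A ≤ K1 * (ρ ^ 2 / ρ ^ (m+1)) * (N * ‖hsc dg 1 ρ h‖ ^ 2) := by
      have h2 : LL dg ε h A ≤ ∑ _a : Fin (m+1), ∑ _b : Fin (m+1), ∑ _i : ι, (K1 * (ρ ^ 2 / ρ ^ (m+1)) * (‖hsc dg 1 ρ h‖ ^ 2)) * 1 := by
        unfold LL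
        refine Finset.sum_le_sum fun a _ => Finset.sum_le_sum fun b _ => Finset.sum_le_sum fun i _ => ?_
        have h3 := mul_le_mul_of_nonneg_left (block_int hε hρ0 hA hq (hdg i)) (sq_nonneg (h a b i))
        refine h3.trans ?_
        have h4 := pow_le_pow_left₀ (abs_nonneg _) (entry_le (hsc dg 1 ρ h) a b i) 2
        rw [sq_abs] at h4
        simp only [hsc, one_mul] at h4
        calc _ = K1 * (ρ ^ 2 / ρ ^ (m+1)) * (ρ ^ dg i * h a b i) ^ 2 := by rw [hK1]; ring
          _ ≤ K1 * (ρ ^ 2 / ρ ^ (m+1)) * ‖hsc dg 1 ρ h‖ ^ 2 := mul_le_mul_of_nonneg_left h4 (by positivity)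
          _ = _ := by ring
      refine h2.trans ?_
      simp only [← Finset.mul_sum]
      rw [hN]
      have : 0 ≤ K1 * (ρ ^ 2 / ρ ^ (m+1)) * (‖hsc dg 1 ρ h‖ ^ 2) := by positivity
      nlinarith
    have h2 := H ε h V hε D ρ hρ
    calc ε ^ (m-1) * LL dg ε h A ≤ ε ^ (m-1) * (K1 * (ρ ^ 2 / ρ ^ (m+1)) * (N * ‖hsc dg 1 ρ h‖ ^ 2)) :=
          mul_le_mul_of_nonneg_left h1 (by positivity)
      _ = K1 * N / c * (c * ε ^ (m-1) * ρ ^ 2 / ρ ^ (m+1) * ‖hsc dg 1 ρ h‖ ^ 2) := by field_simp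
      _ ≤ _ := mul_le_mul_of_nonneg_left h2 (by positivity)
  have main : ∀ k : ℕ, ∀ ρ, 2 * ε ≤ ρ → ρ ≤ 2 ^ k * (4 * ε) →
      ε ^ (m-1) * LL dg ε h (HB m ρ) ≤ K1 * N / c * ∫ x in HB m ρ, FF ε (TT e h V) x := by
    intro k
    have base : ∀ ρ, 2 * ε ≤ ρ → ρ ≤ 4 * ε → 
        ε ^ (m-1) * LL dg ε h (HB m ρ) ≤ K1 * N / c * ∫ x in HB m ρ, FF ε (TT e h V) x := by
      intro ρ h1 h2
      refine (block ρ (by linarith) _ subset_rfl fun x _ => by have := nrm_nonneg x; linarith).trans ?_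
      refine mul_le_mul_of_nonneg_left ?_ (by positivity)
      exact setIntegral_mono_set (int_HB (cont_FF hε cT) ρ)
        ((ae_restrict_iff' (meas_HB ρ)).2 (Filter.Eventually.of_forall fun x hx => FF_nonneg hε _ hx.1))
        (Filter.Eventually.of_forall (AN_sub ρ))
    induction k with
    | zero => intro ρ h1 h2; exact base ρ h1 (by simpa using h2)
    | succ k ih =>
      intro ρ h1 h2
      rcases le_total ρ (4 * ε) with h3 | h3
      · exact base ρ h1 h3
      have hu : HB m ρ = HB m (ρ/2) ∪ AN m ρ := by
        ext x
        constructor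
        · intro hx
          rcases lt_or_ge (nrm x) (ρ/2) with h | h
          · exact Or.inl ⟨hx.1, h⟩
          · exact Or.inr ⟨hx.1, h, hx.2⟩
        · rintro (hx | hx)
          · exact ⟨hx.1, hx.2.trans (by linarith)⟩
          · exact AN_sub ρ hx
      have hdj : Disjoint (HB m (ρ/2)) (AN m ρ) := by
        rw [Set.disjoint_left]
        intro x hx hx'
        exact absurd hx.2 (not_lt.2 hx'.2.1)
      have split : ∀ f : (Fin (m+1) → ℝ) → ℝ, ContinuousOn f {x | 0 ≤ x (Fin.last m)} →
          ∫ x in HB m ρ, f x = (∫ x in HB m (ρ/2), f x) + ∫ x in AN m ρ, f x := fun f hf => by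
        rw [hu, setIntegral_union hdj (meas_AN ρ) (int_HB hf _) ((int_HB hf ρ).mono_set (AN_sub ρ))]
      have hL : LL dg ε h (HB m ρ) = LL dg ε h (HB m (ρ/2)) + LL dg ε h (AN m ρ) := by
        unfold LL
        simp only [split _ (cont_pw hε _).continuousOn, mul_add, Finset.sum_add_distrib]
      rw [hL, split _ (cont_FF hε cT), mul_add, mul_add]
      refine add_le_add (ih _ (by linarith) (by rw [pow_succ] at h2; linarith)) ?_
      exact block ρ (by linarith) _ (AN_sub ρ) fun x hx => by have := hx.2.1; linarith
  intro ρ hρ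
  obtain ⟨k, hk⟩ := pow_unbounded_of_one_lt (ρ / (4 * ε)) (one_lt_two)
  exact main k ρ hρ ((div_lt_iff₀ (by positivity)).1 hk).le
end MQ

open MeasureTheory
namespace MQ

variable {m : ℕ}

/-- degree -/
def dgr (μ : Fin (m+1) →₀ ℕ) : ℕ := μ.sum fun _ e => e

/-- monomials of degree between 1 and d -/
noncomputable def MS (m d : ℕ) : Finset (Fin (m+1) →₀ ℕ) :=
  (Finset.Icc 1 d).biUnion fun k => Finset.finsuppAntidiag Finset.univ k

theorem mem_MS {d : ℕ} {μ : Fin (m+1) →₀ ℕ} : μ ∈ MS m d ↔ 1 ≤ dgr μ ∧ dgr μ ≤ d := by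
  have : dgr μ = ∑ i, μ i := Finsupp.sum_fintype _ _ fun _ => rfl
  simp only [MS, Finset.mem_biUnion, Finset.mem_Icc, Finset.mem_finsuppAntidiag, this]
  constructor
  · rintro ⟨k, hk, h1, _⟩; rw [h1]; exact hk
  · intro h; exact ⟨_, h, rfl, Finset.subset_univ _⟩

/-- basis -/
noncomputable def eM (m d : ℕ) (μ : {μ // μ ∈ MS m d}) : MvPolynomial (Fin (m+1)) ℝ := MvPolynomial.monomial μ.1 1

theorem eM_zero (d : ℕ) (μ : {μ // μ ∈ MS m d}) : MvPolynomial.coeff 0 (eM m d μ) = 0 := by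
  unfold eM
  rw [MvPolynomial.coeff_monomial, if_neg]
  intro h
  have := (mem_MS.1 μ.2).1
  rw [h] at this; simp [dgr] at this

theorem eM_li (d : ℕ) (c : {μ // μ ∈ MS m d} → ℝ) (h : ∑ i, MvPolynomial.C (c i) * eM m d i = 0) : c = 0 := by
  funext j
  have := congrArg (MvPolynomial.coeff j.1) h
  simp only [eM, MvPolynomial.coeff_sum, MvPolynomial.coeff_C_mul, MvPolynomial.coeff_monomial, MvPolynomial.coeff_zero] at this
  rw [Finset.sum_eq_single j] at this
  · simpa using this
  · intro b _ hb
    rw [if_neg (fun h => hb (Subtype.ext h)), mul_zero]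
  · simp

theorem eM_hom (d : ℕ) (μ : {μ // μ ∈ MS m d}) (r : ℝ) (y : Fin (m+1) → ℝ) :
    MvPolynomial.eval (r • y) (eM m d μ) = r ^ dgr μ.1 * MvPolynomial.eval y (eM m d μ) := by
  simp only [eM, MvPolynomial.eval_monomial, one_mul, Finsupp.prod, Pi.smul_apply, smul_eq_mul, mul_pow,
    Finset.prod_mul_distrib, Finset.prod_pow_eq_pow_sum, dgr, Finsupp.sum]

theorem supp_sum {d : ℕ} {p : MvPolynomial (Fin (m+1)) ℝ} (hp : ∀ μ ∈ p.support, 1 ≤ dgr μ ∧ dgr μ ≤ d)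
    {R : Type*} [AddCommMonoid R] (F : ℝ → (Fin (m+1) →₀ ℕ) → R) (hF : ∀ μ, F 0 μ = 0) :
    ∑ μ ∈ p.support, F (p.coeff μ) μ = ∑ i : {μ // μ ∈ MS m d}, F (p.coeff i.1) i.1 := by
  rw [Finset.sum_coe_sort (MS m d) (fun μ => F (p.coeff μ) μ)]
  refine Finset.sum_subset (fun μ hμ => mem_MS.2 (hp μ hμ)) fun μ _ hμ => ?_
  rw [MvPolynomial.notMem_support_iff.1 hμ, hF]

theorem po_eM {d : ℕ} {H : Fin (m+1) → Fin (m+1) → MvPolynomial (Fin (m+1)) ℝ}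
    (hp : ∀ a b, ∀ μ ∈ (H a b).support, 1 ≤ dgr μ ∧ dgr μ ≤ d) (a b : Fin (m+1)) :
    po (eM m d) (fun a b i => (H a b).coeff i.1) a b = H a b := by
  unfold po eM
  rw [← supp_sum (hp a b) (fun r μ => MvPolynomial.C r * MvPolynomial.monomial μ 1) (by simp)]
  simp only [MvPolynomial.C_mul_monomial, mul_one]
  exact (MvPolynomial.as_sum (H a b)).symm

theorem pd_U {ε : ℝ} (hε : 0 < ε) (q : ℝ) (a : Fin (m+1)) {x : Fin (m+1) → ℝ} (hx : 0 ≤ x (Fin.last m)) :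
    pd a (fun y => (ε / wt ε y) ^ q) x = -q * (ε / wt ε x) ^ q * wg ε a x / wt ε x := by
  have hw := wt_pos hε hx
  have h1 : HasFDerivAt (wt ε) (fderiv ℝ (wt ε) x) x := (cd_diff (cd_wt ε) x).hasFDerivAt
  have h2 : HasDerivAt (fun t : ℝ => ε / t) (-ε / wt ε x ^ 2) (wt ε x) := by
    have := (hasDerivAt_inv hw.ne').const_mul ε
    have e1 : (fun t : ℝ => ε / t) = fun t => ε * t⁻¹ := by funext t; rw [div_eq_mul_inv]
    have e2 : -ε / wt ε x ^ 2 = ε * -(wt ε x ^ 2)⁻¹ := by rw [div_eq_mul_inv]; ring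
    rw [e1, e2]; exact this
  have h3 := h2.rpow_const (p := q) (Or.inl (by positivity))
  have h4 := h3.comp_hasFDerivAt x h1
  have h5 : HasFDerivAt (fun y => (ε / wt ε y) ^ q)
    ((-ε / wt ε x ^ 2 * q * (ε / wt ε x) ^ (q - 1)) • fderiv ℝ (wt ε) x) x := h4
  unfold pd
  rw [h5.fderiv]
  have h6 := pd_wt ε a x
  unfold pd at h6
  simp only [ContinuousLinearMap.smul_apply, h6, smul_eq_mul]
  rw [Real.rpow_sub_one (by positivity)]
  field_simp

theorem nested {n : ℕ} {V : (Fin n → ℝ) → Fin n → ℝ} (hV : ContDiff ℝ (⊤:ℕ∞) V) (b : Fin n) (k : ℕ)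
    (dirs : Fin (k+1) → Fin n) (x : Fin n → ℝ) :
    iteratedFDeriv ℝ (k+1) V x (fun l => Pi.single (dirs l) 1) b
      = pd (dirs 0) (fun x => iteratedFDeriv ℝ k V x (fun l => Pi.single (dirs l.succ) 1) b) x := by
  rw [iteratedFDeriv_succ_apply_left]
  have hd : DifferentiableAt ℝ (iteratedFDeriv ℝ k V) x :=
    (hV.differentiable_iteratedFDeriv (m := k) (by exact_mod_cast WithTop.coe_lt_top _)) x
  have h1 := ((ContinuousLinearMap.proj (R := ℝ) (φ := fun _ : Fin n => ℝ) b).comp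
    (ContinuousMultilinearMap.apply ℝ (fun _ : Fin k => Fin n → ℝ) (Fin n → ℝ)
      (fun l => Pi.single (dirs l.succ) 1))).hasFDerivAt.comp x hd.hasFDerivAt
  unfold pd
  have h2 : (fun x => iteratedFDeriv ℝ k V x (fun l => Pi.single (dirs l.succ) 1) b)
    = ((ContinuousLinearMap.proj (R := ℝ) (φ := fun _ : Fin n => ℝ) b).comp
    (ContinuousMultilinearMap.apply ℝ (fun _ : Fin k => Fin n → ℝ) (Fin n → ℝ)
      (fun l => Pi.single (dirs l.succ) 1))) ∘ iteratedFDeriv ℝ k V := rfl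
  rw [h2, h1.fderiv]
  rfl

theorem nested0 {n : ℕ} {V : (Fin n → ℝ) → Fin n → ℝ} (b : Fin n) (x : Fin n → ℝ) (v : Fin 0 → (Fin n → ℝ)) :
    iteratedFDeriv ℝ 0 V x v b = V x b := by simp

theorem abs_le_of_norm {n : ℕ} {v : Fin n → ℝ} {B : ℝ} (h : ‖v‖ ≤ B) (b : Fin n) : |v b| ≤ B :=
  (norm_le_pi_norm v b).trans h

theorem Q_sq (hm : 3 ≤ m) {ε : ℝ} (hε : 0 < ε) {U : (Fin (m+1) → ℝ) → ℝ}
    (hU : U = fun y => (ε / wt ε y) ^ ((((m:ℝ)+1) - 2) / 2))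
    (T : Fin (m+1) → Fin (m+1) → (Fin (m+1) → ℝ) → ℝ) {x : Fin (m+1) → ℝ} (hx : 0 ≤ x (Fin.last m)) 
    (Q : Fin (m+1) → Fin (m+1) → Fin (m+1) → ℝ)
    (hQ : ∀ a b c, Q a b c = U x * pd c (T a b) x - 2 / (((m:ℝ)+1) - 2) * pd a U x * T b c x
       - 2 / (((m:ℝ)+1) - 2) * pd b U x * T a c x
       + 2 / (((m:ℝ)+1) - 2) * (∑ d, pd d U x * T a d x) * kd b c
       + 2 / (((m:ℝ)+1) - 2) * (∑ d, pd d U x * T b d x) * kd a c) :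
    ∑ a, ∑ b, ∑ c, Q a b c ^ 2 = FF ε T x := by
  have hw := wt_pos hε hx
  have hm' : (3:ℝ) ≤ m := by exact_mod_cast hm
  have hm2 : ((m:ℝ)+1) - 2 ≠ 0 := by linarith
  set q : ℝ := (((m:ℝ)+1) - 2) / 2 with hq
  have hp : ∀ a, pd a U x = -q * U x * wg ε a x / wt ε x := fun a => by
    rw [hU]; exact pd_U hε q a hx
  have h2q : 2 / (((m:ℝ)+1) - 2) * q = 1 := by rw [hq]; field_simp
  have hs : ∀ a, 2 / (((m:ℝ)+1) - 2) * (∑ d, pd d U x * T a d x) = -(U x / wt ε x) * ∑ d, wg ε d x * T a d x := by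
    intro a
    rw [Finset.mul_sum, Finset.mul_sum]
    refine Finset.sum_congr rfl fun d _ => ?_
    rw [hp]
    calc _ = -(2 / (((m:ℝ)+1) - 2) * q) * (U x / wt ε x) * (wg ε d x * T a d x) := by ring
      _ = _ := by rw [h2q]; ring
  have hp' : ∀ a, 2 / (((m:ℝ)+1) - 2) * pd a U x = -(U x / wt ε x) * wg ε a x := by
    intro a
    rw [hp]
    calc _ = -(2 / (((m:ℝ)+1) - 2) * q) * (U x / wt ε x) * wg ε a x := by ring
      _ = _ := by rw [h2q]; ring
  have hQ' : ∀ a b c, Q a b c = (U x / wt ε x) * DD ε T a b c x := by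
    intro a b c
    rw [hQ, hs, hs, hp', hp']
    unfold DD
    field_simp
    ring
  simp only [hQ', mul_pow, ← Finset.mul_sum]
  have hU2 : U x ^ 2 = ε ^ (m-1) / wt ε x ^ (m-1) := by
    rw [hU]
    simp only []
    rw [← Real.rpow_natCast, ← Real.rpow_mul (by positivity), ← div_pow, ← Real.rpow_natCast]
    congr 1
    rw [hq, Nat.cast_sub (by omega)]; push_cast; ring
  rw [div_pow, hU2]
  unfold FF sqD
  have : wt ε x ^ (m+1) = wt ε x ^ (m-1) * wt ε x ^ 2 := by rw [← pow_add]; congr 1; omega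
  rw [this]; field_simp
end MQ

open MeasureTheory
namespace MQ

variable {m : ℕ}

theorem tang_sum {d : ℕ} {H : Fin (m+1) → Fin (m+1) → MvPolynomial (Fin (m+1)) ℝ}
    (hp : ∀ a b, ∀ μ ∈ (H a b).support, 1 ≤ dgr μ ∧ dgr μ ≤ d) (hs : ∀ a b, H a b = H b a)
    (hn : ∀ a, H a (Fin.last m) = 0)
    (F : ℝ → (Fin (m+1) →₀ ℕ) → ℝ) (hF : ∀ μ, F 0 μ = 0) :
    (∑ i : Fin (m+1), ∑ j : Fin (m+1), if (i : ℕ) < m ∧ (j : ℕ) < m then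
      ∑ μ ∈ (H i j).support, F ((H i j).coeff μ) μ else 0)
      = ∑ a, ∑ b, ∑ i : {μ // μ ∈ MS m d}, F ((H a b).coeff i.1) i.1 := by
  refine Finset.sum_congr rfl fun a _ => Finset.sum_congr rfl fun b _ => ?_
  rw [supp_sum (hp a b) F hF]
  split_ifs with h
  · rfl
  · have : H a b = 0 := by
      by_cases ha : (a:ℕ) < m
      · have hb : b = Fin.last m := by
          apply Fin.ext; simp only [Fin.val_last]; have := b.2; by_contra hh; exact h ⟨ha, by omega⟩
        rw [hb, hn]
      · have hb : a = Fin.last m := by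
          apply Fin.ext; simp only [Fin.val_last]; have := a.2; omega
        rw [hb, hs, hn]
    simp [this, hF]

theorem mkData {d : ℕ} {C₀ ε : ℝ} {H : Fin (m+1) → Fin (m+1) → MvPolynomial (Fin (m+1)) ℝ}
    (hm : 3 ≤ m)
    (hp : ∀ a b, ∀ μ ∈ (H a b).support, 1 ≤ dgr μ ∧ dgr μ ≤ d) (hs : ∀ a b, H a b = H b a)
    (ht : ∑ a, H a a = 0)
    (hn : ∀ a, H a (Fin.last m) = 0)
    (hg : ∀ i : Fin (m+1), (i:ℕ) < m → ∀ x : Fin (m+1) → ℝ, x (Fin.last m) = 0 →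
      (∑ j : Fin (m+1), if (j:ℕ) < m then x j * MvPolynomial.eval x (H i j) else 0) = 0)
    {V : (Fin (m+1) → ℝ) → Fin (m+1) → ℝ} (hV : ContDiff ℝ (⊤ : ℕ∞) V)
    (hb : ∀ i : Fin (m+1), (i : ℕ) < m → ∀ x : Fin (m+1) → ℝ, x (Fin.last m) = 0 →
        fderiv ℝ (fun w => V w i) x (Pi.single (Fin.last m) 1) = 0 ∧ V x (Fin.last m) = 0)
    (hB : ∀ k : ℕ, k ≤ 3 → ∀ dirs : Fin k → Fin (m+1), ∀ x : Fin (m+1) → ℝ, 0 ≤ x (Fin.last m) →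
        ‖iteratedFDeriv ℝ k V x (fun l => Pi.single (dirs l) 1)‖
          ≤ C₀ * ∑ i : Fin (m+1), ∑ j : Fin (m+1),
              if (i : ℕ) < m ∧ (j : ℕ) < m then
                ∑ μ ∈ (H i j).support, |MvPolynomial.coeff μ (H i j)|
                  * (ε + nrm x) ^ ((dgr μ : ℤ) + 1 - (k : ℤ))
              else 0)
    (hk : ∀ y : Fin (m+1) → ℝ, y (Fin.last m) = 0 → ∃ κ : ℝ, ∀ i j : Fin m,
      pd (Fin.last m) (SS (fun a x => V x a) i.castSucc j.castSucc) y = κ * kd i j) :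
    Data (eM m d) (fun i => dgr i.1) C₀ ε (fun a b i => (H a b).coeff i.1) (fun a x => V x a) := by
  have hB' : ∀ k : ℕ, k ≤ 3 → ∀ dirs : Fin k → Fin (m+1), ∀ x : Fin (m+1) → ℝ, 0 ≤ x (Fin.last m) → ∀ b,
      |iteratedFDeriv ℝ k V x (fun l => Pi.single (dirs l) 1) b| ≤
        C₀ * BB (fun i : {μ // μ ∈ MS m d} => dgr i.1) ε (fun a b i => (H a b).coeff i.1) k x := by
    intro k hk' dirs x hx b
    have := abs_le_of_norm (hB k hk' dirs x hx) b
    rwa [tang_sum hp hs hn (fun r μ => |r| * (ε + nrm x) ^ ((dgr μ : ℤ) + 1 - (k : ℤ))) (by simp)] at this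
  have n1 : ∀ b a, (fun x => iteratedFDeriv ℝ 1 V x (fun l => Pi.single ((![a] : Fin 1 → Fin (m+1)) l) 1) b)
      = pd a (fun x => V x b) := by
    intro b a
    funext x
    rw [nested hV b 0 ![a] x]
    simp
  have n2 : ∀ b a c, (fun x => iteratedFDeriv ℝ 2 V x (fun l => Pi.single ((![c, a] : Fin 2 → Fin (m+1)) l) 1) b)
      = pd c (pd a (fun x => V x b)) := by
    intro b a c
    funext x
    rw [nested hV b 1 ![c, a] x, ← n1 b a]
    rfl
  have n3 : ∀ b a c d, (fun x => iteratedFDeriv ℝ 3 V x (fun l => Pi.single ((![d, c, a] : Fin 3 → Fin (m+1)) l) 1) b)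
      = pd d (pd c (pd a (fun x => V x b))) := by
    intro b a c d
    funext x
    rw [nested hV b 2 ![d, c, a] x, ← n2 b a c]
    rfl
  refine ⟨⟨?_, ?_, ?_, ?_⟩, ?_, ?_, ?_, hk, ?_, ?_, ?_⟩
  · intro a b; simp only [hs a b]
  · intro i
    rw [← MvPolynomial.coeff_sum, ht, MvPolynomial.coeff_zero]
  · intro a; funext i; simp only [hn a, MvPolynomial.coeff_zero]; rfl
  · intro i y
    have := hg i.castSucc i.2 (Fin.snoc (α := fun _ => ℝ) y 0) (by simp)
    rw [Fin.sum_univ_castSucc] at this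
    simpa [po_eM hp] using this
  · intro a; exact contDiff_pi.1 hV a
  · intro y hy; exact (hb 0 (by simp; omega) y hy).2
  · intro y hy i; exact (hb i.castSucc i.2 y hy).1
  · intro y hy a b
    have := hB' 1 (by norm_num) ![a] y hy b
    have e := congrFun (n1 b a) y
    beta_reduce at e
    rw [e] at this; exact_mod_cast this
  · intro y hy a b c
    have := hB' 2 (by norm_num) ![c, a] y hy b
    have e := congrFun (n2 b a c) y
    beta_reduce at e
    rw [e] at this; exact_mod_cast this
  · intro y hy a b c d
    have := hB' 3 (by norm_num) ![d, c, a] y hy b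
    have e := congrFun (n3 b a c d) y
    beta_reduce at e
    rw [e] at this; exact_mod_cast this

theorem dgr_cast (μ : Fin (m+1) →₀ ℕ) : (μ.sum fun _ e => (e:ℤ)) = (dgr μ : ℤ) := by
  simp [dgr, Finsupp.sum]

theorem U_eq (ε : ℝ) (y : Fin (m+1) → ℝ) :
    (ε + y (Fin.last m)) ^ 2 + (∑ i : Fin (m+1), if (i : ℕ) < m then y i ^ 2 else 0) = wt ε y := by
  unfold wt
  rw [Fin.sum_univ_castSucc, Fin.sum_univ_castSucc]
  simp; ring
end MQ


open MeasureTheory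

/-- with the notation of the paper (bubble `U_ε`, polynomial tensor `H` with
coefficients `h_{ij,α}`, corrector vector field `V`, `S`, `T = H − S`, `Q_{ab,c}`, and the
boundary identity for `∂_nS_{ij}`), there is `λ = λ(n, C₀) > 0` such that for all `ρ ≥ 2ε`:
`λ ε^{n−2} Σ_{i,j,α} h_{ij,α}² ∫_{B⁺_ρ}(ε+|x|)^{2|α|+2−2n} dx
  ≤ (1/4) ∫_{B⁺_ρ} Σ Q_{ab,c}² dx − (n²/(2(n−1)(n−2))) ∫_{|x̄|<ρ} ∂_nU_ε U_ε S_{nn}² dx̄`. -/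
theorem stmt_7 (n : ℕ) (hn : 4 ≤ n) (C₀ : ℝ) (hC₀ : 0 < C₀) :
    ∃ lam : ℝ, 0 < lam ∧
    ∀ ε ρ : ℝ, 0 < ε → 2 * ε ≤ ρ →
    ∀ U : (Fin n → ℝ) → ℝ,
      (∀ y : Fin n → ℝ, U y =
        (ε / ((ε + y ⟨n - 1, by omega⟩) ^ 2
          + ∑ i : Fin n, if (i : ℕ) < n - 1 then y i ^ 2 else 0)) ^ (((n : ℝ) - 2) / 2)) →
    ∀ H : Fin n → Fin n → MvPolynomial (Fin n) ℝ,
      (∀ a b : Fin n, ∀ m ∈ (H a b).support,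
        1 ≤ m.sum (fun _ e => e) ∧ m.sum (fun _ e => e) ≤ (n - 2) / 2) →
      (∀ a b : Fin n, H a b = H b a) →
      ((∑ a : Fin n, H a a) = 0) →
      (∀ a : Fin n, H a ⟨n - 1, by omega⟩ = 0) →
      (∀ i j k : Fin n, (i : ℕ) < n - 1 → (j : ℕ) < n - 1 → (k : ℕ) < n - 1 →
        MvPolynomial.eval (0 : Fin n → ℝ) (MvPolynomial.pderiv k (H i j)) = 0) →
      (∀ i : Fin n, (i : ℕ) < n - 1 → ∀ x : Fin n → ℝ, x ⟨n - 1, by omega⟩ = 0 →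
        (∑ j : Fin n, if (j : ℕ) < n - 1 then x j * MvPolynomial.eval x (H i j) else 0) = 0) →
    ∀ η : ℝ → ℝ, ContDiff ℝ (⊤ : ℕ∞) η → (∀ t : ℝ, 0 ≤ η t ∧ η t ≤ 1) →
      (∀ t : ℝ, 0 ≤ t → t ≤ 4 / 3 → η t = 1) → (∀ t : ℝ, 5 / 3 ≤ t → η t = 0) →
    ∀ V : (Fin n → ℝ) → Fin n → ℝ, ContDiff ℝ (⊤ : ℕ∞) V →
      -- (i) the divergence-form equation on ℝⁿ₊
      (∀ a : Fin n, ∀ x : Fin n → ℝ, 0 ≤ x ⟨n - 1, by omega⟩ →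
        (∑ b : Fin n, fderiv ℝ (fun z : Fin n → ℝ =>
          U z ^ (2 * (n : ℝ) / ((n : ℝ) - 2))
            * (η (Real.sqrt (∑ c : Fin n, z c ^ 2) / ρ) * MvPolynomial.eval z (H a b)
              - fderiv ℝ (fun w : Fin n → ℝ => V w b) z (Pi.single a 1)
              - fderiv ℝ (fun w : Fin n → ℝ => V w a) z (Pi.single b 1)
              + 2 / (n : ℝ)
                  * (∑ c : Fin n, fderiv ℝ (fun w : Fin n → ℝ => V w c) z (Pi.single c 1))
                  * (if a = b then 1 else 0))) x (Pi.single b 1)) = 0) →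
      -- (ii) the boundary conditions on ∂ℝⁿ₊
      (∀ i : Fin n, (i : ℕ) < n - 1 → ∀ x : Fin n → ℝ, x ⟨n - 1, by omega⟩ = 0 →
        fderiv ℝ (fun w : Fin n → ℝ => V w i) x (Pi.single (⟨n - 1, by omega⟩ : Fin n) 1) = 0
          ∧ V x ⟨n - 1, by omega⟩ = 0) →
      -- (iii) the derivative bounds up to order 3 on ℝⁿ₊
      (∀ k : ℕ, k ≤ 3 → ∀ dirs : Fin k → Fin n, ∀ x : Fin n → ℝ, 0 ≤ x ⟨n - 1, by omega⟩ →
        ‖iteratedFDeriv ℝ k V x (fun m => Pi.single (dirs m) 1)‖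
          ≤ C₀ * ∑ i : Fin n, ∑ j : Fin n,
              if (i : ℕ) < n - 1 ∧ (j : ℕ) < n - 1 then
                ∑ m ∈ (H i j).support, |MvPolynomial.coeff m (H i j)|
                  * (ε + Real.sqrt (∑ c : Fin n, x c ^ 2))
                      ^ ((m.sum (fun _ e => e) : ℤ) + 1 - (k : ℤ))
              else 0) →
    ∀ S : Fin n → Fin n → (Fin n → ℝ) → ℝ,
      (∀ (a b : Fin n) (x : Fin n → ℝ), S a b x =
        fderiv ℝ (fun w : Fin n → ℝ => V w b) x (Pi.single a 1)
          + fderiv ℝ (fun w : Fin n → ℝ => V w a) x (Pi.single b 1)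
          - 2 / (n : ℝ)
              * (∑ c : Fin n, fderiv ℝ (fun w : Fin n → ℝ => V w c) x (Pi.single c 1))
              * (if a = b then 1 else 0)) →
    ∀ T : Fin n → Fin n → (Fin n → ℝ) → ℝ,
      (∀ (a b : Fin n) (x : Fin n → ℝ), T a b x = MvPolynomial.eval x (H a b) - S a b x) →
    ∀ Q : Fin n → Fin n → Fin n → (Fin n → ℝ) → ℝ,
      (∀ (a b c : Fin n) (x : Fin n → ℝ), Q a b c x =
        U x * fderiv ℝ (T a b) x (Pi.single c 1)
          - 2 / ((n : ℝ) - 2) * fderiv ℝ U x (Pi.single a 1) * T b c x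
          - 2 / ((n : ℝ) - 2) * fderiv ℝ U x (Pi.single b 1) * T a c x
          + 2 / ((n : ℝ) - 2)
              * (∑ d : Fin n, fderiv ℝ U x (Pi.single d 1) * T a d x)
              * (if b = c then 1 else 0)
          + 2 / ((n : ℝ) - 2)
              * (∑ d : Fin n, fderiv ℝ U x (Pi.single d 1) * T b d x)
              * (if a = c then 1 else 0)) →
      -- the boundary identity for ∂_nS_{ij}
      (∀ i j : Fin n, (i : ℕ) < n - 1 → (j : ℕ) < n - 1 →
        ∀ x : Fin n → ℝ, x ⟨n - 1, by omega⟩ = 0 →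
        fderiv ℝ (S i j) x (Pi.single (⟨n - 1, by omega⟩ : Fin n) 1)
          = 2 * (n : ℝ) / (((n : ℝ) - 1) * ((n : ℝ) - 2)) * (U x)⁻¹
              * fderiv ℝ U x (Pi.single (⟨n - 1, by omega⟩ : Fin n) 1)
              * S ⟨n - 1, by omega⟩ ⟨n - 1, by omega⟩ x
              * (if i = j then 1 else 0)) →
      lam * ε ^ (n - 2) * (∑ i : Fin n, ∑ j : Fin n,
          if (i : ℕ) < n - 1 ∧ (j : ℕ) < n - 1 then
            ∑ m ∈ (H i j).support,
              (MvPolynomial.coeff m (H i j)) ^ 2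
                * ∫ x in {x : Fin n → ℝ | 0 ≤ x ⟨n - 1, by omega⟩
                    ∧ Real.sqrt (∑ a : Fin n, x a ^ 2) < ρ},
                  (ε + Real.sqrt (∑ a : Fin n, x a ^ 2))
                    ^ (2 * (m.sum (fun _ e => e) : ℤ) + 2 - 2 * (n : ℤ))
          else 0)
        ≤ 1 / 4 * (∫ x in {x : Fin n → ℝ | 0 ≤ x ⟨n - 1, by omega⟩
              ∧ Real.sqrt (∑ a : Fin n, x a ^ 2) < ρ},
            ∑ a : Fin n, ∑ b : Fin n, ∑ c : Fin n, (Q a b c x) ^ 2)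
          - (n : ℝ) ^ 2 / (2 * ((n : ℝ) - 1) * ((n : ℝ) - 2))
            * ∫ x' in {x' : Fin (n - 1) → ℝ | Real.sqrt (∑ i : Fin (n - 1), x' i ^ 2) < ρ},
              fderiv ℝ U (fun a : Fin n => if h : (a : ℕ) < n - 1 then x' ⟨(a : ℕ), h⟩ else 0)
                  (Pi.single (⟨n - 1, by omega⟩ : Fin n) 1)
                * U (fun a : Fin n => if h : (a : ℕ) < n - 1 then x' ⟨(a : ℕ), h⟩ else 0)
                * (S ⟨n - 1, by omega⟩ ⟨n - 1, by omega⟩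
                    (fun a : Fin n => if h : (a : ℕ) < n - 1 then x' ⟨(a : ℕ), h⟩ else 0)) ^ 2 := by
  obtain ⟨m, rfl⟩ : ∃ m, n = m + 1 := ⟨n - 1, by omega⟩
  have hm : 3 ≤ m := by omega
  obtain ⟨K, hK, main⟩ := MQ.scales (m := m) hm (MQ.eM_zero ((m+1-2)/2)) (MQ.eM_li ((m+1-2)/2))
    (dg := fun i => MQ.dgr i.1) (fun i => ((MQ.mem_MS.1 i.2).2).trans (by omega))
    (fun i r y => MQ.eM_hom ((m+1-2)/2) i r y) hC₀
  refine ⟨1 / (4 * K), by positivity, ?_⟩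
  intro ε ρ hε hρ U hU H hp hs ht hn _ hg _ _ _ _ _ V hV _ hb hB S hS T hT Q hQ hkp
  simp only [MQ.dgr_cast] at hB ⊢
  have hc : ((m + 1 : ℕ) : ℝ) = (m:ℝ) + 1 := by push_cast; rfl
  have hU' : U = fun y => (ε / MQ.wt ε y) ^ ((((m:ℝ)+1) - 2) / 2) := by
    funext y
    rw [hU y, hc]
    congr 2
    exact MQ.U_eq ε y
  have hS' : S = MQ.SS (fun a x => V x a) := by
    funext a b x
    rw [hS a b x, hc]
    rfl
  have hp' : ∀ a b, ∀ μ ∈ (H a b).support, 1 ≤ MQ.dgr μ ∧ MQ.dgr μ ≤ (m+1-2)/2 := hp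
  have hT' : T = MQ.TT (MQ.eM m ((m+1-2)/2)) (fun a b i => (H a b).coeff i.1) (fun a x => V x a) := by
    funext a b x
    rw [hT a b x, hS']
    unfold MQ.TT
    rw [MQ.po_eM hp']
  have D : MQ.Data (MQ.eM m ((m+1-2)/2)) (fun i => MQ.dgr i.1) C₀ ε (fun a b i => (H a b).coeff i.1)
      (fun a x => V x a) := by
    refine MQ.mkData hm hp' hs ht hn hg hV hb hB ?_
    intro y hy
    refine ⟨2 * ((m + 1 : ℕ) : ℝ) / ((((m + 1 : ℕ) : ℝ) - 1) * (((m + 1 : ℕ) : ℝ) - 2)) * (U y)⁻¹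
              * fderiv ℝ U y (Pi.single (Fin.last m) 1) * S (Fin.last m) (Fin.last m) y, ?_⟩
    intro i j
    have h1 := hkp i.castSucc j.castSucc i.2 j.2 y hy
    rw [← hS']
    refine h1.trans ?_
    congr 1
    unfold MQ.kd
    simp only [Fin.castSucc_inj]
  have main' := main ε _ _ hε D ρ hρ
  have hQi : (∫ x in MQ.HB m ρ, ∑ a : Fin (m+1), ∑ b : Fin (m+1), ∑ c : Fin (m+1), (Q a b c x) ^ 2)
      = ∫ x in MQ.HB m ρ, MQ.FF ε T x := by
    refine setIntegral_congr_fun (MQ.meas_HB ρ) fun x hx => ?_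
    refine MQ.Q_sq hm hε hU' T hx.1 (fun a b c => Q a b c x) fun a b c => ?_
    simp only [hQ a b c x, hc]
    rfl
  have hbd : (∫ x' in {x' : Fin (m + 1 - 1) → ℝ | Real.sqrt (∑ i : Fin (m + 1 - 1), x' i ^ 2) < ρ},
              fderiv ℝ U (fun a : Fin (m + 1) => if h : (a : ℕ) < m + 1 - 1 then x' ⟨(a : ℕ), h⟩ else 0)
                  (Pi.single (Fin.last m) 1)
                * U (fun a : Fin (m + 1) => if h : (a : ℕ) < m + 1 - 1 then x' ⟨(a : ℕ), h⟩ else 0)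
                * (S (Fin.last m) (Fin.last m)
                    (fun a : Fin (m + 1) => if h : (a : ℕ) < m + 1 - 1 then x' ⟨(a : ℕ), h⟩ else 0)) ^ 2) ≤ 0 := by
    refine integral_nonpos fun x' => ?_
    set z : Fin (m+1) → ℝ := fun a => if h : (a : ℕ) < m + 1 - 1 then x' ⟨(a : ℕ), h⟩ else 0 with hz
    have hz0 : z (Fin.last m) = 0 := by simp [hz]
    have hw := MQ.wt_pos hε hz0.ge
    have hm' : (3:ℝ) ≤ m := by exact_mod_cast hm
    have hUz : 0 ≤ U z := by rw [hU']; exact Real.rpow_nonneg (by positivity) _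
    have hd : fderiv ℝ U z (Pi.single (Fin.last m) 1) ≤ 0 := by
      have h1 := MQ.pd_U hε ((((m:ℝ)+1) - 2) / 2) (Fin.last m) hz0.ge
      rw [← hU'] at h1
      have h2 : MQ.wg ε (Fin.last m) z = 2 * ε := by
        unfold MQ.wg MQ.kd; rw [hz0]; simp
      rw [h2] at h1
      have h3 : MQ.pd (Fin.last m) U z ≤ 0 := by
        rw [h1]
        have h4 : 0 ≤ (((m:ℝ)+1) - 2) / 2 := by linarith
        have h5 : 0 ≤ (((m:ℝ)+1) - 2) / 2 * (ε / MQ.wt ε z) ^ ((((m:ℝ)+1) - 2) / 2) * (2 * ε) / MQ.wt ε z := by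
          positivity
        calc _ = -((((m:ℝ)+1) - 2) / 2 * (ε / MQ.wt ε z) ^ ((((m:ℝ)+1) - 2) / 2) * (2 * ε) / MQ.wt ε z) := by ring
          _ ≤ 0 := by linarith
      exact h3
    exact mul_nonpos_of_nonpos_of_nonneg (mul_nonpos_of_nonpos_of_nonneg hd hUz) (sq_nonneg _)
  have hcoef : 0 ≤ ((m + 1 : ℕ) : ℝ) ^ 2 / (2 * (((m + 1 : ℕ) : ℝ) - 1) * (((m + 1 : ℕ) : ℝ) - 2)) := by
    have hm' : (3:ℝ) ≤ m := by exact_mod_cast hm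
    rw [hc]
    have h1 : 0 ≤ (m:ℝ) + 1 - 1 := by linarith
    have h2 : 0 ≤ (m:ℝ) + 1 - 2 := by linarith
    positivity
  have hL := MQ.tang_sum hp' hs hn
    (fun r μ => r ^ 2 * ∫ x in MQ.HB m ρ, (ε + MQ.nrm x) ^ MQ.pw m (MQ.dgr μ)) (by simp)
  have hfin := mul_le_mul_of_nonneg_left main' (show 0 ≤ 1 / (4 * K) by positivity)
  rw [← hT'] at hfin
  have hkk : ∀ I : ℝ, 1 / (4 * K) * (K * I) = 1 / 4 * I := fun I => by field_simp
  rw [hkk, ← mul_assoc] at hfin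
  rw [← hQi] at hfin
  unfold MQ.LL at hfin
  beta_reduce at hL
  rw [← hL] at hfin
  refine hfin.trans ?_
  have := mul_nonpos_of_nonneg_of_nonpos hcoef hbd
  have haux : ∀ A B : ℝ, B ≤ 0 → A ≤ A - B := fun A B h => by linarith
  exact haux _ _ this
end

section
/- Let E be a real normed vector space, α ∈ ℝ, C₀ > 0, x ∈ E, and let u : E∖{x} → ℝ be differentiable with |u(y)| ≤ C₀ ‖y−x‖^α and ‖Du(y)‖ ≤ C₀ ‖y−x‖^{α−1} for every y ≠ x. Then for every θ ∈ (0,1] there exists a constant C₁ depending only on C₀, α and θ such that |u(y) − u(z)| ≤ C₁ ‖y−z‖^θ ( ‖x−y‖^{α−θ} + ‖x−z‖^{α−θ} ) for all y,z ∈ E with y ≠ x and z ≠ x. -/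
universe u

lemma aux_rpow (p a t : ℝ) (ha : 0 < a) (h1 : a / 2 ≤ t) (h2 : t ≤ 2 * a) :
    t ^ p ≤ 2 ^ |p| * a ^ p := by
  have ht : 0 < t := by linarith
  rcases le_total 0 p with hp | hp
  · rw [abs_of_nonneg hp, ← Real.mul_rpow (by norm_num) ha.le]
    exact Real.rpow_le_rpow ht.le h2 hp
  · rw [abs_of_nonpos hp]
    calc t ^ p ≤ (a / 2) ^ p := Real.rpow_le_rpow_of_nonpos (by linarith) h1 hp
      _ = 2 ^ (-p) * a ^ p := by
        rw [Real.div_rpow ha.le (by norm_num), Real.rpow_neg (by norm_num)]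
        ring

lemma aux_near {E : Type u} [NormedAddCommGroup E] [NormedSpace ℝ E]
    (α C₀ : ℝ) (hC₀ : 0 < C₀) (θ : ℝ) (hθ0 : 0 < θ) (hθ1 : θ ≤ 1)
    (x : E) (u : E → ℝ)
    (hd : ∀ y : E, y ≠ x → DifferentiableAt ℝ u y)
    (hg : ∀ y : E, y ≠ x → ‖fderiv ℝ u y‖ ≤ C₀ * ‖y - x‖ ^ (α - 1))
    (y z : E) (hy : y ≠ x) (h : ‖y - z‖ < ‖y - x‖ / 2) :
    |u y - u z| ≤ C₀ * 2 ^ |α - 1| * ‖y - z‖ ^ θ * ‖y - x‖ ^ (α - θ) := by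
  have ha : 0 < ‖y - x‖ := norm_pos_iff.2 (sub_ne_zero.2 hy)
  set a := ‖y - x‖ with hadef
  have key : ∀ w ∈ Metric.ball y (a / 2), a / 2 ≤ ‖w - x‖ ∧ ‖w - x‖ ≤ 2 * a := by
    intro w hw
    rw [mem_ball_iff_norm] at hw
    have e1 : ‖w - x‖ ≤ ‖w - y‖ + ‖y - x‖ := norm_sub_le_norm_sub_add_norm_sub w y x
    have e2 : ‖y - x‖ ≤ ‖y - w‖ + ‖w - x‖ := norm_sub_le_norm_sub_add_norm_sub y w x
    rw [norm_sub_rev y w] at e2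
    constructor <;> linarith
  have hne : ∀ w ∈ Metric.ball y (a / 2), w ≠ x := by
    intro w hw hwx
    have := (key w hw).1
    simp [hwx] at this
    linarith
  have hmv := (convex_ball y (a / 2)).norm_image_sub_le_of_norm_fderiv_le (𝕜 := ℝ) (f := u)
    (C := C₀ * (2 ^ |α - 1| * a ^ (α - 1)))
    (fun w hw => hd w (hne w hw))
    (fun w hw => (hg w (hne w hw)).trans
      (mul_le_mul_of_nonneg_left (aux_rpow _ _ _ ha (key w hw).1 (key w hw).2) hC₀.le))
    (x := z) (y := y) (by rw [mem_ball_iff_norm, norm_sub_rev]; exact h)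
    (Metric.mem_ball_self (by linarith))
  rw [Real.norm_eq_abs] at hmv
  refine hmv.trans ?_
  have hd0 : 0 ≤ ‖y - z‖ := norm_nonneg _
  set d := ‖y - z‖
  have e1 : d = d ^ θ * d ^ (1 - θ) := by
    rw [← Real.rpow_add_of_nonneg hd0 hθ0.le (by linarith)]; simp
  have e2 : d ^ (1 - θ) ≤ a ^ (1 - θ) :=
    Real.rpow_le_rpow hd0 (by linarith) (by linarith)
  have e3 : a ^ (α - θ) = a ^ (α - 1) * a ^ (1 - θ) := by
    rw [← Real.rpow_add ha]; congr 1; ring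
  have hP : 0 ≤ C₀ * (2 ^ |α - 1| * a ^ (α - 1)) * d ^ θ := by positivity
  calc C₀ * (2 ^ |α - 1| * a ^ (α - 1)) * d
      = C₀ * (2 ^ |α - 1| * a ^ (α - 1)) * d ^ θ * d ^ (1 - θ) := by
        rw [mul_assoc _ (d ^ θ), ← e1]
    _ ≤ C₀ * (2 ^ |α - 1| * a ^ (α - 1)) * d ^ θ * a ^ (1 - θ) :=
        mul_le_mul_of_nonneg_left e2 hP
    _ = _ := by rw [e3]; ring

lemma aux_far (α θ a d : ℝ) (hθ0 : 0 < θ) (hθ1 : θ ≤ 1) (ha : 0 < a) (h : a / 2 ≤ d) :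
    a ^ α ≤ 2 * d ^ θ * a ^ (α - θ) := by
  have hd : 0 < d := by linarith
  have e1 : a ^ α = a ^ θ * a ^ (α - θ) := by
    rw [← Real.rpow_add ha]; congr 1; ring
  have e2 : a ^ θ ≤ 2 * d ^ θ :=
    calc a ^ θ ≤ (2 * d) ^ θ := Real.rpow_le_rpow ha.le (by linarith) hθ0.le
      _ = 2 ^ θ * d ^ θ := Real.mul_rpow (by norm_num) hd.le
      _ ≤ 2 * d ^ θ := by
        gcongr
        calc (2 : ℝ) ^ θ ≤ 2 ^ (1 : ℝ) := Real.rpow_le_rpow_of_exponent_le (by norm_num) hθ1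
          _ = 2 := by simp
  rw [e1]
  gcongr

/-- Hölder-type estimate for a function on a normed space with a power-type
bound and gradient bound near a singular point `x`: if `|u(y)| ≤ C₀‖y−x‖^α` and
`‖Du(y)‖ ≤ C₀‖y−x‖^{α−1}` away from `x`, then for every `θ ∈ (0,1]` there is a constant
`C₁ = C₁(C₀, α, θ)` such that
`|u(y) − u(z)| ≤ C₁ ‖y−z‖^θ (‖x−y‖^{α−θ} + ‖x−z‖^{α−θ})` for `y, z ≠ x`. -/
theorem stmt_9 (α C₀ : ℝ) (hC₀ : 0 < C₀) (θ : ℝ) (hθ0 : 0 < θ) (hθ1 : θ ≤ 1) :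
    ∃ C₁ : ℝ, ∀ (E : Type u) [inst1 : NormedAddCommGroup E] [inst2 : NormedSpace ℝ E]
      (x : E) (u : E → ℝ),
      (∀ y : E, y ≠ x → DifferentiableAt ℝ u y) →
      (∀ y : E, y ≠ x → |u y| ≤ C₀ * ‖y - x‖ ^ α) →
      (∀ y : E, y ≠ x → ‖fderiv ℝ u y‖ ≤ C₀ * ‖y - x‖ ^ (α - 1)) →
      ∀ y z : E, y ≠ x → z ≠ x →
        |u y - u z| ≤ C₁ * ‖y - z‖ ^ θ * (‖x - y‖ ^ (α - θ) + ‖x - z‖ ^ (α - θ)) := by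
  refine ⟨C₀ * (2 ^ |α - 1| + 2), ?_⟩
  intro E _ _ x u hd hb hg y z hy hz
  rw [norm_sub_rev x y, norm_sub_rev x z]
  have ha : 0 < ‖y - x‖ := norm_pos_iff.2 (sub_ne_zero.2 hy)
  have hb' : 0 < ‖z - x‖ := norm_pos_iff.2 (sub_ne_zero.2 hz)
  have hK : (0 : ℝ) ≤ 2 ^ |α - 1| := by positivity
  have hA : 0 ≤ C₀ * (‖y - z‖ ^ θ * ‖y - x‖ ^ (α - θ)) := by positivity
  have hB : 0 ≤ C₀ * (‖y - z‖ ^ θ * ‖z - x‖ ^ (α - θ)) := by positivity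
  have hKA := mul_nonneg hK hA
  have hKB := mul_nonneg hK hB
  by_cases h1 : ‖y - z‖ < ‖y - x‖ / 2
  · have := aux_near α C₀ hC₀ θ hθ0 hθ1 x u hd hg y z hy h1
    linarith
  by_cases h2 : ‖y - z‖ < ‖z - x‖ / 2
  · have := aux_near α C₀ hC₀ θ hθ0 hθ1 x u hd hg z y hz (by rw [norm_sub_rev]; exact h2)
    rw [abs_sub_comm, norm_sub_rev z y] at this
    linarith
  have f1 := mul_le_mul_of_nonneg_left
    (aux_far α θ _ _ hθ0 hθ1 ha (not_lt.1 h1)) hC₀.le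
  have f2 := mul_le_mul_of_nonneg_left
    (aux_far α θ _ _ hθ0 hθ1 hb' (not_lt.1 h2)) hC₀.le
  have t := abs_sub (u y) (u z)
  have g1 := hb y hy
  have g2 := hb z hz
  linarith
end
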